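/- arXiv:2112.15229 — 5 statements merged into one kernel-verified Lean document; each statement's English description precedes it below -/
import Mathlib

section
/- Let α₁, α₂ > 0 and β ≥ 0. There exists a constant C(α₁,α₂) > 0 such that for every zero-mean real-valued initial datum f₀ ∈ H¹(𝕋) with ‖f₀‖_{H¹} ≤ C(α₁,α₂), there is a global-in-time solution f of equation (U) with f(0) = f₀ such that t ↦ ‖f(t)‖_{H¹} is non-increasing on [0,∞) (in particular f ∈ C([0,∞); H¹(𝕋))), f ∈ L²([0,∞); H²(𝕋)) (i.e. ∫₀^∞ ‖f(t)‖²_{H²} dt < ∞), and ‖f(t)‖_{H¹} → 0 as t → ∞. -/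
/-!
In Fourier variables (U) is the system `c_n' = ℓ_n c_n + ∑_m (b₁ + β b₂)(n, m) c_m c_{n-m}`,
which is parabolic: `Re ℓ_n ≤ -κ (n² + β |n|)`. Since `𝒩` gains one derivative, `b₁` and `b₂` are
of order one. The commutator with the Hilbert transform in the term carrying `β` only involves
frequencies `n` and `n - m` of different signs, whence `|n| |b₂|² ≤ K² |m|³`. As `κ` and `K`
depend on `α₁` and `α₂` only, so does the smallness condition.

Existence is a contraction argument for Duhamel's formula in the norm
`(∑ n² sup_t |c_n(t)|²)^(1/2)`. The time integral of the semigroup gains the full factor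
`κ (n² + β |n|)`, so the quadratic term is controlled by the estimate `H¹ × H¹ → L²` for
`∑_m (|m| + |n - m|) |c_m| |c_{n-m}|`, on the whole time axis at once.

Decay is an energy argument. Testing with the `H¹` weight and applying Young's inequality mode by
mode, half of the dissipation `2 D` absorbs the linear factor and leaves the quadratic term in
the norm dual to the dissipation. For small `H¹` norm its square `F` satisfies `2 F ≤ D`, so that
the squared `H¹` norm `E` satisfies `2 E(t) + ∫_s^t D ≤ 2 E(s)`. Hence `E` is nonincreasing, and
`∫ D` is finite and controls both the `H²` norm and `∫ E`; being nonincreasing and integrable,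
`E` tends to zero.
-/

/- STATEMENT 0: global existence and decay for small H¹ data for the
unidirectional viscous water-wave model (U), in Fourier-coefficient form
on the torus 𝕋 = ℝ/2πℤ. -/

open Filter

noncomputable section

/-- Fourier symbol of ∂₁. -/
def Dsym (n : ℤ) : ℂ := Complex.I * (n : ℂ)

/-- Fourier symbol of the Hilbert transform H. -/
def Hsym (n : ℤ) : ℂ := -Complex.I * ((n.sign : ℤ) : ℂ)

/-- Fourier symbol of Λ. -/
def Lsym (n : ℤ) : ℂ := ((|(n : ℝ)| : ℝ) : ℂ)

/-- Fourier symbol of Λ⁻¹. -/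
def invLsym (n : ℤ) : ℂ := if n = 0 then 0 else (((|(n : ℝ)|)⁻¹ : ℝ) : ℂ)

/-- Fourier symbol of 𝒩 = (1 - a²∂₁²)⁻¹(1 - a∂₁), namely (1 - i a n)/(1 + a²n²). -/
def Nsym (a : ℝ) (n : ℤ) : ℂ :=
  (1 - Complex.I * (a : ℂ) * (n : ℂ)) / (1 + (a : ℂ) ^ 2 * (n : ℂ) ^ 2)

/-- Convolution of coefficient sequences (Fourier coefficients of a product). -/
def conv (g h : ℤ → ℂ) (n : ℤ) : ℂ := ∑' m : ℤ, g m * h (n - m)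

/-- Fourier coefficients of the commutator [T, g]h = T(gh) - g·T(h) for a
Fourier multiplier T with symbol s. -/
def commC (s : ℤ → ℂ) (g h : ℤ → ℂ) (n : ℤ) : ℂ :=
  ∑' m : ℤ, (s n - s (n - m)) * (g m * h (n - m))

/-- Coefficients of ∂₁f. -/
def Dc (c : ℤ → ℂ) : ℤ → ℂ := fun k => Dsym k * c k

/-- Coefficients of Λ⁻¹f. -/
def iLc (c : ℤ → ℂ) : ℤ → ℂ := fun k => invLsym k * c k

/-- Coefficients of Λ²f. -/
def L2c (c : ℤ → ℂ) : ℤ → ℂ := fun k => ((k : ℂ)) ^ 2 * c k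

/-- Linear part of equation (U):
𝒩∂₁f + (α₁+α₂)𝒩∂₁²f + 𝒩Hf − β𝒩H∂₁²f + α₁α₂𝒩∂₁³f. -/
def linU (α₁ α₂ β : ℝ) (c : ℤ → ℂ) (n : ℤ) : ℂ :=
  Nsym ((α₁ + α₂) / 2) n *
    ((Dsym n + ((α₁ : ℂ) + (α₂ : ℂ)) * (Dsym n) ^ 2 + Hsym n
        - (β : ℂ) * Hsym n * (Dsym n) ^ 2
        + (α₁ : ℂ) * (α₂ : ℂ) * (Dsym n) ^ 3) * c n)

/-- Nonlinear part of equation (U):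
𝒩{2f∂₁f + Λ[H,Λ⁻¹f]f + βΛ[H,Λ⁻¹f]Λ²f − α₂Λ[H,f]∂₁f + α₂∂₁(f∂₁f) + α₁Λ[∂₁²,Λ⁻¹f]f}. -/
def nlU (α₁ α₂ β : ℝ) (c : ℤ → ℂ) (n : ℤ) : ℂ :=
  Nsym ((α₁ + α₂) / 2) n *
    (2 * conv c (Dc c) n
      + Lsym n * commC Hsym (iLc c) c n
      + (β : ℂ) * Lsym n * commC Hsym (iLc c) (L2c c) n
      - (α₂ : ℂ) * Lsym n * commC Hsym c (Dc c) n
      + (α₂ : ℂ) * Dsym n * conv c (Dc c) n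
      + (α₁ : ℂ) * Lsym n * commC (fun k => (Dsym k) ^ 2) (iLc c) c n)

/-- Absolute convergence of all the series defining the nonlinear terms of (U)
at frequency n. -/
def AbsConvU (c : ℤ → ℂ) (n : ℤ) : Prop :=
  Summable (fun m : ℤ => ‖c m * Dc c (n - m)‖)
    ∧ Summable (fun m : ℤ => ‖(Hsym n - Hsym (n - m)) * (iLc c m * c (n - m))‖)
    ∧ Summable (fun m : ℤ => ‖(Hsym n - Hsym (n - m)) * (iLc c m * L2c c (n - m))‖)
    ∧ Summable (fun m : ℤ => ‖(Hsym n - Hsym (n - m)) * (c m * Dc c (n - m))‖)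
    ∧ Summable (fun m : ℤ => ‖((Dsym n) ^ 2 - (Dsym (n - m)) ^ 2) * (iLc c m * c (n - m))‖)

/-- Fourier coefficients of a zero-mean real-valued function. -/
def RealZeroMean (c : ℤ → ℂ) : Prop :=
  c 0 = 0 ∧ ∀ n : ℤ, c (-n) = starRingEnd ℂ (c n)

/-- Square of the H¹(𝕋) norm. -/
def H1sq (c : ℤ → ℂ) : ℝ := ∑' n : ℤ, (1 + (n : ℝ) ^ 2) * ‖c n‖ ^ 2

/-- Square of the H²(𝕋) norm. -/
def H2sq (c : ℤ → ℂ) : ℝ := ∑' n : ℤ, (1 + (n : ℝ) ^ 2) ^ 2 * ‖c n‖ ^ 2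

namespace ViscousWave
open scoped ENNReal NNReal BoundedContinuousFunction

/-! ### Weighted square sums in extended nonnegative reals -/

/-- The weighted square sum `∑ wᵢ pᵢ²`. Applied to the moduli of Fourier coefficients it gives the
squared Sobolev norms, the dissipation of energy and the dual norm of the forcing, depending on the
weight `w`. -/
def weightedSq {ι : Type*} (w p : ι → ℝ≥0∞) : ℝ≥0∞ := ∑' i, w i * p i ^ 2

lemma two_mul_mul_le_add_sq (x y : ℝ≥0∞) : 2 * (x * y) ≤ x ^ 2 + y ^ 2 := by
  rcases eq_or_ne x ∞ with rfl | hx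
  · simp
  rcases eq_or_ne y ∞ with rfl | hy
  · simp
  lift x to ℝ≥0 using hx
  lift y to ℝ≥0 using hy
  rw [← mul_assoc]
  exact_mod_cast two_mul_le_add_sq x y

lemma add_sq_le_two_mul (x y : ℝ≥0∞) : (x + y) ^ 2 ≤ 2 * (x ^ 2 + y ^ 2) :=
  calc (x + y) ^ 2 = x ^ 2 + y ^ 2 + 2 * (x * y) := by ring
    _ ≤ x ^ 2 + y ^ 2 + (x ^ 2 + y ^ 2) := by gcongr; exact two_mul_mul_le_add_sq x y
    _ = 2 * (x ^ 2 + y ^ 2) := by ring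

section WeightedSq
variable {ι : Type*}

lemma weightedSq_add_le (w p q : ι → ℝ≥0∞) :
    weightedSq w (fun i => p i + q i) ≤ 2 * (weightedSq w p + weightedSq w q) :=
  calc ∑' i, w i * (p i + q i) ^ 2 ≤ ∑' i, 2 * (w i * p i ^ 2 + w i * q i ^ 2) := by
        refine ENNReal.tsum_le_tsum fun i => ?_
        calc w i * (p i + q i) ^ 2 ≤ w i * (2 * (p i ^ 2 + q i ^ 2)) := by
              gcongr; exact add_sq_le_two_mul _ _
          _ = 2 * (w i * p i ^ 2 + w i * q i ^ 2) := by ring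
    _ = 2 * (weightedSq w p + weightedSq w q) := by
        rw [ENNReal.tsum_mul_left, ENNReal.tsum_add]; rfl

lemma weightedSq_mul_left (w p : ι → ℝ≥0∞) (k : ℝ≥0∞) :
    weightedSq (fun i => k * w i) p = k * weightedSq w p := by
  simp only [weightedSq, mul_assoc, ENNReal.tsum_mul_left]

lemma weightedSq_const_mul (w p : ι → ℝ≥0∞) (k : ℝ≥0∞) :
    weightedSq w (fun i => k * p i) = k ^ 2 * weightedSq w p := by
  simp only [weightedSq, mul_pow, mul_left_comm (w _), ENNReal.tsum_mul_left]

lemma weightedSq_mono {w w' p p' : ι → ℝ≥0∞} (hw : ∀ i, p i ≠ 0 → w i ≤ w' i)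
    (hp : ∀ i, p i ≤ p' i) : weightedSq w p ≤ weightedSq w' p' := by
  refine ENNReal.tsum_le_tsum fun i => ?_
  rcases eq_or_ne (p i) 0 with h | h
  · simp [h]
  · exact mul_le_mul' (hw i h) (pow_le_pow_left' (hp i) 2)

lemma tsum_mul_tsum (u v : ι → ℝ≥0∞) : (∑' i, u i) * ∑' j, v j = ∑' i, ∑' j, u i * v j := by
  simp only [← ENNReal.tsum_mul_right, ENNReal.tsum_mul_left]

lemma sq_tsum_mul_le_weightedSq (x q : ι → ℝ≥0∞) :
    (∑' i, x i * q i) ^ 2 ≤ weightedSq q x * ∑' i, q i := by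
  refine (ENNReal.mul_le_mul_iff_right two_ne_zero ENNReal.ofNat_ne_top).1 ?_
  calc 2 * (∑' i, x i * q i) ^ 2
      = ∑' i, ∑' j, 2 * (x i * x j) * (q i * q j) := by
        rw [sq, tsum_mul_tsum]
        simp only [← ENNReal.tsum_mul_left]
        exact tsum_congr fun i => tsum_congr fun j => by ring
    _ ≤ ∑' i, ∑' j, (x i ^ 2 + x j ^ 2) * (q i * q j) := by
        gcongr
        exact two_mul_mul_le_add_sq _ _
    _ = ∑' i, ∑' j, (q i * x i ^ 2 * q j + q i * (q j * x j ^ 2)) :=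
        tsum_congr fun i => tsum_congr fun j => by ring
    _ = 2 * (weightedSq q x * ∑' i, q i) := by
        simp only [ENNReal.tsum_add, ← tsum_mul_tsum, weightedSq]
        ring

/-- Young's inequality `ℓ² * ℓ¹ ⊂ ℓ²` with a kernel: a weight `W` on the first factor absorbs the
kernel and the weight `ω` on the output. -/
lemma weightedSq_tsum_mul_le {G : Type*} [AddCommGroup G] {k : G → G → ℝ≥0∞} {ω W : G → ℝ≥0∞}
    (h : ∀ n m, ω n * k n m ^ 2 ≤ W m) (p q : G → ℝ≥0∞) :
    weightedSq ω (fun n => ∑' m, k n m * (p m * q (n - m)))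
      ≤ (∑' n, q n) ^ 2 * weightedSq W p := by
  have hleft (n : G) : ∑' m, q (n - m) = ∑' m, q m := (Equiv.subLeft n).tsum_eq q
  have hright (m : G) : ∑' n, q (n - m) = ∑' n, q n := (Equiv.subRight m).tsum_eq q
  calc ∑' n, ω n * (∑' m, k n m * (p m * q (n - m))) ^ 2
      ≤ ∑' n, ω n * ((∑' m, q (n - m) * (k n m * p m) ^ 2) * ∑' m, q m) := by
        gcongr with n
        simp only [← mul_assoc (k n _)]
        exact (sq_tsum_mul_le_weightedSq _ _).trans_eq (by rw [hleft]; rfl)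
    _ = ∑' n, (∑' m, ω n * k n m ^ 2 * (p m ^ 2 * q (n - m))) * ∑' m, q m := by
        refine tsum_congr fun n => ?_
        rw [← mul_assoc, ← ENNReal.tsum_mul_left (a := ω n)]
        congr 1
        exact tsum_congr fun m => by ring
    _ ≤ ∑' n, (∑' m, W m * (p m ^ 2 * q (n - m))) * ∑' m, q m := by
        gcongr with n m
        exact h n m
    _ = (∑' n, q n) ^ 2 * weightedSq W p := by
        rw [ENNReal.tsum_mul_right, ENNReal.tsum_comm]
        simp only [ENNReal.tsum_mul_left, hright, ← mul_assoc, ENNReal.tsum_mul_right, weightedSq]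
        ring

end WeightedSq

/-! ### Zero-mean sequences -/

/-- The squared homogeneous `H¹` seminorm of a sequence of moduli of Fourier coefficients. -/
abbrev gradSq (p : ℤ → ℝ≥0∞) : ℝ≥0∞ := weightedSq (fun n => ‖n‖ₑ ^ 2) p

lemma tsum_ofReal_one_div_int_sq_le : ∑' n : ℤ, ENNReal.ofReal (1 / (n : ℝ) ^ 2) ≤ 4 := by
  have hsum : HasSum (fun n : ℤ => 1 / (n : ℝ) ^ 2) (Real.pi ^ 2 / 6 + Real.pi ^ 2 / 6) := by
    have h := HasSum.of_nat_of_neg (f := fun n : ℤ => 1 / (n : ℝ) ^ 2)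
      (by simpa using hasSum_zeta_two) (by simpa using hasSum_zeta_two)
    simpa using h
  rw [← ENNReal.ofReal_tsum_of_nonneg (fun n => by positivity) hsum.summable, hsum.tsum_eq]
  refine ENNReal.ofReal_le_of_le_toReal ?_
  rw [ENNReal.toReal_ofNat]
  nlinarith [Real.pi_lt_d2, Real.pi_pos]

lemma sq_tsum_le_gradSq {p : ℤ → ℝ≥0∞} (hp : p 0 = 0) :
    (∑' n, p n) ^ 2 ≤ 4 * gradSq p := by
  set q : ℤ → ℝ≥0∞ := fun n => ENNReal.ofReal (1 / (n : ℝ) ^ 2)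
  have hinv {n : ℤ} (hn : n ≠ 0) : ‖n‖ₑ ^ 2 * q n = 1 := by
    have : (n : ℝ) ≠ 0 := by exact_mod_cast hn
    rw [← ofReal_norm, Int.norm_eq_abs, ← ENNReal.ofReal_pow (abs_nonneg _), sq_abs,
      ← ENNReal.ofReal_mul (by positivity), mul_one_div_cancel (by positivity), ENNReal.ofReal_one]
  have hp_eq (n : ℤ) : p n = ‖n‖ₑ ^ 2 * p n * q n := by
    rcases eq_or_ne n 0 with rfl | hn
    · simp [hp]
    · rw [mul_right_comm, hinv hn, one_mul]
  calc (∑' n, p n) ^ 2 = (∑' n, ‖n‖ₑ ^ 2 * p n * q n) ^ 2 := by rw [← tsum_congr hp_eq]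
    _ ≤ weightedSq q (fun n => ‖n‖ₑ ^ 2 * p n) * ∑' n, q n := sq_tsum_mul_le_weightedSq _ _
    _ = gradSq p * ∑' n, q n := by
        congr 1
        refine tsum_congr fun n => ?_
        calc q n * (‖n‖ₑ ^ 2 * p n) ^ 2 = ‖n‖ₑ ^ 2 * p n * (‖n‖ₑ ^ 2 * p n * q n) := by ring
          _ = ‖n‖ₑ ^ 2 * p n ^ 2 := by rw [← hp_eq]; ring
    _ ≤ 4 * gradSq p := by
        rw [mul_comm]
        gcongr
        exact tsum_ofReal_one_div_int_sq_le

/-- The model bilinear sum `∑ₘ (|m| + |n - m|) pₘ qₙ₋ₘ` for quadratic terms of first order, the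
Fourier side of `(Λp) q + p (Λq)`. -/
def firstOrderConv (p q : ℤ → ℝ≥0∞) (n : ℤ) : ℝ≥0∞ :=
  ∑' m, (‖m‖ₑ + ‖n - m‖ₑ) * (p m * q (n - m))

lemma weightedSq_firstOrderConv_le {p q : ℤ → ℝ≥0∞} (hp : p 0 = 0) (hq : q 0 = 0) :
    weightedSq 1 (firstOrderConv p q)
      ≤ 16 * (gradSq p * gradSq q) := by
  have hleft {p q : ℤ → ℝ≥0∞} (hq : q 0 = 0) :
      weightedSq 1 (fun n => ∑' m, ‖m‖ₑ * (p m * q (n - m)))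
        ≤ 4 * (gradSq p * gradSq q) :=
    calc _ ≤ (∑' n, q n) ^ 2 * gradSq p :=
          weightedSq_tsum_mul_le (fun n m => by simp) p q
      _ ≤ (4 * gradSq q) * gradSq p := by
          gcongr
          exact sq_tsum_le_gradSq hq
      _ = _ := by ring
  have hswap (n : ℤ) : ∑' m, ‖n - m‖ₑ * (p m * q (n - m)) = ∑' m, ‖m‖ₑ * (q m * p (n - m)) := by
    rw [← (Equiv.subLeft n).tsum_eq]
    exact tsum_congr fun m => by simp [mul_comm]
  have hsplit : firstOrderConv p q = fun n =>
      (∑' m, ‖m‖ₑ * (p m * q (n - m))) + ∑' m, ‖m‖ₑ * (q m * p (n - m)) := by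
    funext n
    simp only [← hswap, ← ENNReal.tsum_add, ← add_mul, firstOrderConv]
  calc weightedSq 1 (firstOrderConv p q)
      ≤ 2 * (4 * (gradSq p * gradSq q)
          + 4 * (gradSq q * gradSq p)) := by
        rw [hsplit]
        refine (weightedSq_add_le _ _ _).trans ?_
        gcongr
        exacts [hleft hq, hleft hp]
    _ = _ := by ring

lemma firstOrderConv_ne_top {p q : ℤ → ℝ≥0∞} (hp : p 0 = 0) (hq : q 0 = 0) (hp' : gradSq p ≠ ∞)
    (hq' : gradSq q ≠ ∞) (n : ℤ) : firstOrderConv p q n ≠ ∞ := by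
  have h : weightedSq 1 (firstOrderConv p q) ≠ ∞ :=
    ne_top_of_le_ne_top (by finiteness) (weightedSq_firstOrderConv_le hp hq)
  intro htop
  exact ENNReal.ne_top_of_tsum_ne_top h n (by simp [htop])

/-! ### Linear damped modes -/

/-- The solution of `x' = ℓ x + g` with `x(0) = 0`, in Duhamel form. -/
def response (ℓ : ℂ) (g : ℝ → ℂ) (t : ℝ) : ℂ :=
  ∫ s in (0 : ℝ)..t, Complex.exp (ℓ * (t - s)) * g s

section Response
variable {ℓ : ℂ} {g h : ℝ → ℂ}

lemma response_zero_right : response ℓ g 0 = 0 := intervalIntegral.integral_same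

lemma response_add (hg : Continuous g) (hh : Continuous h) (t : ℝ) :
    response ℓ (fun s => g s + h s) t = response ℓ g t + response ℓ h t := by
  simp only [response, mul_add]
  exact intervalIntegral.integral_add (Continuous.intervalIntegrable (by fun_prop) _ _)
    (Continuous.intervalIntegrable (by fun_prop) _ _)

lemma response_const_mul (r : ℂ) (t : ℝ) :
    response ℓ (fun s => r * g s) t = r * response ℓ g t := by
  simp only [response, mul_left_comm _ r, intervalIntegral.integral_const_mul]

lemma response_conj (t : ℝ) :
    response (starRingEnd ℂ ℓ) (fun s => starRingEnd ℂ (g s)) t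
      = starRingEnd ℂ (response ℓ g t) := by
  rw [response, response, ← intervalIntegral.intervalIntegral_conj]
  simp only [map_mul, map_sub, ← Complex.exp_conj, Complex.conj_ofReal]

lemma hasDerivAt_cexp_mul_ofReal (ℓ : ℂ) (t : ℝ) :
    HasDerivAt (fun s : ℝ => Complex.exp (ℓ * s)) (ℓ * Complex.exp (ℓ * t)) t := by
  have h : HasDerivAt (fun s : ℝ => ℓ * (s : ℂ)) (ℓ * 1) t :=
    (Complex.ofRealCLM.hasDerivAt (x := t)).const_mul ℓ
  simpa [mul_comm] using h.cexp

lemma hasDerivAt_response (hg : Continuous g) (t : ℝ) :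
    HasDerivAt (response ℓ g) (ℓ * response ℓ g t + g t) t := by
  have hfactor : response ℓ g = fun t : ℝ =>
      Complex.exp (ℓ * t) * ∫ s in (0 : ℝ)..t, Complex.exp (-(ℓ * s)) * g s := by
    funext t
    rw [response, ← intervalIntegral.integral_const_mul]
    simp only [← mul_assoc, ← Complex.exp_add, ← mul_neg, ← mul_add, sub_eq_add_neg]
  have hinteg : HasDerivAt (fun u : ℝ => ∫ s in (0 : ℝ)..u, Complex.exp (-(ℓ * s)) * g s)
      (Complex.exp (-(ℓ * t)) * g t) t :=
    (Continuous.integral_hasStrictDerivAt (by fun_prop) 0 t).hasDerivAt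
  rw [hfactor]
  refine ((hasDerivAt_cexp_mul_ofReal ℓ t).mul hinteg).congr_deriv ?_
  rw [← mul_assoc (Complex.exp _), ← Complex.exp_add, add_neg_cancel, Complex.exp_zero]
  ring

lemma continuous_response (hg : Continuous g) : Continuous (response ℓ g) :=
  continuous_iff_continuousAt.2 fun t => (hasDerivAt_response hg t).continuousAt

lemma norm_cexp_mul_ofReal_le {lam : ℝ} (hℓ : ℓ.re ≤ -lam) {t : ℝ} (ht : 0 ≤ t) :
    ‖Complex.exp (ℓ * t)‖ ≤ Real.exp (-lam * t) := by
  rw [Complex.norm_exp, Complex.re_mul_ofReal]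
  gcongr

lemma norm_response_le {lam G : ℝ} (hlam : 0 < lam) (hℓ : ℓ.re ≤ -lam) (hG : ∀ s, ‖g s‖ ≤ G)
    {t : ℝ} (ht : 0 ≤ t) : ‖response ℓ g t‖ ≤ G / lam := by
  have hbound : ∀ s ∈ Set.Ioc (0 : ℝ) t, ‖Complex.exp (ℓ * (t - s)) * g s‖
      ≤ Real.exp (-lam * (t - s)) * G := by
    intro s hs
    have := norm_cexp_mul_ofReal_le hℓ (sub_nonneg.2 hs.2)
    rw [norm_mul, ← Complex.ofReal_sub]
    gcongr
    exact hG s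
  have hprim (s : ℝ) : HasDerivAt (fun s => Real.exp (-lam * (t - s)) * (G / lam))
      (Real.exp (-lam * (t - s)) * G) s := by
    have h : HasDerivAt (fun s : ℝ => -lam * (t - s)) (-lam * -1) s :=
      ((hasDerivAt_id s).const_sub t).const_mul (-lam)
    refine (h.exp.mul_const (G / lam)).congr_deriv ?_
    field_simp
  have hG0 : 0 ≤ G := (norm_nonneg _).trans (hG 0)
  calc ‖response ℓ g t‖ ≤ ∫ s in (0 : ℝ)..t, Real.exp (-lam * (t - s)) * G :=
        intervalIntegral.norm_integral_le_of_norm_le ht (Eventually.of_forall hbound)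
          (Continuous.intervalIntegrable (by fun_prop) _ _)
    _ = G / lam - Real.exp (-lam * t) * (G / lam) := by
        rw [intervalIntegral.integral_eq_sub_of_hasDerivAt (fun s _ => hprim s)
          (Continuous.intervalIntegrable (by fun_prop) _ _)]
        simp
    _ ≤ G / lam := sub_le_self _ (by positivity)

lemma enorm_response_le {lam : ℝ≥0} (hlam : lam ≠ 0) (hℓ : ℓ.re ≤ -lam) {G : ℝ≥0∞}
    (hG : ∀ s, ‖g s‖ₑ ≤ lam * G) {t : ℝ} (ht : 0 ≤ t) : ‖response ℓ g t‖ₑ ≤ G := by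
  rcases eq_or_ne G ∞ with rfl | hGtop
  · exact le_top
  lift G to ℝ≥0 using hGtop
  have hreal : ‖response ℓ g t‖ ≤ (lam * G : ℝ≥0) / lam :=
    norm_response_le (NNReal.coe_pos.2 (pos_iff_ne_zero.2 hlam)) hℓ (fun s => by
      exact_mod_cast hG s) ht
  rw [NNReal.coe_mul, mul_div_cancel_left₀ _ (NNReal.coe_ne_zero.2 hlam)] at hreal
  exact_mod_cast hreal

end Response

section ModeEnergy
variable {c g : ℝ → ℂ} {ℓ : ℂ}

/-- Young's inequality splits the forcing so that half of the dissipation `2 lam |c|²` survives. -/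
lemma two_mul_inner_le {lam : ℝ} (hlam : 0 < lam) (hℓ : ℓ.re ≤ -lam) (z w : ℂ) :
    2 * inner ℝ z (ℓ * z + w) ≤ lam⁻¹ * ‖w‖ ^ 2 - lam * ‖z‖ ^ 2 := by
  have hlin : inner ℝ z (ℓ * z) = ℓ.re * ‖z‖ ^ 2 := by
    rw [← Complex.normSq_eq_norm_sq, Complex.normSq_apply]
    simp only [Complex.inner, Complex.mul_re, Complex.conj_re, Complex.mul_im, Complex.conj_im,
      mul_neg, sub_neg_eq_add]
    ring
  have hcs : inner ℝ z w ≤ ‖z‖ * ‖w‖ := real_inner_le_norm z w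
  have hyoung : 2 * (‖z‖ * ‖w‖) ≤ lam * ‖z‖ ^ 2 + lam⁻¹ * ‖w‖ ^ 2 := by
    have hsq : lam * (‖z‖ - lam⁻¹ * ‖w‖) ^ 2
        = lam * ‖z‖ ^ 2 + lam⁻¹ * ‖w‖ ^ 2 - 2 * (‖z‖ * ‖w‖) := by
      field_simp
      ring
    have : 0 ≤ lam * (‖z‖ - lam⁻¹ * ‖w‖) ^ 2 := by positivity
    linarith
  have hdiss : ℓ.re * ‖z‖ ^ 2 ≤ -lam * ‖z‖ ^ 2 := by gcongr
  rw [inner_add_right, hlin]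
  linarith

lemma mode_energy_le {lam : ℝ} (hlam : 0 < lam) (hℓ : ℓ.re ≤ -lam) {s t : ℝ} (hst : s ≤ t)
    (hc : ∀ τ ∈ Set.Icc s t, HasDerivAt c (ℓ * c τ + g τ) τ) (hg : ContinuousOn g (Set.Icc s t)) :
    ‖c t‖ ^ 2 + lam * ∫ τ in s..t, ‖c τ‖ ^ 2 ≤ ‖c s‖ ^ 2 + lam⁻¹ * ∫ τ in s..t, ‖g τ‖ ^ 2 := by
  have hcont : ContinuousOn c (Set.Icc s t) := HasDerivAt.continuousOn hc
  have hinteg {φ : ℝ → ℝ} (hφ : ContinuousOn φ (Set.Icc s t)) :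
      IntervalIntegrable φ MeasureTheory.volume s t := hφ.intervalIntegrable_of_Icc hst
  have hbalance : ‖c t‖ ^ 2 - ‖c s‖ ^ 2 = ∫ τ in s..t, 2 * inner ℝ (c τ) (ℓ * c τ + g τ) := by
    have hderiv : ∀ τ ∈ Set.uIcc s t,
        HasDerivAt (‖c ·‖ ^ 2) (2 * inner ℝ (c τ) (ℓ * c τ + g τ)) τ := fun τ hτ =>
      (hc τ (Set.uIcc_of_le hst ▸ hτ)).norm_sq
    exact (intervalIntegral.integral_eq_sub_of_hasDerivAt hderiv (hinteg (by fun_prop))).symm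
  have hle : ∫ τ in s..t, 2 * inner ℝ (c τ) (ℓ * c τ + g τ)
      ≤ ∫ τ in s..t, (lam⁻¹ * ‖g τ‖ ^ 2 - lam * ‖c τ‖ ^ 2) :=
    intervalIntegral.integral_mono hst (hinteg (by fun_prop)) (hinteg (by fun_prop))
      fun τ => two_mul_inner_le hlam hℓ (c τ) (g τ)
  rw [intervalIntegral.integral_sub (hinteg (by fun_prop)) (hinteg (by fun_prop)),
    intervalIntegral.integral_const_mul lam⁻¹, intervalIntegral.integral_const_mul lam,
    ← hbalance] at hle
  linarith

lemma lintegral_enorm_sq_eq {φ : ℝ → ℂ} {s t : ℝ} (hst : s ≤ t)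
    (hφ : ContinuousOn φ (Set.Icc s t)) :
    ∫⁻ τ in Set.Ioc s t, ‖φ τ‖ₑ ^ 2 = ENNReal.ofReal (∫ τ in s..t, ‖φ τ‖ ^ 2) := by
  have hinteg : IntervalIntegrable (fun τ => ‖φ τ‖ ^ 2) MeasureTheory.volume s t :=
    ContinuousOn.intervalIntegrable_of_Icc hst (by fun_prop)
  rw [intervalIntegral.integral_of_le hst, MeasureTheory.ofReal_integral_eq_lintegral_ofReal
    hinteg.1 (Eventually.of_forall fun τ => by positivity)]
  simp only [ENNReal.ofReal_pow (norm_nonneg _), ofReal_norm]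

lemma mode_energy_le_enorm {lam : ℝ≥0} (hlam : lam ≠ 0) (hℓ : ℓ.re ≤ -lam) {s t : ℝ}
    (hst : s ≤ t) (hc : ∀ τ ∈ Set.Icc s t, HasDerivAt c (ℓ * c τ + g τ) τ)
    (hg : ContinuousOn g (Set.Icc s t)) :
    ‖c t‖ₑ ^ 2 + lam * ∫⁻ τ in Set.Ioc s t, ‖c τ‖ₑ ^ 2
      ≤ ‖c s‖ₑ ^ 2 + (lam : ℝ≥0∞)⁻¹ * ∫⁻ τ in Set.Ioc s t, ‖g τ‖ₑ ^ 2 := by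
  have hreal := mode_energy_le (NNReal.coe_pos.2 (pos_iff_ne_zero.2 hlam)) hℓ hst hc hg
  have hnonneg (φ : ℝ → ℂ) : 0 ≤ ∫ τ in s..t, ‖φ τ‖ ^ 2 :=
    intervalIntegral.integral_nonneg hst fun τ _ => by positivity
  rw [lintegral_enorm_sq_eq hst (HasDerivAt.continuousOn hc), lintegral_enorm_sq_eq hst hg,
    ← ENNReal.coe_inv hlam,
    ← ENNReal.ofReal_coe_nnreal, ← ENNReal.ofReal_coe_nnreal, ← ofReal_norm, ← ofReal_norm,
    ← ENNReal.ofReal_pow (norm_nonneg _), ← ENNReal.ofReal_pow (norm_nonneg _),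
    ← ENNReal.ofReal_mul lam.coe_nonneg, ← ENNReal.ofReal_mul (by positivity),
    ← ENNReal.ofReal_add (by positivity) (mul_nonneg lam.coe_nonneg (hnonneg c)),
    ← ENNReal.ofReal_add (by positivity) (mul_nonneg (by positivity) (hnonneg g))]
  exact ENNReal.ofReal_le_ofReal (by simpa using hreal)

end ModeEnergy

/-! ### Damped quadratic systems -/

/-- The coefficients of a system `cₙ' = ℓₙ cₙ + ∑ₘ (b₁ + β b₂)(n, m) cₘ cₙ₋ₘ` for the Fourier modes
of a real function, with parabolic damping of order `n²` and additional damping of order `β|n|`.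
Both kernels have order one; `b₂` also satisfies a commutator bound which, when the output is
measured in the dual of the damping `β|n|`, puts only `|m|^(3/2)` on the first factor. The other
laws preserve real values and zero mean. -/
structure QuadraticSystem where
  (κ K β : ℝ≥0)
  ℓ : ℤ → ℂ
  (b₁ b₂ : ℤ → ℤ → ℂ)
  κ_ne_zero : κ ≠ 0
  ℓ_re_le (n : ℤ) : (ℓ n).re ≤ -(κ * (‖n‖₊ ^ 2 + β * ‖n‖₊) : ℝ≥0)
  nnnorm_b₁_le (n m : ℤ) : ‖b₁ n m‖₊ ≤ K * (‖m‖₊ + ‖n - m‖₊)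
  nnnorm_b₂_le (n m : ℤ) : ‖b₂ n m‖₊ ≤ K * ‖n - m‖₊
  nnnorm_mul_nnnorm_b₂_sq_le (n m : ℤ) : ‖n‖₊ * ‖b₂ n m‖₊ ^ 2 ≤ K ^ 2 * ‖m‖₊ ^ 3
  ℓ_neg (n : ℤ) : ℓ (-n) = starRingEnd ℂ (ℓ n)
  b₁_neg (n m : ℤ) : b₁ (-n) (-m) = starRingEnd ℂ (b₁ n m)
  b₂_neg (n m : ℤ) : b₂ (-n) (-m) = starRingEnd ℂ (b₂ n m)
  b₁_zero_neg (m : ℤ) : b₁ 0 (-m) = -b₁ 0 m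
  b₂_zero (m : ℤ) : b₂ 0 m = 0

namespace QuadraticSystem
variable (S : QuadraticSystem)

/-- The guaranteed decay rate of the `n`-th mode of the linear part. -/
def damping (n : ℤ) : ℝ≥0 := S.κ * (‖n‖₊ ^ 2 + S.β * ‖n‖₊)

/-- The full interaction kernel. -/
def ker (n m : ℤ) : ℂ := S.b₁ n m + (S.β : ℂ) * S.b₂ n m

/-- The quadratic term, polarized. -/
def quad (c d : ℤ → ℂ) (n : ℤ) : ℂ := ∑' m, S.ker n m * (c m * d (n - m))

variable {S} {c d : ℤ → ℂ} {p q : ℤ → ℝ≥0∞}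

lemma damping_ne_zero {n : ℤ} (hn : n ≠ 0) : S.damping n ≠ 0 := by
  have hn' : 0 < ‖n‖₊ := nnnorm_pos.2 hn
  exact mul_ne_zero S.κ_ne_zero (by positivity)

lemma enorm_b₁_le (n m : ℤ) : ‖S.b₁ n m‖ₑ ≤ S.K * (‖m‖ₑ + ‖n - m‖ₑ) := by
  simp only [enorm_eq_nnnorm]
  exact_mod_cast S.nnnorm_b₁_le n m

lemma nnnorm_ker_le (n m : ℤ) :
    ‖S.ker n m‖₊ ≤ S.K * (‖m‖₊ + ‖n - m‖₊) + S.β * (S.K * ‖n - m‖₊) := by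
  refine (nnnorm_add_le _ _).trans (add_le_add (S.nnnorm_b₁_le n m) ?_)
  rw [nnnorm_mul]
  gcongr
  · simp
  · exact S.nnnorm_b₂_le n m

lemma enorm_ker_le (n m : ℤ) : ‖S.ker n m‖ₑ ≤ S.K * (1 + S.β) * (‖m‖ₑ + ‖n - m‖ₑ) := by
  have h : ‖S.ker n m‖₊ ≤ S.K * (1 + S.β) * (‖m‖₊ + ‖n - m‖₊) :=
    calc ‖S.ker n m‖₊ ≤ S.K * (‖m‖₊ + ‖n - m‖₊) + S.β * (S.K * ‖n - m‖₊) := nnnorm_ker_le n m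
      _ ≤ S.K * (‖m‖₊ + ‖n - m‖₊) + S.β * (S.K * (‖m‖₊ + ‖n - m‖₊)) := by
          gcongr; exact le_add_self
      _ = S.K * (1 + S.β) * (‖m‖₊ + ‖n - m‖₊) := by ring
  simp only [enorm_eq_nnnorm]
  exact_mod_cast h

lemma nnnorm_int_le_sq (n : ℤ) : ‖n‖₊ ≤ ‖n‖₊ ^ 2 := by
  rw [← NNReal.natCast_natAbs]
  exact_mod_cast Nat.le_self_pow two_ne_zero n.natAbs

/-- The damping compensates the kernel up to one derivative, uniformly in `β`: the term `β b₂` is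
paid for by the part `β|n|` of the damping. -/
lemma enorm_mul_enorm_ker_le (n m : ℤ) :
    ‖n‖ₑ * ‖S.ker n m‖ₑ ≤ S.damping n * ((S.K / S.κ : ℝ≥0) * (‖m‖ₑ + ‖n - m‖ₑ)) := by
  have hκ := S.κ_ne_zero
  have h : ‖n‖₊ * ‖S.ker n m‖₊ ≤ S.damping n * (S.K / S.κ * (‖m‖₊ + ‖n - m‖₊)) :=
    calc ‖n‖₊ * ‖S.ker n m‖₊
        ≤ ‖n‖₊ * (S.K * (‖m‖₊ + ‖n - m‖₊) + S.β * (S.K * (‖m‖₊ + ‖n - m‖₊))) := by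
          gcongr
          refine (nnnorm_ker_le n m).trans ?_
          gcongr
          exact le_add_self
      _ = (‖n‖₊ + S.β * ‖n‖₊) * (S.K * (‖m‖₊ + ‖n - m‖₊)) := by ring
      _ ≤ (‖n‖₊ ^ 2 + S.β * ‖n‖₊) * (S.K * (‖m‖₊ + ‖n - m‖₊)) := by
          gcongr
          exact nnnorm_int_le_sq n
      _ = S.damping n * (S.K / S.κ * (‖m‖₊ + ‖n - m‖₊)) := by
          rw [damping]
          field_simp
  simp only [enorm_eq_nnnorm]
  exact_mod_cast h

lemma tsum_enorm_quad_le (hc : ∀ m, ‖c m‖ₑ ≤ p m) (hd : ∀ m, ‖d m‖ₑ ≤ q m) (n : ℤ) :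
    ∑' m, ‖S.ker n m * (c m * d (n - m))‖ₑ ≤ S.K * (1 + S.β) * firstOrderConv p q n := by
  rw [firstOrderConv, ← ENNReal.tsum_mul_left]
  refine ENNReal.tsum_le_tsum fun m => ?_
  rw [enorm_mul, enorm_mul, ← mul_assoc (_ * _)]
  gcongr
  exacts [enorm_ker_le n m, hc m, hd _]

lemma enorm_mul_enorm_quad_le (hc : ∀ m, ‖c m‖ₑ ≤ p m) (hd : ∀ m, ‖d m‖ₑ ≤ q m) (n : ℤ) :
    ‖n‖ₑ * ‖S.quad c d n‖ₑ ≤ S.damping n * ((S.K / S.κ : ℝ≥0) * firstOrderConv p q n) :=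
  calc ‖n‖ₑ * ‖S.quad c d n‖ₑ ≤ ‖n‖ₑ * ∑' m, ‖S.ker n m * (c m * d (n - m))‖ₑ := by
        gcongr; exact enorm_tsum_le_tsum_enorm
    _ ≤ S.damping n * ((S.K / S.κ : ℝ≥0) * firstOrderConv p q n) := by
        simp only [firstOrderConv, ← ENNReal.tsum_mul_left]
        refine ENNReal.tsum_le_tsum fun m => ?_
        rw [enorm_mul, enorm_mul, ← mul_assoc, ← mul_assoc (ENNReal.ofNNReal (_ / _)),
          ← mul_assoc (S.damping n : ℝ≥0∞)]
        exact mul_le_mul' (enorm_mul_enorm_ker_le n m) (mul_le_mul' (hc m) (hd _))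

lemma summable_quad (hp : p 0 = 0) (hq : q 0 = 0) (hp' : gradSq p ≠ ∞) (hq' : gradSq q ≠ ∞)
    (hc : ∀ m, ‖c m‖ₑ ≤ p m) (hd : ∀ m, ‖d m‖ₑ ≤ q m) (n : ℤ) :
    Summable fun m => S.ker n m * (c m * d (n - m)) :=
  Summable.of_enorm <| ne_top_of_le_ne_top (ENNReal.mul_ne_top (by finiteness)
    (firstOrderConv_ne_top hp hq hp' hq' n)) (tsum_enorm_quad_le hc hd n)

lemma ker_neg (n m : ℤ) : S.ker (-n) (-m) = starRingEnd ℂ (S.ker n m) := by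
  simp [ker, S.b₁_neg, S.b₂_neg]

lemma quad_neg (hc : ∀ n, c (-n) = starRingEnd ℂ (c n)) (hd : ∀ n, d (-n) = starRingEnd ℂ (d n))
    (n : ℤ) : S.quad c d (-n) = starRingEnd ℂ (S.quad c d n) := by
  rw [quad, quad, Complex.conj_tsum, ← (Equiv.neg ℤ).tsum_eq]
  refine tsum_congr fun m => ?_
  rw [Equiv.neg_apply, ker_neg, hc, show -n - -m = -(n - m) by ring, hd, map_mul, map_mul]

/-- Zero mean is preserved because the kernel is odd at output frequency zero. -/
lemma quad_self_zero : S.quad c c 0 = 0 := by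
  refine self_eq_neg.1 ?_
  conv_lhs => rw [quad, ← (Equiv.neg ℤ).tsum_eq]
  rw [quad, ← tsum_neg]
  refine tsum_congr fun m => ?_
  simp only [Equiv.neg_apply, ker, S.b₂_zero, S.b₁_zero_neg, zero_sub, neg_neg]
  ring

end QuadraticSystem

/-! ### The fixed point -/

lemma exists_fixedPoint_quadratic {E : Type*} [NormedAddCommGroup E] [NormedSpace ℝ E]
    [CompleteSpace E] (B : E →ₗ[ℝ] E →ₗ[ℝ] E) {M : ℝ≥0} (hB : ∀ x y, ‖B x y‖ ≤ M * ‖x‖ * ‖y‖)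
    {a : E} (hsmall : 4 * M * ‖a‖ < 1)
    {s : Set E} (hs : IsClosed s) (h0 : 0 ∈ s) (hmaps : ∀ x ∈ s, a + B x x ∈ s) :
    ∃ x ∈ s, ‖x‖ ≤ 2 * ‖a‖ ∧ a + B x x = x := by
  set T := s ∩ Metric.closedBall 0 (2 * ‖a‖)
  have hT {x : E} (hx : x ∈ T) : ‖x‖ ≤ 2 * ‖a‖ := mem_closedBall_zero_iff.1 hx.2
  have hself : Set.MapsTo (fun x => a + B x x) T T := by
    refine fun x hx => ⟨hmaps x hx.1, mem_closedBall_zero_iff.2 ?_⟩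
    calc ‖a + B x x‖ ≤ ‖a‖ + M * ‖x‖ * ‖x‖ :=
          (norm_add_le _ _).trans (by gcongr; exact hB x x)
      _ ≤ ‖a‖ + M * (2 * ‖a‖) * (2 * ‖a‖) := by gcongr <;> exact hT hx
      _ = ‖a‖ + 4 * M * ‖a‖ * ‖a‖ := by ring
      _ ≤ ‖a‖ + 1 * ‖a‖ := by gcongr
      _ = 2 * ‖a‖ := by ring
  have hlip : ContractingWith ⟨4 * M * ‖a‖, by positivity⟩ (hself.restrict _ T T) := by
    refine ⟨hsmall, LipschitzWith.of_dist_le_mul fun x y => ?_⟩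
    rw [Subtype.dist_eq, Subtype.dist_eq, dist_eq_norm, dist_eq_norm]
    have hdiff : a + B x x - (a + B y y) = B (x - y) x + B y (x - y) := by
      simp only [map_sub, LinearMap.sub_apply]
      abel
    calc ‖a + B x x - (a + B y y)‖ ≤ M * ‖(x - y : E)‖ * ‖(x : E)‖
            + M * ‖(y : E)‖ * ‖(x - y : E)‖ := by
          rw [hdiff]
          exact (norm_add_le _ _).trans (add_le_add (hB _ _) (hB _ _))
      _ ≤ M * ‖(x - y : E)‖ * (2 * ‖a‖) + M * (2 * ‖a‖) * ‖(x - y : E)‖ := by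
          gcongr
          exacts [hT x.2, hT y.2]
      _ = 4 * M * ‖a‖ * ‖(x - y : E)‖ := by ring
  obtain ⟨x, hxT, hx, -⟩ := hlip.exists_fixedPoint' (x := 0)
    (hs.inter Metric.isClosed_closedBall).isComplete hself
    ⟨h0, Metric.mem_closedBall_self (by positivity)⟩ (edist_ne_top _ _)
  exact ⟨x, hxT.1, hT hxT, hx⟩

/-- The space of trajectories in which the Cauchy problem is solved: `v` stands for the Fourier
coefficients `cₙ(t) = vₙ(t) / n`, so that its norm is `(∑ n² sup_t |cₙ(t)|²)^(1/2)`. -/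
abbrev Traj : Type := lp (fun _ : ℤ => ℝ →ᵇ ℂ) 2

namespace Traj

/-- The Fourier coefficients represented by `v`; the mean vanishes since `0⁻¹ = 0`. -/
def coef (v : Traj) (t : ℝ) (n : ℤ) : ℂ := (n : ℂ)⁻¹ * v n t

/-- The bound on `sup_t |cₙ(t)|` provided by the norm of `vₙ`. -/
def amp (v : Traj) (n : ℤ) : ℝ≥0∞ := ‖(n : ℂ)⁻¹‖ₑ * ‖v n‖ₑ

variable (v w : Traj)

lemma amp_zero : amp v 0 = 0 := by simp [amp]

lemma enorm_coef_le (t : ℝ) (n : ℤ) : ‖coef v t n‖ₑ ≤ amp v n := by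
  rw [coef, amp, enorm_mul]
  gcongr
  exact enorm_le_iff_norm_le.2 ((v n).norm_coe_le_norm t)

lemma enorm_sq_eq_tsum : ‖v‖ₑ ^ 2 = ∑' n, ‖v n‖ₑ ^ 2 := by
  have h : HasSum (fun n => ‖v n‖ ^ 2) (‖v‖ ^ 2) := by
    simpa using lp.hasSum_norm (p := 2) (by norm_num) v
  rw [← ofReal_norm v, ← ENNReal.ofReal_pow (norm_nonneg _), ← h.tsum_eq,
    ENNReal.ofReal_tsum_of_nonneg (fun _ => by positivity) h.summable]
  simp only [ENNReal.ofReal_pow (norm_nonneg _), ofReal_norm]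

lemma gradSq_amp_le : gradSq (amp v) ≤ ‖v‖ₑ ^ 2 := by
  rw [enorm_sq_eq_tsum]
  refine ENNReal.tsum_le_tsum fun n => ?_
  rcases eq_or_ne n 0 with rfl | hn
  · simp
  · have hinv : ‖n‖ₑ * ‖(n : ℂ)⁻¹‖ₑ = 1 := by
      have hn' : (n : ℂ) ≠ 0 := by exact_mod_cast hn
      rw [show ‖n‖ₑ = ‖(n : ℂ)‖ₑ by simp [enorm_eq_nnnorm], ← enorm_mul, mul_inv_cancel₀ hn',
        enorm_one]
    rw [← mul_pow, amp, ← mul_assoc, hinv, one_mul]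

lemma gradSq_amp_ne_top : gradSq (amp v) ≠ ∞ :=
  ne_top_of_le_ne_top (by finiteness) (gradSq_amp_le v)

lemma exists_of_enorm_le {u : ℤ → ℝ → ℂ} (hu : ∀ n, Continuous (u n)) {p : ℤ → ℝ≥0∞}
    (hp : ∀ n t, ‖u n t‖ₑ ≤ p n) (hfin : weightedSq 1 p ≠ ∞) :
    ∃ v : Traj, (∀ n t, v n t = u n t) ∧ ‖v‖ₑ ^ 2 ≤ weightedSq 1 p := by
  have hp_top (n : ℤ) : p n ≠ ∞ := fun h =>
    ENNReal.ne_top_of_tsum_ne_top hfin n (by simp [h])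
  have hbound (n : ℤ) (t : ℝ) : ‖u n t‖ ≤ (p n).toReal := by
    rw [← toReal_enorm]
    exact ENNReal.toReal_mono (hp_top n) (hp n t)
  let f (n : ℤ) : ℝ →ᵇ ℂ :=
    BoundedContinuousFunction.ofNormedAddCommGroup (u n) (hu n) (p n).toReal (hbound n)
  have hf (n : ℤ) : ‖f n‖ ≤ (p n).toReal :=
    BoundedContinuousFunction.norm_ofNormedAddCommGroup_le _ ENNReal.toReal_nonneg _
  have hmem : Memℓp f 2 := by
    refine memℓp_gen (Summable.of_nonneg_of_le (fun n => by positivity) (fun n => ?_)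
      (ENNReal.summable_toReal hfin))
    simpa using pow_le_pow_left₀ (norm_nonneg _) (hf n) 2
  refine ⟨⟨f, hmem⟩, fun n t => rfl, ?_⟩
  rw [enorm_sq_eq_tsum]
  refine ENNReal.tsum_le_tsum fun n => ?_
  rw [Pi.one_apply, one_mul, ← ENNReal.ofReal_toReal (hp_top n), ← ofReal_norm]
  gcongr
  exact hf n

/-- The trajectories of real functions. -/
def realSet : Set Traj := {v | ∀ n t, v (-n) t = -starRingEnd ℂ (v n t)}

lemma isClosed_realSet : IsClosed realSet := by
  have heval (n : ℤ) (t : ℝ) : Continuous fun v : Traj => v n t :=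
    (BoundedContinuousFunction.evalCLM ℝ t).continuous.comp
      (lp.evalCLM ℝ (fun _ : ℤ => ℝ →ᵇ ℂ) 2 n).continuous
  simp only [realSet, Set.ofPred_forall]
  exact isClosed_iInter fun n => isClosed_iInter fun t =>
    isClosed_eq (heval _ t) (Complex.continuous_conj.comp (heval n t)).neg

variable {v} in
lemma coef_neg (hv : v ∈ realSet) (t : ℝ) (n : ℤ) : coef v t (-n) = starRingEnd ℂ (coef v t n) := by
  simp only [coef, hv n t, map_mul, map_inv₀, map_intCast]
  push_cast
  rw [inv_neg, neg_mul_neg]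

end Traj

namespace QuadraticSystem
variable {S : QuadraticSystem}

open Traj

lemma continuous_quad_coef (v w : Traj) (n : ℤ) :
    Continuous fun t => S.quad (coef v t) (coef w t) n := by
  have hfin : ∑' m, ‖S.ker n m‖ₑ * (amp v m * amp w (n - m)) ≠ ∞ := by
    refine ne_top_of_le_ne_top (ENNReal.mul_ne_top (a := S.K * (1 + S.β)) (by finiteness)
      (firstOrderConv_ne_top (amp_zero v) (amp_zero w) (gradSq_amp_ne_top v)
        (gradSq_amp_ne_top w) n)) ?_
    rw [firstOrderConv, ← ENNReal.tsum_mul_left]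
    refine ENNReal.tsum_le_tsum fun m => ?_
    rw [← mul_assoc (_ * _)]
    gcongr
    exact enorm_ker_le n m
  refine continuous_tsum (fun m => ?_) (ENNReal.summable_toReal hfin) (fun m t => ?_)
  · simp only [coef]
    fun_prop
  · rw [← toReal_enorm, enorm_mul, enorm_mul]
    refine ENNReal.toReal_mono (ENNReal.ne_top_of_tsum_ne_top hfin m) ?_
    gcongr <;> exact enorm_coef_le _ _ _

lemma summable_quad_coef (v w : Traj) (t : ℝ) (n : ℤ) :
    Summable fun m => S.ker n m * (coef v t m * coef w t (n - m)) :=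
  summable_quad (amp_zero v) (amp_zero w) (gradSq_amp_ne_top v) (gradSq_amp_ne_top w)
    (enorm_coef_le v t) (enorm_coef_le w t) n

lemma quad_coef_add_left (v v' w : Traj) (t : ℝ) (n : ℤ) :
    S.quad (coef (v + v') t) (coef w t) n
      = S.quad (coef v t) (coef w t) n + S.quad (coef v' t) (coef w t) n := by
  rw [quad, quad, quad, ← (summable_quad_coef v w t n).tsum_add (summable_quad_coef v' w t n)]
  refine tsum_congr fun m => ?_
  simp only [coef, lp.coeFn_add, Pi.add_apply, BoundedContinuousFunction.coe_add]
  ring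

lemma quad_coef_add_right (v w w' : Traj) (t : ℝ) (n : ℤ) :
    S.quad (coef v t) (coef (w + w') t) n
      = S.quad (coef v t) (coef w t) n + S.quad (coef v t) (coef w' t) n := by
  rw [quad, quad, quad, ← (summable_quad_coef v w t n).tsum_add (summable_quad_coef v w' t n)]
  refine tsum_congr fun m => ?_
  simp only [coef, lp.coeFn_add, Pi.add_apply, BoundedContinuousFunction.coe_add]
  ring

lemma quad_coef_smul_left (r : ℝ) (v w : Traj) (t : ℝ) (n : ℤ) :
    S.quad (coef (r • v) t) (coef w t) n = r * S.quad (coef v t) (coef w t) n := by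
  rw [quad, quad, ← tsum_mul_left]
  refine tsum_congr fun m => ?_
  simp only [coef, lp.coeFn_smul, Pi.smul_apply, BoundedContinuousFunction.coe_smul,
    Complex.real_smul]
  ring

lemma quad_coef_smul_right (r : ℝ) (v w : Traj) (t : ℝ) (n : ℤ) :
    S.quad (coef v t) (coef (r • w) t) n = r * S.quad (coef v t) (coef w t) n := by
  rw [quad, quad, ← tsum_mul_left]
  refine tsum_congr fun m => ?_
  simp only [coef, lp.coeFn_smul, Pi.smul_apply, BoundedContinuousFunction.coe_smul,
    Complex.real_smul]
  ring

lemma ℓ_re_le_damping (n : ℤ) : (S.ℓ n).re ≤ -(S.damping n : ℝ) := S.ℓ_re_le n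

/-- Maximal regularity of the damped modes: the damping gains what the kernel loses. -/
lemma enorm_mul_response_quad_le (v w : Traj) (n : ℤ) {t : ℝ} (ht : 0 ≤ t) :
    ‖(n : ℂ) * response (S.ℓ n) (fun s => S.quad (coef v s) (coef w s) n) t‖ₑ
      ≤ (S.K / S.κ : ℝ≥0) * firstOrderConv (amp v) (amp w) n := by
  rcases eq_or_ne n 0 with rfl | hn
  · simp
  rw [← response_const_mul]
  refine enorm_response_le (damping_ne_zero hn) (ℓ_re_le_damping n) (fun s => ?_) ht
  rw [enorm_mul, show ‖(n : ℂ)‖ₑ = ‖n‖ₑ by simp [enorm_eq_nnnorm]]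
  exact enorm_mul_enorm_quad_le (enorm_coef_le v s) (enorm_coef_le w s) n

lemma exists_duhamel (v w : Traj) :
    ∃ u : Traj, (∀ n t, u n t = n * response (S.ℓ n)
        (fun s => S.quad (coef v s) (coef w s) n) (max t 0))
      ∧ ‖u‖ ≤ (4 * (S.K / S.κ) : ℝ≥0) * ‖v‖ * ‖w‖ := by
  have hbound : weightedSq 1 (fun n => (S.K / S.κ : ℝ≥0) * firstOrderConv (amp v) (amp w) n)
      ≤ ((4 * (S.K / S.κ) * ‖v‖₊ * ‖w‖₊ : ℝ≥0) : ℝ≥0∞) ^ 2 :=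
    calc _ = (S.K / S.κ : ℝ≥0) ^ 2 * weightedSq 1 (firstOrderConv (amp v) (amp w)) := by
          simp only [weightedSq, mul_pow, ← ENNReal.tsum_mul_left, Pi.one_apply, one_mul]
      _ ≤ (S.K / S.κ : ℝ≥0) ^ 2 * (16 * (‖v‖ₑ ^ 2 * ‖w‖ₑ ^ 2)) := by
          gcongr
          refine (weightedSq_firstOrderConv_le (amp_zero v) (amp_zero w)).trans ?_
          gcongr <;> exact gradSq_amp_le _
      _ = _ := by
          simp only [enorm_eq_nnnorm]
          push_cast
          ring
  obtain ⟨u, hu, hnorm⟩ := Traj.exists_of_enorm_le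
    (u := fun n t => (n : ℂ) * response (S.ℓ n) (fun s => S.quad (coef v s) (coef w s) n) (max t 0))
    (fun n => continuous_const.mul
      ((continuous_response (continuous_quad_coef v w n)).comp (by fun_prop)))
    (fun n t => enorm_mul_response_quad_le v w n (le_max_right t 0))
    (ne_top_of_le_ne_top (by finiteness) hbound)
  refine ⟨u, hu, ?_⟩
  have := (ENNReal.pow_le_pow_left_iff two_ne_zero).1 (hnorm.trans hbound)
  rw [enorm_eq_nnnorm] at this
  exact_mod_cast this

lemma exists_duhamel_bilinear (S : QuadraticSystem) :
    ∃ B : Traj →ₗ[ℝ] Traj →ₗ[ℝ] Traj,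
      (∀ v w, ‖B v w‖ ≤ (4 * (S.K / S.κ) : ℝ≥0) * ‖v‖ * ‖w‖) ∧
      ∀ v w n t, B v w n t = n * response (S.ℓ n)
        (fun s => S.quad (coef v s) (coef w s) n) (max t 0) := by
  choose D hD hnorm using exists_duhamel (S := S)
  have hext {u u' : Traj} (h : ∀ n t, u n t = u' n t) : u = u' :=
    lp.ext (funext fun n => BoundedContinuousFunction.ext (h n))
  have hcont (v w : Traj) (n : ℤ) : Continuous fun t => S.quad (coef v t) (coef w t) n :=
    continuous_quad_coef v w n
  refine ⟨LinearMap.mk₂ ℝ D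
    (fun v v' w => hext fun n t => by
      simp only [lp.coeFn_add, Pi.add_apply, BoundedContinuousFunction.coe_add, hD,
        quad_coef_add_left, response_add (hcont _ _ _) (hcont _ _ _), mul_add])
    (fun r v w => hext fun n t => by
      simp only [lp.coeFn_smul, Pi.smul_apply, BoundedContinuousFunction.coe_smul, hD,
        quad_coef_smul_left, response_const_mul, Complex.real_smul, mul_left_comm])
    (fun v w w' => hext fun n t => by
      simp only [lp.coeFn_add, Pi.add_apply, BoundedContinuousFunction.coe_add, hD,
        quad_coef_add_right, response_add (hcont _ _ _) (hcont _ _ _), mul_add])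
    (fun r v w => hext fun n t => by
      simp only [lp.coeFn_smul, Pi.smul_apply, BoundedContinuousFunction.coe_smul, hD,
        quad_coef_smul_right, response_const_mul, Complex.real_smul, mul_left_comm]), hnorm, hD⟩

lemma enorm_free_le (n : ℤ) (z : ℂ) {t : ℝ} (ht : 0 ≤ t) :
    ‖Complex.exp (S.ℓ n * t) * z‖ₑ ≤ ‖z‖ₑ := by
  rw [enorm_mul]
  refine mul_le_of_le_one_left zero_le (enorm_le_iff_norm_le (y := (1 : ℂ)) |>.2 ?_ |>.trans_eq ?_)
  · refine (norm_cexp_mul_ofReal_le (ℓ_re_le_damping n) ht).trans ?_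
    rw [norm_one, Real.exp_le_one_iff, neg_mul, neg_nonpos]
    positivity
  · simp

lemma exists_free (S : QuadraticSystem) {f₀ : ℤ → ℂ} (hf₀ : gradSq (‖f₀ ·‖ₑ) ≠ ∞) :
    ∃ a : Traj, (∀ n t, a n t = n * (Complex.exp (S.ℓ n * (max t 0 : ℝ)) * f₀ n))
      ∧ ‖a‖ₑ ^ 2 ≤ gradSq (‖f₀ ·‖ₑ) := by
  have heq : weightedSq 1 (fun n : ℤ => ‖n‖ₑ * ‖f₀ n‖ₑ) = gradSq (‖f₀ ·‖ₑ) := by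
    simp only [weightedSq, mul_pow, Pi.one_apply, one_mul]
  obtain ⟨a, ha, hnorm⟩ := Traj.exists_of_enorm_le
    (u := fun n t => (n : ℂ) * (Complex.exp (S.ℓ n * (max t 0 : ℝ)) * f₀ n))
    (p := fun n : ℤ => ‖n‖ₑ * ‖f₀ n‖ₑ)
    (fun n => by fun_prop) (fun n t => by
      rw [enorm_mul, show ‖(n : ℂ)‖ₑ = ‖n‖ₑ by simp [enorm_eq_nnnorm]]
      gcongr
      exact enorm_free_le n _ (le_max_right t 0)) (heq ▸ hf₀)
  exact ⟨a, ha, heq ▸ hnorm⟩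

variable {f₀ : ℤ → ℂ}

/-- Duhamel's formula for the datum `f₀` with the quadratic term evaluated along `v`; its fixed
points are the mild solutions. -/
def mild (S : QuadraticSystem) (f₀ : ℤ → ℂ) (v : Traj) (n : ℤ) (t : ℝ) : ℂ :=
  Complex.exp (S.ℓ n * t) * f₀ n
    + response (S.ℓ n) (fun s => S.quad (coef v s) (coef v s) n) t

lemma mild_initial (v : Traj) (n : ℤ) : S.mild f₀ v n 0 = f₀ n := by
  simp [mild, response_zero_right]

lemma mild_mean (h0 : f₀ 0 = 0) (v : Traj) (t : ℝ) : S.mild f₀ v 0 t = 0 := by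
  simp [mild, h0, quad_self_zero, response]

lemma mild_neg (hf₀ : ∀ n, f₀ (-n) = starRingEnd ℂ (f₀ n)) {v : Traj} (hv : v ∈ realSet) (n : ℤ)
    (t : ℝ) : S.mild f₀ v (-n) t = starRingEnd ℂ (S.mild f₀ v n t) := by
  have hquad (s : ℝ) : S.quad (coef v s) (coef v s) (-n)
      = starRingEnd ℂ (S.quad (coef v s) (coef v s) n) :=
    quad_neg (coef_neg hv s) (coef_neg hv s) n
  simp only [mild, S.ℓ_neg, hf₀, hquad, response_conj, map_add, map_mul, ← Complex.exp_conj,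
    Complex.conj_ofReal]

lemma hasDerivAt_mild (v : Traj) (n : ℤ) (t : ℝ) :
    HasDerivAt (S.mild f₀ v n)
      (S.ℓ n * S.mild f₀ v n t + S.quad (coef v t) (coef v t) n) t := by
  refine (((hasDerivAt_cexp_mul_ofReal (S.ℓ n) t).mul_const (f₀ n)).add
    (hasDerivAt_response (continuous_quad_coef v v n) t)).congr_deriv ?_
  rw [mild]
  ring

lemma exists_mild_fixedPoint (hf₀ : ∀ n, f₀ (-n) = starRingEnd ℂ (f₀ n))
    (hfin : gradSq (‖f₀ ·‖ₑ) ≠ ∞) (hsmall : (32 * S.K) ^ 2 * gradSq (‖f₀ ·‖ₑ) ≤ S.κ ^ 2) :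
    ∃ v ∈ realSet, ‖v‖ₑ ^ 2 ≤ 4 * gradSq (‖f₀ ·‖ₑ)
      ∧ ∀ n t, v n t = n * S.mild f₀ v n (max t 0) := by
  obtain ⟨a, ha, ha_norm⟩ := exists_free S hfin
  obtain ⟨B, hB, hB_apply⟩ := exists_duhamel_bilinear S
  have heval (v : Traj) (n : ℤ) (t : ℝ) : (a + B v v) n t = n * S.mild f₀ v n (max t 0) := by
    rw [lp.coeFn_add, Pi.add_apply, BoundedContinuousFunction.add_apply, ha, hB_apply, mild,
      mul_add]
  have ha_small : 4 * (4 * (S.K / S.κ) : ℝ≥0) * ‖a‖ < 1 := by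
    have hκ : 0 < S.κ := pos_iff_ne_zero.2 S.κ_ne_zero
    have h : (32 * S.K * ‖a‖ₑ) ^ 2 ≤ (S.κ : ℝ≥0∞) ^ 2 := by
      rw [mul_pow]
      exact (mul_le_mul_right ha_norm _).trans hsmall
    have hmul : 32 * S.K * ‖a‖₊ ≤ S.κ := by
      have := (ENNReal.pow_le_pow_left_iff two_ne_zero).1 h
      rw [enorm_eq_nnnorm] at this
      exact_mod_cast this
    have hlt : 4 * (4 * (S.K / S.κ)) * ‖a‖₊ < 1 :=
      calc 4 * (4 * (S.K / S.κ)) * ‖a‖₊ = 32 * S.K * ‖a‖₊ / (2 * S.κ) := by field_simp; ring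
        _ ≤ S.κ / (2 * S.κ) := by gcongr
        _ < 1 := (div_lt_one (by positivity)).2 (lt_mul_of_one_lt_left hκ one_lt_two)
    exact_mod_cast hlt
  have hmaps : ∀ v ∈ realSet, a + B v v ∈ realSet := fun v hv n t => by
    rw [heval, heval, mild_neg hf₀ hv]
    simp
  obtain ⟨v, hv, hv_norm, hv_fix⟩ :=
    exists_fixedPoint_quadratic B hB ha_small isClosed_realSet (fun n t => by simp) hmaps
  refine ⟨v, hv, ?_, fun n t => by rw [← heval, hv_fix]⟩
  calc ‖v‖ₑ ^ 2 ≤ (2 * ‖a‖ₑ) ^ 2 := by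
        gcongr
        simp only [enorm_eq_nnnorm]
        exact_mod_cast (show ‖v‖₊ ≤ 2 * ‖a‖₊ from hv_norm)
    _ = 4 * ‖a‖ₑ ^ 2 := by ring
    _ ≤ 4 * gradSq (‖f₀ ·‖ₑ) := by gcongr

/-- `c` is a solution on `[0, ∞)` with real values and zero mean. -/
structure IsSolution (S : QuadraticSystem) (c : ℝ → ℤ → ℂ) : Prop where
  hasDerivAt {t : ℝ} (ht : 0 ≤ t) (n : ℤ) :
    HasDerivAt (fun s => c s n) (S.ℓ n * c t n + S.quad (c t) (c t) n) t
  continuousOn_quad (n : ℤ) : ContinuousOn (fun t => S.quad (c t) (c t) n) (Set.Ici 0)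
  realZeroMean {t : ℝ} (ht : 0 ≤ t) : RealZeroMean (c t)

theorem exists_isSolution (hf₀ : RealZeroMean f₀) (hfin : gradSq (‖f₀ ·‖ₑ) ≠ ∞)
    (hsmall : (32 * S.K) ^ 2 * gradSq (‖f₀ ·‖ₑ) ≤ S.κ ^ 2) :
    ∃ c, c 0 = f₀ ∧ S.IsSolution c
      ∧ ∀ t, 0 ≤ t → gradSq (‖c t ·‖ₑ) ≤ 4 * gradSq (‖f₀ ·‖ₑ) := by
  obtain ⟨v, hv, hv_norm, hv_fix⟩ := exists_mild_fixedPoint hf₀.2 hfin hsmall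
  have hcoef {t : ℝ} (ht : 0 ≤ t) : (fun n => S.mild f₀ v n t) = coef v t := by
    funext n
    rcases eq_or_ne n 0 with rfl | hn
    · simp [mild_mean hf₀.1, coef]
    · have hn' : (n : ℂ) ≠ 0 := by exact_mod_cast hn
      rw [coef, hv_fix, max_eq_left ht, inv_mul_cancel_left₀ hn']
  refine ⟨fun t n => S.mild f₀ v n t, funext (mild_initial v), ⟨?_, ?_, ?_⟩, ?_⟩
  · intro t ht n
    rw [hcoef ht]
    exact hasDerivAt_mild v n t
  · intro n
    exact (continuous_quad_coef v v n).continuousOn.congr fun t ht => by rw [hcoef ht]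
  · exact fun {t} _ => ⟨mild_mean hf₀.1 v t, fun n => mild_neg hf₀.2 hv n t⟩
  · intro t ht
    calc gradSq (fun n => ‖S.mild f₀ v n t‖ₑ) = gradSq (‖coef v t ·‖ₑ) := by rw [← hcoef ht]
      _ ≤ gradSq (amp v) := weightedSq_mono (fun _ _ => le_rfl) (enorm_coef_le v t)
      _ ≤ 4 * gradSq (‖f₀ ·‖ₑ) := (gradSq_amp_le v).trans hv_norm

end QuadraticSystem

/-! ### The energy estimate -/

/-- The squared norm of `H^k(𝕋)`, in terms of Fourier coefficients. -/
def sobolevSq (k : ℕ) (c : ℤ → ℂ) : ℝ≥0∞ :=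
  weightedSq (fun n => ((1 + ‖n‖₊ ^ 2) ^ k : ℝ≥0)) (‖c ·‖ₑ)

section Sobolev
variable {c : ℤ → ℂ}

lemma one_add_nnnorm_sq_le {n : ℤ} (hn : n ≠ 0) : 1 + ‖n‖₊ ^ 2 ≤ 2 * ‖n‖₊ ^ 2 := by
  have h : (1 : ℝ≥0) ≤ ‖n‖₊ ^ 2 := by
    rw [← NNReal.natCast_natAbs]
    exact_mod_cast Nat.one_le_pow 2 _ (Int.natAbs_pos.2 hn)
  rw [two_mul]
  gcongr

lemma gradSq_le_sobolevSq_one : gradSq (‖c ·‖ₑ) ≤ sobolevSq 1 c :=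
  weightedSq_mono (fun n _ => by simp [enorm_eq_nnnorm]) fun _ => le_rfl

lemma sobolevSq_one_le (h0 : c 0 = 0) : sobolevSq 1 c ≤ 2 * gradSq (‖c ·‖ₑ) := by
  rw [gradSq, ← weightedSq_mul_left]
  refine weightedSq_mono (fun n hn => ?_) fun _ => le_rfl
  have hn0 : n ≠ 0 := by rintro rfl; simp [h0] at hn
  simp only [enorm_eq_nnnorm, pow_one]
  exact_mod_cast one_add_nnnorm_sq_le hn0

lemma sobolevSq_mono {j k : ℕ} (hjk : j ≤ k) : sobolevSq j c ≤ sobolevSq k c :=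
  weightedSq_mono (fun n _ => by
    gcongr
    exact le_self_add) fun _ => le_rfl

lemma toReal_sobolev_term (k : ℕ) (n : ℤ) (z : ℂ) :
    ((((1 + ‖n‖₊ ^ 2) ^ k : ℝ≥0) : ℝ≥0∞) * ‖z‖ₑ ^ 2).toReal
      = (1 + (n : ℝ) ^ 2) ^ k * ‖z‖ ^ 2 := by
  rw [ENNReal.toReal_mul, ENNReal.coe_toReal]
  simp [Int.norm_eq_abs]

lemma toReal_sobolevSq (k : ℕ) (c : ℤ → ℂ) :
    (sobolevSq k c).toReal = ∑' n : ℤ, (1 + (n : ℝ) ^ 2) ^ k * ‖c n‖ ^ 2 := by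
  rw [sobolevSq, weightedSq, ENNReal.tsum_toReal_eq fun n => by finiteness]
  exact tsum_congr fun n => toReal_sobolev_term k n (c n)

lemma H1sq_eq (c : ℤ → ℂ) : H1sq c = (sobolevSq 1 c).toReal := by
  simp only [toReal_sobolevSq, H1sq, pow_one]

lemma H2sq_eq (c : ℤ → ℂ) : H2sq c = (sobolevSq 2 c).toReal :=
  (toReal_sobolevSq 2 c).symm

lemma summable_of_sobolevSq_one_ne_top (h : sobolevSq 1 c ≠ ∞) :
    Summable fun n : ℤ => (1 + (n : ℝ) ^ 2) * ‖c n‖ ^ 2 :=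
  (ENNReal.summable_toReal h).congr fun n => by rw [toReal_sobolev_term, pow_one]

lemma sobolevSq_one_eq_ofReal (h : Summable fun n : ℤ => (1 + (n : ℝ) ^ 2) * ‖c n‖ ^ 2) :
    sobolevSq 1 c = ENNReal.ofReal (H1sq c) := by
  rw [H1sq, ENNReal.ofReal_tsum_of_nonneg (fun n => by positivity) h]
  refine tsum_congr fun n => ?_
  rw [← pow_one (1 + (n : ℝ) ^ 2), ← toReal_sobolev_term, ENNReal.ofReal_toReal (by finiteness)]

end Sobolev

lemma lintegral_weightedSq {w : ℤ → ℝ≥0} {φ : ℝ → ℤ → ℂ} {s t : ℝ}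
    (hφ : ∀ n, ContinuousOn (fun τ => φ τ n) (Set.Icc s t)) :
    ∫⁻ τ in Set.Ioc s t, weightedSq (fun n => (w n : ℝ≥0∞)) (‖φ τ ·‖ₑ)
      = ∑' n, w n * ∫⁻ τ in Set.Ioc s t, ‖φ τ n‖ₑ ^ 2 := by
  have hmeas (n : ℤ) : AEMeasurable (fun τ => ‖φ τ n‖ₑ ^ 2)
      (MeasureTheory.volume.restrict (Set.Ioc s t)) :=
    ((((hφ n).mono Set.Ioc_subset_Icc_self).aemeasurable measurableSet_Ioc).enorm).pow_const 2
  simp only [weightedSq]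
  rw [MeasureTheory.lintegral_tsum fun n => (hmeas n).const_mul _]
  exact tsum_congr fun n => MeasureTheory.lintegral_const_mul'' _ (hmeas n)

namespace QuadraticSystem

/-- The rate at which the linear part dissipates half the squared `H¹` norm. -/
def dissipation (S : QuadraticSystem) (c : ℤ → ℂ) : ℝ≥0∞ :=
  weightedSq (fun n => ((1 + ‖n‖₊ ^ 2) * S.damping n : ℝ≥0)) (‖c ·‖ₑ)

/-- The weight of the norm dual to the dissipation with respect to the `H¹` pairing. Division by
zero makes it vanish at `n = 0`. -/
def dualWeight (S : QuadraticSystem) (n : ℤ) : ℝ≥0 := (1 + ‖n‖₊ ^ 2) / S.damping n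

/-- The squared norm of a forcing term dual to the dissipation. -/
def forcing (S : QuadraticSystem) (d : ℤ → ℂ) : ℝ≥0∞ :=
  weightedSq (fun n => (S.dualWeight n : ℝ≥0∞)) (‖d ·‖ₑ)

variable {S : QuadraticSystem} {c : ℤ → ℂ}

lemma one_add_nnnorm_sq_le_damping {n : ℤ} (hn : n ≠ 0) :
    1 + ‖n‖₊ ^ 2 ≤ 2 / S.κ * S.damping n := by
  have hκ := S.κ_ne_zero
  calc 1 + ‖n‖₊ ^ 2 ≤ 2 * (‖n‖₊ ^ 2 + S.β * ‖n‖₊) :=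
        (one_add_nnnorm_sq_le hn).trans (by gcongr; exact le_self_add)
    _ = 2 / S.κ * S.damping n := by rw [damping]; field_simp

lemma dualWeight_le (n : ℤ) : S.dualWeight n ≤ 2 / S.κ := by
  rcases eq_or_ne n 0 with rfl | hn
  · simp [dualWeight, damping]
  · exact div_le_of_le_mul₀ zero_le zero_le (one_add_nnnorm_sq_le_damping hn)

lemma dualWeight_mul_sq_le (n : ℤ) : S.dualWeight n * S.β ^ 2 ≤ 2 / S.κ * S.β * ‖n‖₊ := by
  rcases eq_or_ne n 0 with rfl | hn
  · simp [dualWeight, damping]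
  have hκ := S.κ_ne_zero
  rw [dualWeight, div_mul_eq_mul_div]
  refine div_le_of_le_mul₀ zero_le zero_le ?_
  calc (1 + ‖n‖₊ ^ 2) * S.β ^ 2 ≤ 2 * ‖n‖₊ ^ 2 * S.β ^ 2 := by
        gcongr; exact one_add_nnnorm_sq_le hn
    _ ≤ 2 * ‖n‖₊ ^ 2 * S.β ^ 2 + 2 * S.β * ‖n‖₊ ^ 3 := le_self_add
    _ = 2 / S.κ * S.β * ‖n‖₊ * S.damping n := by
        rw [damping]
        field_simp
        ring

lemma sobolevSq_two_le (h0 : c 0 = 0) : sobolevSq 2 c ≤ (2 / S.κ : ℝ≥0) * S.dissipation c := by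
  rw [dissipation, ← weightedSq_mul_left]
  refine weightedSq_mono (fun n hn => ?_) fun _ => le_rfl
  have hn0 : n ≠ 0 := by rintro rfl; simp [h0] at hn
  have h : (1 + ‖n‖₊ ^ 2) ^ 2 ≤ 2 / S.κ * ((1 + ‖n‖₊ ^ 2) * S.damping n) := by
    rw [sq, mul_left_comm]
    gcongr
    exact one_add_nnnorm_sq_le_damping hn0
  exact_mod_cast h

lemma gradSq_add_le_dissipation :
    S.κ * (gradSq (‖c ·‖ₑ) + S.β * weightedSq (fun n : ℤ => ‖n‖ₑ ^ 3) (‖c ·‖ₑ))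
      ≤ S.dissipation c := by
  simp only [gradSq, weightedSq, dissipation, ← ENNReal.tsum_mul_left, ← ENNReal.tsum_add]
  refine ENNReal.tsum_le_tsum fun n => ?_
  have h : S.κ * (‖n‖₊ ^ 2 + S.β * ‖n‖₊ ^ 3) ≤ (1 + ‖n‖₊ ^ 2) * S.damping n :=
    calc S.κ * (‖n‖₊ ^ 2 + S.β * ‖n‖₊ ^ 3)
        ≤ S.κ * (‖n‖₊ ^ 2 + S.β * ‖n‖₊ ^ 3) + S.κ * (‖n‖₊ ^ 4 + S.β * ‖n‖₊) := le_self_add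
      _ = (1 + ‖n‖₊ ^ 2) * S.damping n := by rw [damping]; ring
  calc _ = ((S.κ * (‖n‖₊ ^ 2 + S.β * ‖n‖₊ ^ 3) : ℝ≥0) : ℝ≥0∞) * ‖c n‖ₑ ^ 2 := by
        simp only [enorm_eq_nnnorm]
        push_cast
        ring
    _ ≤ _ := by gcongr

lemma weightedSq_dualWeight_le (p : ℤ → ℝ≥0∞) :
    weightedSq (fun n => (S.dualWeight n : ℝ≥0∞)) p ≤ (2 / S.κ : ℝ≥0) * weightedSq 1 p := by
  rw [← weightedSq_mul_left]
  exact weightedSq_mono (fun n _ => by simpa using ENNReal.coe_le_coe.2 (dualWeight_le n))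
    fun _ => le_rfl

lemma weightedSq_dualWeight_mul_le (p : ℤ → ℝ≥0∞) :
    weightedSq (fun n => (S.dualWeight n : ℝ≥0∞)) (fun n => S.β * p n)
      ≤ (2 / S.κ : ℝ≥0) * S.β * weightedSq (fun n : ℤ => ‖n‖ₑ) p := by
  rw [← weightedSq_mul_left]
  refine ENNReal.tsum_le_tsum fun n => ?_
  rw [mul_pow, ← mul_assoc]
  gcongr
  beta_reduce
  rw [enorm_eq_nnnorm]
  exact_mod_cast dualWeight_mul_sq_le n

lemma enorm_quad_le (c : ℤ → ℂ) (n : ℤ) :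
    ‖S.quad c c n‖ₑ ≤ S.K * firstOrderConv (‖c ·‖ₑ) (‖c ·‖ₑ) n
      + S.β * ∑' m, ‖S.b₂ n m‖ₑ * (‖c m‖ₑ * ‖c (n - m)‖ₑ) := by
  rw [firstOrderConv, ← ENNReal.tsum_mul_left, ← ENNReal.tsum_mul_left, ← ENNReal.tsum_add]
  refine enorm_tsum_le_tsum_enorm.trans (ENNReal.tsum_le_tsum fun m => ?_)
  have hker : ‖S.ker n m‖ₑ ≤ S.K * (‖m‖ₑ + ‖n - m‖ₑ) + S.β * ‖S.b₂ n m‖ₑ := by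
    refine (enorm_add_le _ _).trans (add_le_add (enorm_b₁_le n m) ?_)
    simp [enorm_eq_nnnorm]
  rw [enorm_mul, enorm_mul, ← mul_assoc (S.K : ℝ≥0∞), ← mul_assoc (S.β : ℝ≥0∞), ← add_mul]
  gcongr

lemma weightedSq_b₂_le (h0 : c 0 = 0) :
    weightedSq (fun n : ℤ => ‖n‖ₑ) (fun n => ∑' m, ‖S.b₂ n m‖ₑ * (‖c m‖ₑ * ‖c (n - m)‖ₑ))
      ≤ 4 * gradSq (‖c ·‖ₑ) * (S.K ^ 2 * weightedSq (fun n : ℤ => ‖n‖ₑ ^ 3) (‖c ·‖ₑ)) := by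
  have hb (n m : ℤ) : ‖n‖ₑ * ‖S.b₂ n m‖ₑ ^ 2 ≤ S.K ^ 2 * ‖m‖ₑ ^ 3 := by
    simp only [enorm_eq_nnnorm]
    exact_mod_cast S.nnnorm_mul_nnnorm_b₂_sq_le n m
  rw [← weightedSq_mul_left _ _ ((S.K : ℝ≥0∞) ^ 2)]
  refine (weightedSq_tsum_mul_le hb (‖c ·‖ₑ) (‖c ·‖ₑ)).trans ?_
  gcongr
  exact sq_tsum_le_gradSq (by simp [h0])

lemma forcing_quad_le (h0 : c 0 = 0) :
    S.κ * S.forcing (S.quad c c) ≤ 64 * S.K ^ 2 * gradSq (‖c ·‖ₑ)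
      * (gradSq (‖c ·‖ₑ) + S.β * weightedSq (fun n : ℤ => ‖n‖ₑ ^ 3) (‖c ·‖ₑ)) := by
  set P := firstOrderConv (‖c ·‖ₑ) (‖c ·‖ₑ)
  set Q := fun n => ∑' m, ‖S.b₂ n m‖ₑ * (‖c m‖ₑ * ‖c (n - m)‖ₑ)
  set G := gradSq (‖c ·‖ₑ)
  set T := weightedSq (fun n : ℤ => ‖n‖ₑ ^ 3) (‖c ·‖ₑ)
  set w := fun n => (S.dualWeight n : ℝ≥0∞)
  have hP : weightedSq w (fun n => S.K * P n) ≤ (2 / S.κ : ℝ≥0) * (S.K ^ 2 * (16 * (G * G))) := by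
    rw [weightedSq_const_mul, mul_left_comm (ENNReal.ofNNReal _)]
    gcongr
    refine (weightedSq_dualWeight_le P).trans ?_
    gcongr
    exact weightedSq_firstOrderConv_le (by simp [h0]) (by simp [h0])
  have hQ : weightedSq w (fun n => S.β * Q n)
      ≤ (2 / S.κ : ℝ≥0) * S.β * (4 * G * (S.K ^ 2 * T)) := by
    refine (weightedSq_dualWeight_mul_le Q).trans ?_
    gcongr
    exact weightedSq_b₂_le h0
  calc S.κ * S.forcing (S.quad c c)
      ≤ S.κ * weightedSq w (fun n => S.K * P n + S.β * Q n) := by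
        gcongr
        exact weightedSq_mono (fun _ _ => le_rfl) (enorm_quad_le c)
    _ ≤ S.κ * (2 * ((2 / S.κ : ℝ≥0) * (S.K ^ 2 * (16 * (G * G)))
          + (2 / S.κ : ℝ≥0) * S.β * (4 * G * (S.K ^ 2 * T)))) := by
        gcongr
        exact (weightedSq_add_le _ _ _).trans (by gcongr)
    _ = (S.κ * (2 / S.κ) : ℝ≥0) * (8 * S.K ^ 2 * G * (4 * G + S.β * T)) := by
        push_cast; ring
    _ ≤ 2 * (8 * S.K ^ 2 * G * (4 * (G + S.β * T))) := by
        rw [mul_div_cancel₀ _ S.κ_ne_zero, ENNReal.coe_ofNat, mul_add 4]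
        gcongr 2 * (8 * S.K ^ 2 * G * (4 * G + ?_))
        exact le_mul_of_one_le_left zero_le (by norm_num : (1 : ℝ≥0∞) ≤ 4)
    _ = 64 * S.K ^ 2 * G * (G + S.β * T) := by ring

lemma two_mul_forcing_quad_le (h0 : c 0 = 0) (hsmall : (16 * S.K) ^ 2 * gradSq (‖c ·‖ₑ) ≤ S.κ ^ 2) :
    2 * S.forcing (S.quad c c) ≤ S.dissipation c := by
  have hκ : (S.κ : ℝ≥0∞) ≠ 0 := by exact_mod_cast S.κ_ne_zero
  refine (ENNReal.mul_le_mul_iff_right (pow_ne_zero 2 hκ) (by finiteness)).1 ?_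
  set X := gradSq (‖c ·‖ₑ) + S.β * weightedSq (fun n : ℤ => ‖n‖ₑ ^ 3) (‖c ·‖ₑ)
  calc (S.κ : ℝ≥0∞) ^ 2 * (2 * S.forcing (S.quad c c))
      = 2 * S.κ * (S.κ * S.forcing (S.quad c c)) := by ring
    _ ≤ 2 * S.κ * (64 * S.K ^ 2 * gradSq (‖c ·‖ₑ) * X) :=
        mul_le_mul_right (forcing_quad_le h0) _
    _ ≤ 2 * (2 * S.κ * (64 * S.K ^ 2 * gradSq (‖c ·‖ₑ) * X)) :=
        le_mul_of_one_le_left zero_le one_le_two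
    _ = (16 * S.K) ^ 2 * gradSq (‖c ·‖ₑ) * (S.κ * X) := by ring
    _ ≤ S.κ ^ 2 * S.dissipation c := by gcongr; exact gradSq_add_le_dissipation

lemma forcing_quad_le_gradSq (h0 : c 0 = 0) : S.forcing (S.quad c c)
    ≤ (2 / S.κ : ℝ≥0) * ((S.K * (1 + S.β)) ^ 2 * (16 * (gradSq (‖c ·‖ₑ) * gradSq (‖c ·‖ₑ)))) :=
  calc S.forcing (S.quad c c) ≤ (2 / S.κ : ℝ≥0) * weightedSq 1 (‖S.quad c c ·‖ₑ) :=
        weightedSq_dualWeight_le _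
    _ ≤ (2 / S.κ : ℝ≥0) * weightedSq 1
          (fun n => S.K * (1 + S.β) * firstOrderConv (‖c ·‖ₑ) (‖c ·‖ₑ) n) := by
        gcongr
        exact weightedSq_mono (fun _ _ => le_rfl) fun n => enorm_tsum_le_tsum_enorm.trans
          (tsum_enorm_quad_le (fun _ => le_rfl) (fun _ => le_rfl) n)
    _ ≤ _ := by
        rw [weightedSq_const_mul]
        gcongr
        exact weightedSq_firstOrderConv_le (by simp [h0]) (by simp [h0])

end QuadraticSystem

/-! ### Decay -/

lemma lintegral_Ioi_le {D : ℝ → ℝ≥0∞} {B : ℝ≥0∞}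
    (h : ∀ t, 0 ≤ t → ∫⁻ τ in Set.Ioc 0 t, D τ ≤ B) : ∫⁻ τ in Set.Ioi 0, D τ ≤ B := by
  have hunion : Set.Ioi (0 : ℝ) = ⋃ k : ℕ, Set.Ioc 0 (k : ℝ) := by
    ext x
    simp only [Set.mem_Ioi, Set.mem_iUnion, Set.mem_Ioc]
    exact ⟨fun hx => (exists_nat_ge x).imp fun k hk => ⟨hx, hk⟩, fun ⟨_, hx, _⟩ => hx⟩
  have hmono : Monotone fun k : ℕ => Set.Ioc (0 : ℝ) k := fun i j hij =>
    Set.Ioc_subset_Ioc_right (by exact_mod_cast hij)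
  rw [hunion, MeasureTheory.setLIntegral_iUnion_of_directed _ hmono.directed_le]
  exact iSup_le fun k => h k k.cast_nonneg

lemma tendsto_zero_of_antitoneOn_of_lintegral_ne_top {E : ℝ → ℝ≥0∞}
    (hE : AntitoneOn E (Set.Ici 0)) (hfin : ∫⁻ τ in Set.Ioi 0, E τ ≠ ∞) :
    Tendsto E atTop (nhds 0) := by
  have hbound {t : ℝ} (ht : 0 < t) : E t ≤ (∫⁻ τ in Set.Ioi 0, E τ) / ENNReal.ofReal t := by
    rw [ENNReal.le_div_iff_mul_le (by simp [ht]) (by simp)]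
    calc E t * ENNReal.ofReal t = ∫⁻ _ in Set.Ioc 0 t, E t := by simp
      _ ≤ ∫⁻ τ in Set.Ioc 0 t, E τ := MeasureTheory.setLIntegral_mono' measurableSet_Ioc
          fun τ hτ => hE hτ.1.le ht.le hτ.2
      _ ≤ ∫⁻ τ in Set.Ioi 0, E τ := MeasureTheory.lintegral_mono_set Set.Ioc_subset_Ioi_self
  have hlim : Tendsto (fun t => (∫⁻ τ in Set.Ioi 0, E τ) / ENNReal.ofReal t) atTop (nhds 0) := by
    simpa using ENNReal.Tendsto.const_div ENNReal.tendsto_ofReal_atTop (.inr hfin)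
  refine tendsto_of_tendsto_of_tendsto_of_le_of_le' tendsto_const_nhds hlim
    (Eventually.of_forall fun _ => zero_le) ?_
  filter_upwards [eventually_gt_atTop 0] with t ht using hbound ht

namespace QuadraticSystem.IsSolution
variable {S : QuadraticSystem} {c : ℝ → ℤ → ℂ} {M : ℝ≥0∞} {s t : ℝ}

lemma continuousOn (hc : S.IsSolution c) (n : ℤ) : ContinuousOn (fun t => c t n) (Set.Ici 0) :=
  HasDerivAt.continuousOn fun _ ht => hc.hasDerivAt ht n

lemma sobolevSq_add_lintegral_le (hc : S.IsSolution c) (hs : 0 ≤ s) (hst : s ≤ t) :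
    sobolevSq 1 (c t) + ∫⁻ τ in Set.Ioc s t, S.dissipation (c τ)
      ≤ sobolevSq 1 (c s) + ∫⁻ τ in Set.Ioc s t, S.forcing (S.quad (c τ) (c τ)) := by
  have hsub : Set.Icc s t ⊆ Set.Ici 0 := fun τ hτ => hs.trans hτ.1
  simp only [dissipation, forcing]
  rw [lintegral_weightedSq fun n => (hc.continuousOn n).mono hsub,
    lintegral_weightedSq fun n => (hc.continuousOn_quad n).mono hsub,
    sobolevSq, sobolevSq, weightedSq, weightedSq, ← ENNReal.tsum_add, ← ENNReal.tsum_add]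
  refine ENNReal.tsum_le_tsum fun n => ?_
  rcases eq_or_ne n 0 with rfl | hn
  · simp [damping, (hc.realZeroMean (hs.trans hst)).1]
  have hmode := mode_energy_le_enorm (damping_ne_zero hn) (ℓ_re_le_damping n) hst
    (fun τ hτ => hc.hasDerivAt (hsub hτ) n) ((hc.continuousOn_quad n).mono hsub)
  have hweight : (S.dualWeight n : ℝ≥0∞)
      = ((1 + ‖n‖₊ ^ 2 : ℝ≥0) : ℝ≥0∞) * (S.damping n : ℝ≥0∞)⁻¹ := by
    rw [← ENNReal.coe_inv (damping_ne_zero hn), ← ENNReal.coe_mul, dualWeight, div_eq_mul_inv]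
  rw [hweight, pow_one, ENNReal.coe_mul, mul_assoc, mul_assoc, ← mul_add, ← mul_add]
  gcongr

lemma two_mul_sobolevSq_add_lintegral_le (hc : S.IsSolution c)
    (hM : ∀ t, 0 ≤ t → gradSq (‖c t ·‖ₑ) ≤ M) (hfin : M ≠ ∞)
    (hsmall : (16 * S.K) ^ 2 * M ≤ S.κ ^ 2) (hs : 0 ≤ s) (hst : s ≤ t) :
    2 * sobolevSq 1 (c t) + ∫⁻ τ in Set.Ioc s t, S.dissipation (c τ) ≤ 2 * sobolevSq 1 (c s) := by
  set D := ∫⁻ τ in Set.Ioc s t, S.dissipation (c τ)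
  set F := ∫⁻ τ in Set.Ioc s t, S.forcing (S.quad (c τ) (c τ))
  have hmean {τ : ℝ} (hτ : 0 ≤ τ) : c τ 0 = 0 := (hc.realZeroMean hτ).1
  have hbalance : sobolevSq 1 (c t) + D ≤ sobolevSq 1 (c s) + F :=
    hc.sobolevSq_add_lintegral_le hs hst
  have hFD : 2 * F ≤ D := by
    rw [← MeasureTheory.lintegral_const_mul' _ _ ENNReal.ofNat_ne_top]
    refine MeasureTheory.setLIntegral_mono' measurableSet_Ioc fun τ hτ => ?_
    have hτ0 : 0 ≤ τ := hs.trans hτ.1.le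
    exact two_mul_forcing_quad_le (hmean hτ0) ((mul_le_mul_right (hM τ hτ0) _).trans hsmall)
  have hF : F ≠ ∞ := by
    refine ne_top_of_le_ne_top ?_ (MeasureTheory.setLIntegral_mono' measurableSet_Ioc
      fun τ hτ => (forcing_quad_le_gradSq (hmean (hs.trans hτ.1.le))).trans
        (mul_le_mul_right (mul_le_mul_right (mul_le_mul_right (mul_le_mul'
          (hM τ (hs.trans hτ.1.le)) (hM τ (hs.trans hτ.1.le))) _) _) _))
    rw [MeasureTheory.setLIntegral_const, Real.volume_Ioc]
    finiteness
  have hE : sobolevSq 1 (c s) ≠ ∞ := ne_top_of_le_ne_top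
    (ENNReal.mul_ne_top ENNReal.ofNat_ne_top (ne_top_of_le_ne_top hfin (hM s hs)))
    (sobolevSq_one_le (hmean hs))
  have hD : D ≠ ∞ := ne_top_of_le_ne_top (by finiteness) (le_add_self.trans hbalance)
  refine (ENNReal.add_le_add_iff_right hD).1 ?_
  calc 2 * sobolevSq 1 (c t) + D + D = 2 * (sobolevSq 1 (c t) + D) := by ring
    _ ≤ 2 * (sobolevSq 1 (c s) + F) := by gcongr
    _ = 2 * sobolevSq 1 (c s) + 2 * F := mul_add _ _ _
    _ ≤ 2 * sobolevSq 1 (c s) + D := by gcongr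

end QuadraticSystem.IsSolution

/-- `c` stays in `H¹` with nonincreasing norm, and it is square integrable in time with values in
`H²`. -/
structure IsDissipative (c : ℝ → ℤ → ℂ) : Prop where
  sobolevSq_one_ne_top {t : ℝ} (ht : 0 ≤ t) : sobolevSq 1 (c t) ≠ ∞
  antitoneOn : AntitoneOn (fun t => sobolevSq 1 (c t)) (Set.Ici 0)
  lintegral_ne_top : ∫⁻ t in Set.Ioi 0, sobolevSq 2 (c t) ≠ ∞

namespace IsDissipative
variable {c : ℝ → ℤ → ℂ} (hc : IsDissipative c)
include hc

lemma sqrt_H1sq_le {s t : ℝ} (hs : 0 ≤ s) (hst : s ≤ t) :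
    √(H1sq (c t)) ≤ √(H1sq (c s)) := by
  rw [H1sq_eq, H1sq_eq]
  exact Real.sqrt_le_sqrt <| ENNReal.toReal_mono (hc.sobolevSq_one_ne_top hs)
    (hc.antitoneOn hs (hs.trans hst) hst)

lemma integrableOn_H2sq (hcont : ∀ n, ContinuousOn (fun t => c t n) (Set.Ici 0)) :
    MeasureTheory.IntegrableOn (fun t => H2sq (c t)) (Set.Ici 0) := by
  rw [integrableOn_Ici_iff_integrableOn_Ioi]
  simp only [H2sq_eq]
  refine MeasureTheory.integrable_toReal_of_lintegral_ne_top ?_ hc.lintegral_ne_top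
  refine AEMeasurable.tsum fun n => AEMeasurable.const_mul ?_ _
  exact (((hcont n).mono Set.Ioi_subset_Ici_self).aemeasurable measurableSet_Ioi).enorm.pow_const 2

lemma tendsto_sqrt_H1sq : Tendsto (fun t => √(H1sq (c t))) atTop (nhds 0) := by
  have hfin : ∫⁻ t in Set.Ioi 0, sobolevSq 1 (c t) ≠ ∞ := ne_top_of_le_ne_top hc.lintegral_ne_top
    (MeasureTheory.lintegral_mono fun t => sobolevSq_mono one_le_two)
  have hlim := tendsto_zero_of_antitoneOn_of_lintegral_ne_top hc.antitoneOn hfin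
  simpa [H1sq_eq] using ((ENNReal.tendsto_toReal ENNReal.zero_ne_top).comp hlim).sqrt

end IsDissipative

namespace QuadraticSystem
variable {S : QuadraticSystem}

lemma IsSolution.isDissipative {c : ℝ → ℤ → ℂ} {M : ℝ≥0∞} (hc : S.IsSolution c)
    (hM : ∀ t, 0 ≤ t → gradSq (‖c t ·‖ₑ) ≤ M) (hfin : M ≠ ∞)
    (hsmall : (16 * S.K) ^ 2 * M ≤ S.κ ^ 2) : IsDissipative c := by
  have henergy {s t : ℝ} (hs : 0 ≤ s) (hst : s ≤ t) :=
    hc.two_mul_sobolevSq_add_lintegral_le hM hfin hsmall hs hst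
  have htop {t : ℝ} (ht : 0 ≤ t) : sobolevSq 1 (c t) ≠ ∞ := ne_top_of_le_ne_top
    (ENNReal.mul_ne_top ENNReal.ofNat_ne_top (ne_top_of_le_ne_top hfin (hM t ht)))
    (sobolevSq_one_le (hc.realZeroMean ht).1)
  refine ⟨htop, fun s hs t _ hst => ?_, ?_⟩
  · exact (ENNReal.mul_le_mul_iff_right two_ne_zero ENNReal.ofNat_ne_top).1
      (le_self_add.trans (henergy hs hst))
  have hdiss : ∫⁻ t in Set.Ioi 0, S.dissipation (c t) ≤ 2 * sobolevSq 1 (c 0) :=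
    lintegral_Ioi_le fun t ht => le_add_self.trans (henergy le_rfl ht)
  refine ne_top_of_le_ne_top (b := (2 / S.κ : ℝ≥0) * (2 * sobolevSq 1 (c 0)))
    (by have := htop le_rfl; finiteness) ?_
  calc ∫⁻ t in Set.Ioi 0, sobolevSq 2 (c t)
      ≤ ∫⁻ t in Set.Ioi 0, (2 / S.κ : ℝ≥0) * S.dissipation (c t) :=
        MeasureTheory.setLIntegral_mono' measurableSet_Ioi fun t ht =>
          sobolevSq_two_le (hc.realZeroMean (le_of_lt ht)).1
    _ = (2 / S.κ : ℝ≥0) * ∫⁻ t in Set.Ioi 0, S.dissipation (c t) :=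
        MeasureTheory.lintegral_const_mul' _ _ ENNReal.coe_ne_top
    _ ≤ (2 / S.κ : ℝ≥0) * (2 * sobolevSq 1 (c 0)) := by gcongr

theorem exists_isSolution_isDissipative {f₀ : ℤ → ℂ} (hf₀ : RealZeroMean f₀)
    (hsum : Summable fun n : ℤ => (1 + (n : ℝ) ^ 2) * ‖f₀ n‖ ^ 2)
    (hsmall : √(H1sq f₀) * (32 * S.K) ≤ S.κ) :
    ∃ c, c 0 = f₀ ∧ S.IsSolution c ∧ IsDissipative c := by
  have hgrad : gradSq (‖f₀ ·‖ₑ) ≤ ENNReal.ofReal (H1sq f₀) :=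
    gradSq_le_sobolevSq_one.trans (sobolevSq_one_eq_ofReal hsum).le
  have hfin : gradSq (‖f₀ ·‖ₑ) ≠ ∞ := ne_top_of_le_ne_top ENNReal.ofReal_ne_top hgrad
  have hnonneg : 0 ≤ H1sq f₀ := tsum_nonneg fun n => by positivity
  have hdatum : (32 * S.K) ^ 2 * gradSq (‖f₀ ·‖ₑ) ≤ S.κ ^ 2 :=
    calc (32 * S.K) ^ 2 * gradSq (‖f₀ ·‖ₑ)
        ≤ (32 * S.K) ^ 2 * ENNReal.ofReal (H1sq f₀) := by gcongr
      _ = ENNReal.ofReal ((√(H1sq f₀) * (32 * S.K)) ^ 2) := by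
          rw [mul_pow √_, Real.sq_sqrt hnonneg, ENNReal.ofReal_mul hnonneg, mul_comm,
            ENNReal.ofReal_pow (by positivity), ENNReal.ofReal_mul (by norm_num),
            ENNReal.ofReal_ofNat, ENNReal.ofReal_coe_nnreal]
      _ ≤ ENNReal.ofReal (S.κ ^ 2) := ENNReal.ofReal_le_ofReal (by gcongr)
      _ = S.κ ^ 2 := by rw [ENNReal.ofReal_pow S.κ.coe_nonneg, ENNReal.ofReal_coe_nnreal]
  obtain ⟨c, hinit, hc, hM⟩ := exists_isSolution hf₀ hfin hdatum
  refine ⟨c, hinit, hc, hc.isDissipative hM (by finiteness) (hdatum.trans' (le_of_eq ?_))⟩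
  ring

end QuadraticSystem

/-! ### The symbols of equation (U) -/

section Symbols

lemma Dsym_neg (n : ℤ) : Dsym (-n) = starRingEnd ℂ (Dsym n) := by simp [Dsym]

lemma Hsym_neg (n : ℤ) : Hsym (-n) = starRingEnd ℂ (Hsym n) := by simp [Hsym]

lemma Lsym_neg (n : ℤ) : Lsym (-n) = starRingEnd ℂ (Lsym n) := by simp [Lsym]

lemma invLsym_neg (n : ℤ) : invLsym (-n) = starRingEnd ℂ (invLsym n) := by
  by_cases hn : n = 0 <;> simp [invLsym, hn]

lemma Nsym_neg (a : ℝ) (n : ℤ) : Nsym a (-n) = starRingEnd ℂ (Nsym a n) := by simp [Nsym]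

lemma norm_Dsym (n : ℤ) : ‖Dsym n‖ = ‖n‖ := by simp [Dsym, Int.norm_eq_abs]

lemma norm_Lsym (n : ℤ) : ‖Lsym n‖ = ‖n‖ := by simp [Lsym, Int.norm_eq_abs]

lemma norm_Hsym_le_one (n : ℤ) : ‖Hsym n‖ ≤ 1 := by
  rcases lt_trichotomy n 0 with hn | hn | hn
  · simp [Hsym, Int.sign_eq_neg_one_of_neg hn]
  · simp [Hsym, hn]
  · simp [Hsym, Int.sign_eq_one_of_pos hn]

lemma norm_Hsym_sub_le (n k : ℤ) : ‖Hsym n - Hsym k‖ ≤ 2 :=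
  calc ‖Hsym n - Hsym k‖ ≤ ‖Hsym n‖ + ‖Hsym k‖ := norm_sub_le _ _
    _ ≤ 1 + 1 := add_le_add (norm_Hsym_le_one n) (norm_Hsym_le_one k)
    _ = 2 := one_add_one_eq_two

lemma norm_invLsym (m : ℤ) : ‖invLsym m‖ = ‖m‖⁻¹ := by
  by_cases hm : m = 0 <;> simp [invLsym, hm, Int.norm_eq_abs]

lemma norm_mul_norm_invLsym_le_one (m : ℤ) : ‖m‖ * ‖invLsym m‖ ≤ 1 := by
  rw [norm_invLsym]
  exact mul_inv_le_one

lemma one_le_norm_int {n : ℤ} (hn : n ≠ 0) : 1 ≤ ‖n‖ := by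
  rw [Int.norm_eq_abs]
  exact_mod_cast Int.one_le_abs hn

lemma norm_invLsym_le (m : ℤ) : ‖invLsym m‖ ≤ ‖m‖ := by
  rw [norm_invLsym]
  rcases eq_or_ne m 0 with rfl | hm
  · simp
  · exact (inv_le_one_of_one_le₀ (one_le_norm_int hm)).trans (one_le_norm_int hm)

/-- The commutator with the Hilbert transform only sees output and second input frequencies of
different signs, and these are both bounded by their difference. -/
lemma norm_le_of_Hsym_ne {n m : ℤ} (h : Hsym n - Hsym (n - m) ≠ 0) :
    ‖n - m‖ ≤ ‖m‖ ∧ ‖n‖ ≤ ‖m‖ := by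
  have hsign : n.sign ≠ (n - m).sign := fun hs => h (by simp [Hsym, hs])
  have habs : |n - m| ≤ |m| ∧ |n| ≤ |m| := by
    rcases lt_trichotomy n 0 with hn | hn | hn <;>
      rcases lt_trichotomy (n - m) 0 with hk | hk | hk <;>
      grind [Int.sign_eq_neg_one_of_neg, Int.sign_eq_one_of_pos]
  simp only [Int.norm_eq_abs]
  exact_mod_cast habs

lemma norm_Hsym_sub_mul_invLsym_le (n m : ℤ) :
    ‖(Hsym n - Hsym (n - m)) * invLsym m‖ ≤ 2 * ‖m‖ := by
  rw [norm_mul]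
  exact mul_le_mul (norm_Hsym_sub_le _ _) (norm_invLsym_le m) (norm_nonneg _) zero_le_two

lemma norm_Hsym_sub_mul_invLsym_mul_sq_le (n m : ℤ) :
    ‖(Hsym n - Hsym (n - m)) * invLsym m * ((n - m : ℤ) : ℂ) ^ 2‖ ≤ 2 * ‖n - m‖ := by
  rcases eq_or_ne (Hsym n - Hsym (n - m)) 0 with h | h
  · simp [h]
  rw [norm_mul, norm_mul, norm_pow, Complex.norm_intCast, ← Int.norm_eq_abs]
  calc ‖Hsym n - Hsym (n - m)‖ * ‖invLsym m‖ * ‖n - m‖ ^ 2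
      = ‖Hsym n - Hsym (n - m)‖ * (‖n - m‖ * ‖invLsym m‖) * ‖n - m‖ := by ring
    _ ≤ 2 * (‖m‖ * ‖invLsym m‖) * ‖n - m‖ := by
        gcongr
        exacts [norm_Hsym_sub_le _ _, (norm_le_of_Hsym_ne h).1]
    _ ≤ 2 * 1 * ‖n - m‖ := by gcongr; exact norm_mul_norm_invLsym_le_one m
    _ = 2 * ‖n - m‖ := by ring

lemma norm_Hsym_sub_mul_Dsym_le (n m : ℤ) :
    ‖(Hsym n - Hsym (n - m)) * Dsym (n - m)‖ ≤ 2 * ‖n - m‖ := by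
  rw [norm_mul, norm_Dsym]
  gcongr
  exact norm_Hsym_sub_le _ _

lemma norm_Dsym_sq_sub_mul_invLsym_le (n m : ℤ) :
    ‖(Dsym n ^ 2 - Dsym (n - m) ^ 2) * invLsym m‖ ≤ 2 * (‖m‖ + ‖n - m‖) := by
  have hfactor : Dsym n ^ 2 - Dsym (n - m) ^ 2 = Dsym m * (Dsym m + 2 * Dsym (n - m)) := by
    simp only [Dsym]; push_cast; ring
  have hsum : ‖Dsym m + 2 * Dsym (n - m)‖ ≤ ‖m‖ + 2 * ‖n - m‖ :=
    (norm_add_le _ _).trans_eq (by rw [norm_mul, norm_Dsym, norm_Dsym, Complex.norm_ofNat])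
  rw [hfactor, norm_mul, norm_mul, norm_Dsym]
  calc ‖m‖ * ‖Dsym m + 2 * Dsym (n - m)‖ * ‖invLsym m‖
      = (‖m‖ * ‖invLsym m‖) * ‖Dsym m + 2 * Dsym (n - m)‖ := by ring
    _ ≤ 1 * (‖m‖ + 2 * ‖n - m‖) := by
        gcongr
        exact norm_mul_norm_invLsym_le_one m
    _ ≤ 2 * (‖m‖ + ‖n - m‖) := by linarith [norm_nonneg m]

lemma Nsym_eq (a : ℝ) (n : ℤ) :
    Nsym a n = ((1 + a ^ 2 * ‖n‖ ^ 2)⁻¹ : ℝ) * (1 - (a * n : ℝ) * Complex.I) := by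
  rw [Nsym, div_eq_inv_mul, Int.norm_eq_abs, sq_abs]
  push_cast
  ring

lemma norm_Nsym_sq_mul (a : ℝ) (n : ℤ) : ‖Nsym a n‖ ^ 2 * (1 + a ^ 2 * ‖n‖ ^ 2) = 1 := by
  have hnorm : ‖1 - ((a * n : ℝ) : ℂ) * Complex.I‖ ^ 2 = 1 + a ^ 2 * ‖n‖ ^ 2 := by
    rw [Complex.sq_norm, Complex.normSq_apply, Int.norm_eq_abs, sq_abs]
    simp only [Complex.ofReal_mul, Complex.ofReal_intCast, Complex.sub_re, Complex.one_re,
      Complex.mul_re, Complex.ofReal_re, Complex.intCast_re, Complex.ofReal_im, Complex.intCast_im,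
      mul_zero, sub_zero, Complex.I_re, Complex.mul_im, zero_mul, add_zero, Complex.I_im, mul_one,
      sub_self, Complex.sub_im, Complex.one_im, zero_sub, mul_neg, neg_mul, neg_neg]
    ring
  have : 0 < 1 + a ^ 2 * ‖n‖ ^ 2 := by positivity
  rw [Nsym_eq, norm_mul, mul_pow, hnorm, Complex.norm_real, Real.norm_of_nonneg (by positivity)]
  field_simp

lemma norm_Nsym_le_one (a : ℝ) (n : ℤ) : ‖Nsym a n‖ ≤ 1 := by
  rw [← sq_le_one_iff₀ (norm_nonneg _), ← norm_Nsym_sq_mul a n]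
  exact le_mul_of_one_le_right (by positivity) (le_add_of_nonneg_right (by positivity))

lemma norm_Nsym_mul_norm_le {a : ℝ} (ha : 0 < a) (n : ℤ) : ‖Nsym a n‖ * ‖n‖ ≤ a⁻¹ := by
  rw [← one_div, le_div_iff₀ ha, ← sq_le_one_iff₀ (by positivity), ← norm_Nsym_sq_mul a n]
  linarith [sq_nonneg ‖Nsym a n‖]

/-- `𝒩` gains the derivative that an operator of order one loses. -/
lemma norm_Nsym_mul_mul_le {a : ℝ} (ha : 0 < a) {n : ℤ} {s z : ℂ} {r : ℝ} (hs : ‖s‖ = ‖n‖)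
    (hz : ‖z‖ ≤ r) : ‖Nsym a n * (s * z)‖ ≤ a⁻¹ * r := by
  rw [norm_mul, norm_mul, hs, ← mul_assoc]
  exact mul_le_mul (norm_Nsym_mul_norm_le ha n) hz (norm_nonneg _) (by positivity)

lemma Nsym_mul_re (a : ℝ) (n : ℤ) (p q : ℝ) :
    (Nsym a n * (p + q * Complex.I)).re = (p + a * n * q) / (1 + a ^ 2 * ‖n‖ ^ 2) := by
  rw [Nsym_eq, mul_assoc, Complex.re_ofReal_mul, div_eq_inv_mul]
  simp

end Symbols

/-! ### Equation (U) as a damped quadratic system -/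

/-- The symbol of the linear part of (U). -/
def linSymbol (α₁ α₂ β : ℝ) (n : ℤ) : ℂ :=
  1 / 2 * (Nsym ((α₁ + α₂) / 2) n *
    (Dsym n + ((α₁ : ℂ) + (α₂ : ℂ)) * Dsym n ^ 2 + Hsym n
      - (β : ℂ) * Hsym n * Dsym n ^ 2 + (α₁ : ℂ) * (α₂ : ℂ) * Dsym n ^ 3))

/-- The kernel of the part of the nonlinearity of (U) that does not involve `β`. -/
def gravityKernel (α₁ α₂ : ℝ) (n m : ℤ) : ℂ :=
  -(1 / 2) * (Nsym ((α₁ + α₂) / 2) n *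
    (2 * Dsym (n - m)
      + Lsym n * ((Hsym n - Hsym (n - m)) * invLsym m)
      - (α₂ : ℂ) * (Lsym n * ((Hsym n - Hsym (n - m)) * Dsym (n - m)))
      + (α₂ : ℂ) * (Dsym n * Dsym (n - m))
      + (α₁ : ℂ) * (Lsym n * ((Dsym n ^ 2 - Dsym (n - m) ^ 2) * invLsym m))))

/-- The kernel of the part of the nonlinearity of (U) carrying the factor `β`. -/
def tensionKernel (α₁ α₂ : ℝ) (n m : ℤ) : ℂ :=
  -(1 / 2) * (Nsym ((α₁ + α₂) / 2) n *
    (Lsym n * ((Hsym n - Hsym (n - m)) * invLsym m * ((n - m : ℤ) : ℂ) ^ 2)))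

/-- A damping rate for the linear part of (U) valid for every `β`. -/
def dampingRate (α₁ α₂ : ℝ) : ℝ :=
  min (α₁ * α₂ / (α₁ + α₂)) ((α₁ + α₂) / 2 / (2 * (1 + ((α₁ + α₂) / 2) ^ 2)))

/-- A bound for the kernels of (U). -/
def kernelBound (α₁ α₂ : ℝ) : ℝ := 4 + ((α₁ + α₂) / 2)⁻¹

section Coefficients
variable {α₁ α₂ β : ℝ}

lemma linSymbol_re (α₁ α₂ β : ℝ) (n : ℤ) :
    (linSymbol α₁ α₂ β n).re = -((α₁ + α₂) / 2 / 2
      * (‖n‖ ^ 2 + ‖n‖ + β * ‖n‖ ^ 3 + α₁ * α₂ * ‖n‖ ^ 4)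
      / (1 + ((α₁ + α₂) / 2) ^ 2 * ‖n‖ ^ 2)) := by
  have hsign : ‖n‖ = n * n.sign := by
    rw [Int.norm_eq_abs]
    exact_mod_cast (Int.mul_sign_self n).symm ▸ (Int.natCast_natAbs n).symm
  have hsq : ‖n‖ ^ 2 = (n : ℝ) ^ 2 := by rw [Int.norm_eq_abs, sq_abs]
  have hI : Complex.I ^ 3 = -Complex.I := Complex.I_pow_three
  have hbracket : Dsym n + ((α₁ : ℂ) + α₂) * Dsym n ^ 2 + Hsym n - β * Hsym n * Dsym n ^ 2
        + α₁ * α₂ * Dsym n ^ 3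
      = ((-(α₁ + α₂) * n ^ 2 : ℝ) : ℂ)
        + ((n - n.sign - β * n.sign * n ^ 2 - α₁ * α₂ * n ^ 3 : ℝ) : ℂ) * Complex.I := by
    simp only [Dsym, Hsym, mul_pow, Complex.I_sq, hI]
    push_cast
    ring
  have hhalf : (1 / 2 : ℂ) = ((1 / 2 : ℝ) : ℂ) := by norm_num
  rw [linSymbol, hbracket, hhalf, Complex.re_ofReal_mul, Nsym_mul_re, ← neg_div, ← mul_div_assoc]
  congr 1
  rw [pow_succ ‖n‖ 2, show ‖n‖ ^ 4 = (‖n‖ ^ 2) ^ 2 by ring, hsq, hsign]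
  ring

lemma dampingRate_pos (h₁ : 0 < α₁) (h₂ : 0 < α₂) : 0 < dampingRate α₁ α₂ :=
  lt_min (by positivity) (by positivity)

lemma kernelBound_pos (h₁ : 0 < α₁) (h₂ : 0 < α₂) : 0 < kernelBound α₁ α₂ := by
  rw [kernelBound]; positivity

lemma linSymbol_re_le (h₁ : 0 < α₁) (h₂ : 0 < α₂) (hβ : 0 ≤ β) (n : ℤ) :
    (linSymbol α₁ α₂ β n).re ≤ -(dampingRate α₁ α₂ * (‖n‖ ^ 2 + β * ‖n‖)) := by
  rcases eq_or_ne n 0 with rfl | hn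
  · simp [linSymbol_re]
  rw [linSymbol_re, neg_le_neg_iff, le_div_iff₀ (by positivity)]
  have hκ₁ : dampingRate α₁ α₂ ≤ α₁ * α₂ / (α₁ + α₂) := min_le_left _ _
  have hκ₂ : dampingRate α₁ α₂ ≤ (α₁ + α₂) / 2 / (2 * (1 + ((α₁ + α₂) / 2) ^ 2)) :=
    min_le_right _ _
  rw [le_div_iff₀ (by positivity)] at hκ₁ hκ₂
  have hκ := dampingRate_pos h₁ h₂
  have hx : 1 ≤ ‖n‖ ^ 2 := one_le_pow₀ (one_le_norm_int hn)
  set κ := dampingRate α₁ α₂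
  set a := (α₁ + α₂) / 2 with ha
  have : 0 < a := by positivity
  set x := ‖n‖
  have hlow : κ ≤ a / 2 := by nlinarith [mul_nonneg hκ.le (sq_nonneg a)]
  have hhigh : κ * a ^ 2 ≤ a / 2 * (α₁ * α₂) := by nlinarith
  have htension : κ * (1 + a ^ 2 * x ^ 2) ≤ a / 2 * x ^ 2 :=
    calc κ * (1 + a ^ 2 * x ^ 2) ≤ κ * (x ^ 2 + a ^ 2 * x ^ 2) := by gcongr
      _ = κ * (2 * (1 + a ^ 2)) / 2 * x ^ 2 := by ring
      _ ≤ a / 2 * x ^ 2 := by gcongr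
  calc κ * (x ^ 2 + β * x) * (1 + a ^ 2 * x ^ 2)
      = κ * x ^ 2 + κ * a ^ 2 * x ^ 4 + β * x * (κ * (1 + a ^ 2 * x ^ 2)) := by ring
    _ ≤ a / 2 * x ^ 2 + a / 2 * (α₁ * α₂) * x ^ 4 + β * x * (a / 2 * x ^ 2) := by gcongr
    _ ≤ a / 2 * x ^ 2 + a / 2 * (α₁ * α₂) * x ^ 4 + β * x * (a / 2 * x ^ 2) + a / 2 * x :=
        le_add_of_nonneg_right (by positivity)
    _ = a / 2 * (x ^ 2 + x + β * x ^ 3 + α₁ * α₂ * x ^ 4) := by ring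

lemma two_mul_norm_gravityKernel_le (h₁ : 0 < α₁) (h₂ : 0 < α₂) (n m : ℤ) :
    2 * ‖gravityKernel α₁ α₂ n m‖ ≤ 2 * ‖n - m‖ + ((α₁ + α₂) / 2)⁻¹ * (2 * ‖m‖)
      + α₂ * (((α₁ + α₂) / 2)⁻¹ * (2 * ‖n - m‖)) + α₂ * (((α₁ + α₂) / 2)⁻¹ * ‖n - m‖)
      + α₁ * (((α₁ + α₂) / 2)⁻¹ * (2 * (‖m‖ + ‖n - m‖))) := by
  have ha : 0 < (α₁ + α₂) / 2 := by positivity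
  have hconv : ‖Nsym ((α₁ + α₂) / 2) n * (2 * Dsym (n - m))‖ ≤ 2 * ‖n - m‖ := by
    rw [norm_mul, norm_mul, norm_Dsym, Complex.norm_ofNat]
    exact mul_le_of_le_one_left (by positivity) (norm_Nsym_le_one _ n)
  have hHinvL := norm_Nsym_mul_mul_le ha (norm_Lsym n) (norm_Hsym_sub_mul_invLsym_le n m)
  have hHD := norm_Nsym_mul_mul_le ha (norm_Lsym n) (norm_Hsym_sub_mul_Dsym_le n m)
  have hDD := norm_Nsym_mul_mul_le ha (norm_Dsym n) (norm_Dsym (n - m)).le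
  have hDinvL := norm_Nsym_mul_mul_le ha (norm_Lsym n) (norm_Dsym_sq_sub_mul_invLsym_le n m)
  rw [gravityKernel, norm_mul, norm_neg, show ‖(1 / 2 : ℂ)‖ = 1 / 2 by norm_num, ← mul_assoc,
    mul_one_div_cancel two_ne_zero, one_mul, mul_add, mul_add, mul_sub, mul_add,
    mul_left_comm _ (α₂ : ℂ), mul_left_comm _ (α₂ : ℂ), mul_left_comm _ (α₁ : ℂ)]
  refine norm_add_le_of_le (norm_add_le_of_le (norm_sub_le_of_le
    (norm_add_le_of_le hconv hHinvL) ?_) ?_) ?_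
  all_goals
    rw [norm_mul, Complex.norm_real, Real.norm_of_nonneg (by positivity)]
    gcongr

lemma norm_gravityKernel_le (h₁ : 0 < α₁) (h₂ : 0 < α₂) (n m : ℤ) :
    ‖gravityKernel α₁ α₂ n m‖ ≤ kernelBound α₁ α₂ * (‖m‖ + ‖n - m‖) := by
  have ha : 0 < (α₁ + α₂) / 2 := by positivity
  have hα : (2 * α₁ + 3 * α₂) * ((α₁ + α₂) / 2)⁻¹ ≤ 6 := by
    rw [← div_eq_mul_inv, div_le_iff₀ ha]
    linarith
  have hsplit := two_mul_norm_gravityKernel_le h₁ h₂ n m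
  set A := ((α₁ + α₂) / 2)⁻¹ with hA
  have hslack : 0 ≤ ‖m‖ + A * ‖n - m‖ + 3 / 2 * (α₂ * A * ‖m‖) := by positivity
  calc ‖gravityKernel α₁ α₂ n m‖ ≤ (1 + A + (2 * α₁ + 3 * α₂) * A / 2) * (‖m‖ + ‖n - m‖) := by
        linarith
    _ ≤ (1 + A + 6 / 2) * (‖m‖ + ‖n - m‖) := by gcongr
    _ = kernelBound α₁ α₂ * (‖m‖ + ‖n - m‖) := by rw [kernelBound, ← hA]; ring

lemma norm_tensionKernel_le (h₁ : 0 < α₁) (h₂ : 0 < α₂) (n m : ℤ) :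
    ‖tensionKernel α₁ α₂ n m‖ ≤ kernelBound α₁ α₂ * ‖n - m‖ := by
  have ha : 0 < (α₁ + α₂) / 2 := by positivity
  have hbound := norm_Nsym_mul_mul_le ha (norm_Lsym n) (norm_Hsym_sub_mul_invLsym_mul_sq_le n m)
  rw [tensionKernel, norm_mul, norm_neg, show ‖(1 / 2 : ℂ)‖ = 1 / 2 by norm_num, kernelBound]
  linarith [norm_nonneg (n - m)]

lemma norm_mul_norm_tensionKernel_sq_le (h₁ : 0 < α₁) (h₂ : 0 < α₂) (n m : ℤ) :
    ‖n‖ * ‖tensionKernel α₁ α₂ n m‖ ^ 2 ≤ kernelBound α₁ α₂ ^ 2 * ‖m‖ ^ 3 := by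
  rcases eq_or_ne (Hsym n - Hsym (n - m)) 0 with h | h
  · rw [tensionKernel, h]
    simp only [zero_mul, mul_zero, norm_zero, zero_pow two_ne_zero]
    positivity
  have hK := kernelBound_pos h₁ h₂
  obtain ⟨hnm, hn⟩ := norm_le_of_Hsym_ne h
  calc ‖n‖ * ‖tensionKernel α₁ α₂ n m‖ ^ 2 ≤ ‖m‖ * (kernelBound α₁ α₂ * ‖m‖) ^ 2 := by
        gcongr
        exact (norm_tensionKernel_le h₁ h₂ n m).trans (by gcongr)
    _ = kernelBound α₁ α₂ ^ 2 * ‖m‖ ^ 3 := by ring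

lemma linSymbol_neg (n : ℤ) :
    linSymbol α₁ α₂ β (-n) = starRingEnd ℂ (linSymbol α₁ α₂ β n) := by
  simp [linSymbol, Dsym_neg, Hsym_neg, Nsym_neg, Complex.conj_ofNat]

lemma gravityKernel_neg (n m : ℤ) :
    gravityKernel α₁ α₂ (-n) (-m) = starRingEnd ℂ (gravityKernel α₁ α₂ n m) := by
  have hsub : -n - -m = -(n - m) := by ring
  simp [gravityKernel, hsub, Dsym_neg, Hsym_neg, Lsym_neg, invLsym_neg, Nsym_neg,
    Complex.conj_ofNat, -neg_sub]

lemma tensionKernel_neg (n m : ℤ) :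
    tensionKernel α₁ α₂ (-n) (-m) = starRingEnd ℂ (tensionKernel α₁ α₂ n m) := by
  have hsub : -n - -m = -(n - m) := by ring
  rw [tensionKernel, tensionKernel, hsub, Int.cast_neg, neg_sq]
  simp [Hsym_neg, Lsym_neg, invLsym_neg, Nsym_neg, Complex.conj_ofNat, -neg_sub]

lemma gravityKernel_zero_neg (m : ℤ) : gravityKernel α₁ α₂ 0 (-m) = -gravityKernel α₁ α₂ 0 m := by
  simp [gravityKernel, Dsym, Lsym]

lemma tensionKernel_zero (m : ℤ) : tensionKernel α₁ α₂ 0 m = 0 := by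
  simp [tensionKernel, Lsym]

end Coefficients

/-- Equation (U) divided by two, as a damped quadratic system. -/
def viscousWave {α₁ α₂ : ℝ} (h₁ : 0 < α₁) (h₂ : 0 < α₂) (β : ℝ≥0) : QuadraticSystem where
  κ := ⟨dampingRate α₁ α₂, (dampingRate_pos h₁ h₂).le⟩
  K := ⟨kernelBound α₁ α₂, (kernelBound_pos h₁ h₂).le⟩
  β := β
  ℓ := linSymbol α₁ α₂ β
  b₁ := gravityKernel α₁ α₂
  b₂ := tensionKernel α₁ α₂
  κ_ne_zero := Subtype.coe_ne_coe.1 (dampingRate_pos h₁ h₂).ne'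
  ℓ_re_le n := linSymbol_re_le h₁ h₂ β.coe_nonneg n
  nnnorm_b₁_le n m := norm_gravityKernel_le h₁ h₂ n m
  nnnorm_b₂_le n m := norm_tensionKernel_le h₁ h₂ n m
  nnnorm_mul_nnnorm_b₂_sq_le n m := norm_mul_norm_tensionKernel_sq_le h₁ h₂ n m
  ℓ_neg := linSymbol_neg
  b₁_neg := gravityKernel_neg
  b₂_neg := tensionKernel_neg
  b₁_zero_neg := gravityKernel_zero_neg
  b₂_zero := tensionKernel_zero

section Equation
variable {α₁ α₂ : ℝ} {c : ℤ → ℂ} {n : ℤ}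

lemma summable_norm_of_firstOrder {k F : ℤ → ℂ} (h0 : c 0 = 0) (hc : gradSq (‖c ·‖ₑ) ≠ ∞)
    (hF : ∀ m, F m = k m * (c m * c (n - m))) (hk : ∀ m, ‖k m‖ ≤ 2 * (‖m‖ + ‖n - m‖)) :
    Summable fun m => ‖F m‖ := by
  have hkₑ (m : ℤ) : ‖k m‖ₑ ≤ 2 * (‖m‖ₑ + ‖n - m‖ₑ) := by
    have hk' : ‖k m‖₊ ≤ 2 * (‖m‖₊ + ‖n - m‖₊) := hk m
    simp only [enorm_eq_nnnorm]
    exact_mod_cast hk'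
  have hle : ∑' m, ‖F m‖ₑ ≤ 2 * firstOrderConv (‖c ·‖ₑ) (‖c ·‖ₑ) n := by
    rw [firstOrderConv, ← ENNReal.tsum_mul_left]
    refine ENNReal.tsum_le_tsum fun m => ?_
    rw [hF, enorm_mul, enorm_mul, ← mul_assoc 2]
    gcongr
    exact hkₑ m
  have hfin := firstOrderConv_ne_top (by simp [h0]) (by simp [h0]) hc hc n
  refine (ENNReal.summable_toReal (f := (‖F ·‖ₑ)) (ne_top_of_le_ne_top (by finiteness) hle)).congr
    fun m => toReal_enorm _

lemma absConvU_of_gradSq_ne_top (h0 : c 0 = 0) (hc : gradSq (‖c ·‖ₑ) ≠ ∞) (n : ℤ) :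
    AbsConvU c n := by
  have hle (m : ℤ) : 2 * ‖m‖ ≤ 2 * (‖m‖ + ‖n - m‖) := by gcongr; simp
  have hle' (m : ℤ) : 2 * ‖n - m‖ ≤ 2 * (‖m‖ + ‖n - m‖) := by gcongr; simp
  refine ⟨
    summable_norm_of_firstOrder h0 hc (n := n) (k := fun m => Dsym (n - m)) (fun m => ?_)
      fun m => ?_,
    summable_norm_of_firstOrder h0 hc (fun m => ?_)
      fun m => (norm_Hsym_sub_mul_invLsym_le n m).trans (hle m),
    summable_norm_of_firstOrder h0 hc (fun m => ?_)
      fun m => (norm_Hsym_sub_mul_invLsym_mul_sq_le n m).trans (hle' m),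
    summable_norm_of_firstOrder h0 hc (fun m => ?_)
      fun m => (norm_Hsym_sub_mul_Dsym_le n m).trans (hle' m),
    summable_norm_of_firstOrder h0 hc (fun m => ?_) (norm_Dsym_sq_sub_mul_invLsym_le n)⟩
  rotate_left
  · rw [norm_Dsym]
    linarith [hle' m, norm_nonneg (n - m)]
  all_goals
    simp only [Dc, iLc, L2c]
    ring

lemma linU_eq (α₁ α₂ β : ℝ) (c : ℤ → ℂ) (n : ℤ) :
    linU α₁ α₂ β c n = 2 * (linSymbol α₁ α₂ β n * c n) := by
  rw [linU, linSymbol]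
  ring

lemma nlU_eq (h₁ : 0 < α₁) (h₂ : 0 < α₂) (β : ℝ≥0) (h : AbsConvU c n) :
    nlU α₁ α₂ β c n = -(2 * (viscousWave h₁ h₂ β).quad c c n) := by
  obtain ⟨hcD, hHL, hHL2, hHD, hDL⟩ := h
  have sum_cD : HasSum _ (conv c (Dc c) n) := hcD.of_norm.hasSum
  have sum_HL : HasSum _ (commC Hsym (iLc c) c n) := hHL.of_norm.hasSum
  have sum_HL2 : HasSum _ (commC Hsym (iLc c) (L2c c) n) := hHL2.of_norm.hasSum
  have sum_HD : HasSum _ (commC Hsym c (Dc c) n) := hHD.of_norm.hasSum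
  have sum_DL : HasSum _ (commC (fun k => Dsym k ^ 2) (iLc c) c n) := hDL.of_norm.hasSum
  have sum_all := ((((((sum_cD.mul_left 2).add (sum_HL.mul_left (Lsym n))).add
    (sum_HL2.mul_left ((β : ℂ) * Lsym n))).sub (sum_HD.mul_left ((α₂ : ℂ) * Lsym n))).add
    (sum_cD.mul_left ((α₂ : ℂ) * Dsym n))).add (sum_DL.mul_left ((α₁ : ℂ) * Lsym n))).mul_left
    (-(1 / 2) * Nsym ((α₁ + α₂) / 2) n)
  have hquad : (viscousWave h₁ h₂ β).quad c c n = _ := Eq.trans (tsum_congr fun m => by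
    simp only [QuadraticSystem.ker, viscousWave, gravityKernel, tensionKernel, Dc, iLc, L2c]
    push_cast
    ring) sum_all.tsum_eq
  rw [hquad, nlU]
  ring

end Equation

end ViscousWave

/-- Global well-posedness and decay for small data in H¹(𝕋) for equation (U)
with ε = 1. -/
theorem global_existence_viscous_unidirectional
    (α₁ α₂ : ℝ) (hα₁ : 0 < α₁) (hα₂ : 0 < α₂) :
    ∃ C : ℝ, 0 < C ∧ ∀ β : ℝ, 0 ≤ β → ∀ f₀ : ℤ → ℂ,
      RealZeroMean f₀ →
      Summable (fun n : ℤ => (1 + (n : ℝ) ^ 2) * ‖f₀ n‖ ^ 2) →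
      Real.sqrt (H1sq f₀) ≤ C →
      ∃ f : ℝ → ℤ → ℂ,
        f 0 = f₀
        ∧ (∀ t : ℝ, 0 ≤ t →
            RealZeroMean (f t)
            ∧ Summable (fun n : ℤ => (1 + (n : ℝ) ^ 2) * ‖f t n‖ ^ 2)
            ∧ ∀ n : ℤ, AbsConvU (f t) n
              ∧ (2 : ℂ) * deriv (fun s : ℝ => f s n) t
                  = linU α₁ α₂ β (f t) n - nlU α₁ α₂ β (f t) n)
        ∧ (∀ s t : ℝ, 0 ≤ s → s ≤ t →
            Real.sqrt (H1sq (f t)) ≤ Real.sqrt (H1sq (f s)))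
        ∧ MeasureTheory.IntegrableOn (fun t : ℝ => H2sq (f t)) (Set.Ici 0)
        ∧ Tendsto (fun t : ℝ => Real.sqrt (H1sq (f t))) atTop (nhds 0) := by
  have hκ := ViscousWave.dampingRate_pos hα₁ hα₂
  have hK := ViscousWave.kernelBound_pos hα₁ hα₂
  refine ⟨ViscousWave.dampingRate α₁ α₂ / (32 * ViscousWave.kernelBound α₁ α₂), by positivity,
    fun β hβ f₀ hf₀ hsum hsmall => ?_⟩
  lift β to NNReal using hβ
  obtain ⟨f, hinit, hsol, hdiss⟩ :=
    (ViscousWave.viscousWave hα₁ hα₂ β).exists_isSolution_isDissipative hf₀ hsum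
      (mul_le_of_le_div₀ hκ.le (by positivity) hsmall)
  refine ⟨f, hinit, fun t ht => ?_, fun s t => hdiss.sqrt_H1sq_le,
    hdiss.integrableOn_H2sq hsol.continuousOn, hdiss.tendsto_sqrt_H1sq⟩
  have hreal := hsol.realZeroMean ht
  have hH1 := hdiss.sobolevSq_one_ne_top ht
  refine ⟨hreal, ViscousWave.summable_of_sobolevSq_one_ne_top hH1, fun n => ?_⟩
  have hconv := ViscousWave.absConvU_of_gradSq_ne_top hreal.1
    (ne_top_of_le_ne_top hH1 ViscousWave.gradSq_le_sobolevSq_one) n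
  refine ⟨hconv, ?_⟩
  rw [(hsol.hasDerivAt ht n).deriv, ViscousWave.linU_eq, ViscousWave.nlU_eq hα₁ hα₂ β hconv,
    sub_neg_eq_add, ← mul_add]
  rfl

end
end

section
/- Let β ≥ 0 and let f₀ : ℤ → ℂ satisfy M := ∑_{n∈ℤ} e^{|n|}|f₀(n)| < ∞ (i.e. f₀ ∈ A₁), with M > 0. Define ν(t) = 1 − 4Mt and let 0 < T < 1/(4M). Then there exists f : [0,T] → (ℤ → ℂ) with f(0) = f₀ such that for each n ∈ ℤ the map t ↦ f(n,t) is differentiable and satisfies 2 (d/dt) f(n,t) = i n f(n,t) + i sgn(n) f(n,t) − i β n |n| f(n,t) + i n ∑_{m∈ℤ} (−i sgn(m)) f(m,t) f(n−m,t), the sum converging absolutely, and such that ‖f(t)‖_{A_{ν(t)}} ≤ M for every t ∈ [0,T]. -/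
/- STATEMENT 3: local existence for analytic data for the unidirectional
inviscid water-wave model 2∂ₜf = ∂₁f − Hf − βH∂₁²f + ∂₁((Hf)·f),
in Fourier-coefficient form on the torus, with the analytic Wiener norm
‖a‖_{A_ν} = ∑ₙ e^{ν|n|}|a(n)| staying bounded by M on the shrinking strip
ν(t) = 1 − 4Mt. -/

open Filter

noncomputable section

/-!
Write `f₊` and `f₋` for the halves `(f ± i H f) / 2`, each holding half of the mean of `f`. Since
`H f = -i (f₊ - f₋)`, the nonlinearity `(H f) f` equals `-i (f₊² - f₋²)`, and the equation decouples
into one complex Burgers system for each half. On the frequencies `n ≥ 0` such a system is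
triangular, so that Duhamel's formula solves it globally, mode by mode.

The norms of the modes are dominated by the solution `aₙ` of the Burgers system without linear
part. For `bₙ = e^{(ρ - σ t) n} aₙ`, `P = ∑ bₙ` and `G = ∑ n bₙ`, symmetry of the convolution gives
`P' ≤ G (P - σ)`: as long as `P < σ`, the loss of analyticity radius compensates the derivative in
the nonlinearity, and `P` does not grow.
-/

open Complex (I)
open Finset.HasAntidiagonal (antidiagonal mem_antidiagonal)

section ScalarSystems

variable {𝕜 : Type*} [RCLike 𝕜]

/-- Duhamel's formula for the solution of the scalar equation `u' = c u + q`, `u(0) = x`. It is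
applied over `ℂ` to the equation and over `ℝ` to its majorant. -/
def duhamel (c q : C(ℝ, 𝕜)) (x : 𝕜) (t : ℝ) : 𝕜 :=
  NormedSpace.exp (∫ s in (0 : ℝ)..t, c s) * x +
    ∫ s in (0 : ℝ)..t, NormedSpace.exp (∫ r in s..t, c r) * q s

@[simp]
theorem duhamel_zero (c q : C(ℝ, 𝕜)) (x : 𝕜) : duhamel c q x 0 = x := by
  simp [duhamel]

theorem exp_integral_eq_mul (c : C(ℝ, 𝕜)) (s t : ℝ) :
    NormedSpace.exp (∫ r in s..t, c r) =
      NormedSpace.exp (∫ r in (0 : ℝ)..t, c r) * NormedSpace.exp (-∫ r in (0 : ℝ)..s, c r) := by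
  have hc (a b : ℝ) : IntervalIntegrable c MeasureTheory.volume a b :=
    c.continuous.intervalIntegrable a b
  rw [← intervalIntegral.integral_interval_sub_left (hc 0 t) (hc 0 s), sub_eq_add_neg,
    NormedSpace.exp_add_of_commute (Commute.all _ _)]

theorem hasDerivAt_duhamel (c q : C(ℝ, 𝕜)) (x : 𝕜) (t : ℝ) :
    HasDerivAt (duhamel c q x) (c t * duhamel c q x t + q t) t := by
  let C : ℝ → 𝕜 := fun t => ∫ s in (0 : ℝ)..t, c s
  have hC (t : ℝ) : HasDerivAt C (c t) t :=
    (c.continuous.integral_hasStrictDerivAt 0 t).hasDerivAt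
  have hexp (t : ℝ) : HasDerivAt (fun t => NormedSpace.exp (C t))
      (NormedSpace.exp (C t) * c t) t := hasDerivAt_exp.comp t (hC t)
  have hcont : Continuous fun s => NormedSpace.exp (-C s) * q s :=
    (NormedSpace.exp_continuous.comp
      (continuous_iff_continuousAt.2 fun s => (hC s).continuousAt).neg).mul q.continuous
  have hfactor (t : ℝ) : duhamel c q x t =
      NormedSpace.exp (C t) * (x + ∫ s in (0 : ℝ)..t, NormedSpace.exp (-C s) * q s) := by
    rw [duhamel, mul_add, ← intervalIntegral.integral_const_mul]
    congr 2
    funext s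
    rw [exp_integral_eq_mul, mul_assoc]
  have hcancel : NormedSpace.exp (C t) * NormedSpace.exp (-C t) = 1 := by
    rw [← NormedSpace.exp_add_of_commute (Commute.all _ _), add_neg_cancel, NormedSpace.exp_zero]
  have hderiv := (hexp t).mul
    ((hcont.integral_hasStrictDerivAt 0 t).hasDerivAt.const_add x)
  rw [funext hfactor]
  refine hderiv.congr_deriv ?_
  linear_combination q t * hcancel

theorem continuous_duhamel (c q : C(ℝ, 𝕜)) (x : 𝕜) : Continuous (duhamel c q x) :=
  continuous_iff_continuousAt.2 fun t => (hasDerivAt_duhamel c q x t).continuousAt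

theorem norm_exp_integral_le {c : C(ℝ, ℂ)} {γ : C(ℝ, ℝ)} {s t : ℝ} (hst : s ≤ t)
    (hc : ∀ r ∈ Set.Icc s t, (c r).re ≤ γ r) :
    ‖NormedSpace.exp (∫ r in s..t, c r)‖ ≤ NormedSpace.exp (∫ r in s..t, γ r) := by
  have hre : (∫ r in s..t, c r).re = ∫ r in s..t, (c r).re :=
    (Complex.reCLM.intervalIntegral_comp_comm (c.continuous.intervalIntegrable s t)).symm
  rw [← Complex.exp_eq_exp_ℂ, ← Real.exp_eq_exp_ℝ, Complex.norm_exp, hre, Real.exp_le_exp]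
  exact intervalIntegral.integral_mono_on hst
    ((Complex.continuous_re.comp c.continuous).intervalIntegrable s t)
    (γ.continuous.intervalIntegrable s t) hc

theorem norm_duhamel_le {c q : C(ℝ, ℂ)} {γ κ : C(ℝ, ℝ)} {x : ℂ} {ξ t : ℝ} (ht : 0 ≤ t)
    (hc : ∀ s ∈ Set.Icc 0 t, (c s).re ≤ γ s) (hq : ∀ s ∈ Set.Icc 0 t, ‖q s‖ ≤ κ s)
    (hx : ‖x‖ ≤ ξ) :
    ‖duhamel c q x t‖ ≤ duhamel γ κ ξ t := by
  have hcont : Continuous fun s => NormedSpace.exp (∫ r in s..t, γ r) * κ s := by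
    rw [funext fun s => congrArg (· * κ s) (exp_integral_eq_mul γ s t)]
    have hprimitive : Continuous fun s => ∫ r in (0 : ℝ)..s, γ r :=
      intervalIntegral.continuous_primitive (fun a b => γ.continuous.intervalIntegrable a b) 0
    exact (continuous_const.mul (NormedSpace.exp_continuous.comp hprimitive.neg)).mul κ.continuous
  refine (norm_add_le _ _).trans (add_le_add ?_ ?_)
  · rw [norm_mul]
    have hexp := norm_exp_integral_le ht hc
    exact mul_le_mul hexp hx (norm_nonneg _) ((norm_nonneg _).trans hexp)
  · refine intervalIntegral.norm_integral_le_of_norm_le ht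
      (Eventually.of_forall fun s hs => ?_) (hcont.intervalIntegrable 0 t)
    rw [norm_mul]
    have hexp := norm_exp_integral_le hs.2 fun r hr => hc r ⟨hs.1.le.trans hr.1, hr.2⟩
    exact mul_le_mul hexp (hq s ⟨hs.1.le, hs.2⟩) (norm_nonneg _) ((norm_nonneg _).trans hexp)

/-- The solution of the complex Burgers system
`uₙ' = cₙ uₙ + (n / 2) ∑_{i+j=n} uᵢ uⱼ`, `uₙ(0) = xₙ`, on the frequencies `n ≥ 0`. The terms
`i = 0` and `j = 0` of the sum are moved into the linear coefficient `cₙ + n u₀`, so that the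
remaining source involves only frequencies below `n`. -/
def burgersMode (c x : ℕ → 𝕜) : ℕ → C(ℝ, 𝕜)
  | 0 => ⟨duhamel (.const ℝ (c 0)) 0 (x 0), continuous_duhamel _ _ _⟩
  | n + 1 =>
    ⟨duhamel (.const ℝ (c (n + 1)) + (n + 1 : 𝕜) • burgersMode c x 0)
      (((n + 1) / 2 : 𝕜) • ∑ i : Fin n, burgersMode c x (i + 1) * burgersMode c x (n - i))
      (x (n + 1)), continuous_duhamel _ _ _⟩

theorem coe_burgersMode_zero (c x : ℕ → 𝕜) :
    ⇑(burgersMode c x 0) = duhamel (.const ℝ (c 0)) 0 (x 0) := by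
  rw [burgersMode, ContinuousMap.coe_mk]

theorem coe_burgersMode_succ (c x : ℕ → 𝕜) (n : ℕ) :
    ⇑(burgersMode c x (n + 1)) =
      duhamel (.const ℝ (c (n + 1)) + (n + 1 : 𝕜) • burgersMode c x 0)
        (((n + 1) / 2 : 𝕜) • ∑ i : Fin n, burgersMode c x (i + 1) * burgersMode c x (n - i))
        (x (n + 1)) := by
  conv_lhs => rw [burgersMode, ContinuousMap.coe_mk]

theorem burgersMode_apply_zero (c x : ℕ → 𝕜) (n : ℕ) : burgersMode c x n 0 = x n := by
  cases n with
  | zero => rw [coe_burgersMode_zero, duhamel_zero]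
  | succ n => rw [coe_burgersMode_succ, duhamel_zero]

theorem sum_antidiagonal_succ_mul_eq {R : Type*} [CommSemiring R] (u : ℕ → R) (n : ℕ) :
    ∑ p ∈ antidiagonal (n + 1), u p.1 * u p.2 =
      2 * (u 0 * u (n + 1)) + ∑ i : Fin n, u (i + 1) * u (n - i) := by
  rw [Finset.Nat.sum_antidiagonal_eq_sum_range_succ (fun i j => u i * u j),
    Finset.sum_range_succ, Finset.sum_range_succ', Finset.sum_range]
  simp only [Nat.add_sub_add_right, tsub_zero, tsub_self]
  ring

theorem hasDerivAt_burgersMode (c x : ℕ → 𝕜) (n : ℕ) (t : ℝ) :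
    HasDerivAt (burgersMode c x n) (c n * burgersMode c x n t + n / 2 *
      ∑ p ∈ antidiagonal n, burgersMode c x p.1 t * burgersMode c x p.2 t)
      t := by
  cases n with
  | zero => simpa [coe_burgersMode_zero] using hasDerivAt_duhamel (.const ℝ (c 0)) 0 (x 0) t
  | succ n =>
    rw [sum_antidiagonal_succ_mul_eq (fun k => burgersMode c x k t), coe_burgersMode_succ]
    refine (hasDerivAt_duhamel _ _ _ t).congr_deriv ?_
    simp only [ContinuousMap.add_apply, ContinuousMap.const_apply, ContinuousMap.smul_apply,
      ContinuousMap.sum_apply, ContinuousMap.mul_apply, smul_eq_mul]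
    push_cast
    ring

theorem norm_burgersMode_le {c x : ℕ → ℂ} {γ ξ : ℕ → ℝ} (hc : ∀ n, (c n).re ≤ γ n)
    (hx : ∀ n, ‖x n‖ ≤ ξ n) (n : ℕ) {t : ℝ} (ht : 0 ≤ t) :
    ‖burgersMode c x n t‖ ≤ burgersMode γ ξ n t := by
  induction n using Nat.strong_induction_on generalizing t with
  | _ n ih =>
  cases n with
  | zero =>
    rw [coe_burgersMode_zero, coe_burgersMode_zero]
    exact norm_duhamel_le ht (fun _ _ => hc 0) (fun _ _ => by simp) (hx 0)
  | succ n =>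
    rw [coe_burgersMode_succ, coe_burgersMode_succ]
    refine norm_duhamel_le ht (fun s hs => ?_) (fun s hs => ?_) (hx (n + 1))
    · have hmean : (burgersMode c x 0 s).re ≤ burgersMode γ ξ 0 s :=
        (Complex.re_le_norm _).trans (ih 0 n.succ_pos hs.1)
      have hre (z : ℂ) : ((n + 1 : ℂ) * z).re = (n + 1) * z.re := by simp
      simp only [ContinuousMap.add_apply, ContinuousMap.const_apply, ContinuousMap.smul_apply,
        smul_eq_mul, Complex.add_re, hre]
      gcongr
      exact hc _
    · have hfactor : ‖((n + 1) / 2 : ℂ)‖ = (n + 1) / 2 := by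
        rw [norm_div, ← Nat.cast_succ, Complex.norm_natCast]
        simp
      simp only [ContinuousMap.smul_apply, ContinuousMap.sum_apply, ContinuousMap.mul_apply,
        smul_eq_mul]
      rw [norm_mul, hfactor]
      gcongr
      refine norm_sum_le_of_le _ fun i _ => ?_
      rw [norm_mul]
      have hleft := ih (i + 1) (by omega) hs.1
      exact mul_le_mul hleft (ih (n - i) (by omega) hs.1) (norm_nonneg _)
        ((norm_nonneg _).trans hleft)

end ScalarSystems

theorem sum_range_sum_antidiagonal_le {F : ℕ × ℕ → ℝ} (hF : ∀ p, 0 ≤ F p) (N : ℕ) :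
    ∑ n ∈ Finset.range N, ∑ p ∈ antidiagonal n, F p ≤
      ∑ p ∈ Finset.range N ×ˢ Finset.range N, F p := by
  have hdisjoint : (Finset.range N : Set ℕ).PairwiseDisjoint
      (antidiagonal (A := ℕ)) := fun m _ n _ hmn =>
    Finset.disjoint_left.2 fun p hm hn => hmn <| by
      rw [← mem_antidiagonal.1 hm, mem_antidiagonal.1 hn]
  rw [← Finset.sum_biUnion hdisjoint]
  refine Finset.sum_le_sum_of_subset_of_nonneg (fun p hp => ?_) fun p _ _ => hF p
  simp only [Finset.mem_biUnion, Finset.mem_range, mem_antidiagonal] at hp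
  obtain ⟨n, hn, hpn⟩ := hp
  rw [Finset.mem_product, Finset.mem_range, Finset.mem_range]
  omega

theorem sum_range_mul_sum_antidiagonal_le {b : ℕ → ℝ} (hb : ∀ n, 0 ≤ b n) (N : ℕ) :
    ∑ n ∈ Finset.range N, (n : ℝ) * ∑ p ∈ antidiagonal n, b p.1 * b p.2 ≤
      2 * (∑ n ∈ Finset.range N, (n : ℝ) * b n) * ∑ n ∈ Finset.range N, b n := by
  calc
    _ = ∑ n ∈ Finset.range N, ∑ p ∈ antidiagonal n,
          ((p.1 : ℝ) + p.2) * (b p.1 * b p.2) := by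
      refine Finset.sum_congr rfl fun n _ => ?_
      rw [Finset.mul_sum]
      refine Finset.sum_congr rfl fun p hp => ?_
      rw [← mem_antidiagonal.1 hp, Nat.cast_add]
    _ ≤ ∑ p ∈ Finset.range N ×ˢ Finset.range N, ((p.1 : ℝ) + p.2) * (b p.1 * b p.2) :=
      sum_range_sum_antidiagonal_le
        (fun p => mul_nonneg (by positivity) (mul_nonneg (hb _) (hb _))) N
    _ = (∑ n ∈ Finset.range N, (n : ℝ) * b n) * (∑ n ∈ Finset.range N, b n) +
          (∑ n ∈ Finset.range N, b n) * ∑ n ∈ Finset.range N, (n : ℝ) * b n := by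
      rw [Finset.sum_mul_sum, Finset.sum_mul_sum, ← Finset.sum_product', ← Finset.sum_product',
        ← Finset.sum_add_distrib]
      exact Finset.sum_congr rfl fun p _ => by ring
    _ = _ := by ring

theorem sum_range_damped_burgers_le {b : ℕ → ℝ} (hb : ∀ n, 0 ≤ b n) (σ : ℝ) (N : ℕ) :
    ∑ n ∈ Finset.range N,
        (n / 2 * (∑ p ∈ antidiagonal n, b p.1 * b p.2) - σ * (n * b n)) ≤
      (∑ n ∈ Finset.range N, n * b n) * (∑ n ∈ Finset.range N, b n - σ) := by
  have hconv := sum_range_mul_sum_antidiagonal_le hb N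
  have hhalf : ∑ n ∈ Finset.range N, n / 2 * (∑ p ∈ antidiagonal n, b p.1 * b p.2) =
      1 / 2 * ∑ n ∈ Finset.range N, (n : ℝ) * ∑ p ∈ antidiagonal n, b p.1 * b p.2 := by
    rw [Finset.mul_sum]
    exact Finset.sum_congr rfl fun n _ => by ring
  rw [Finset.sum_sub_distrib, ← Finset.mul_sum, hhalf]
  linarith

/-- With `bₙ = e^{(ρ - σ t) n} aₙ`, the exponentials in the convolution combine because the weight
is multiplicative along `i + j = n`, and the shrinking strip contributes the damping `-σ n bₙ`. -/
theorem hasDerivAt_exp_mul_burgers {a : ℕ → ℝ → ℝ} {n : ℕ} {t : ℝ} (ρ σ : ℝ)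
    (ha : HasDerivAt (a n)
      (n / 2 * ∑ p ∈ antidiagonal n, a p.1 t * a p.2 t) t) :
    HasDerivAt (fun s => Real.exp ((ρ - σ * s) * n) * a n s)
      (n / 2 * (∑ p ∈ antidiagonal n,
        (Real.exp ((ρ - σ * t) * p.1) * a p.1 t) * (Real.exp ((ρ - σ * t) * p.2) * a p.2 t)) -
        σ * (n * (Real.exp ((ρ - σ * t) * n) * a n t))) t := by
  have hweight : HasDerivAt (fun s : ℝ => Real.exp ((ρ - σ * s) * n))
      (Real.exp ((ρ - σ * t) * n) * (-(σ * 1) * n)) t :=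
    ((((hasDerivAt_id t).const_mul σ).const_sub ρ).mul_const (n : ℝ)).exp
  have hconv : ∑ p ∈ antidiagonal n,
      (Real.exp ((ρ - σ * t) * p.1) * a p.1 t) * (Real.exp ((ρ - σ * t) * p.2) * a p.2 t) =
      Real.exp ((ρ - σ * t) * n) *
        ∑ p ∈ antidiagonal n, a p.1 t * a p.2 t := by
    rw [Finset.mul_sum]
    refine Finset.sum_congr rfl fun p hp => ?_
    rw [← mem_antidiagonal.1 hp, Nat.cast_add, mul_add, Real.exp_add]
    ring
  refine (hweight.mul ha).congr_deriv ?_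
  rw [hconv]
  ring

theorem le_initial_of_hasDerivAt_of_le_mul_sub {P P' G : ℝ → ℝ} {σ t : ℝ}
    (hP : ∀ s, HasDerivAt P (P' s) s) (hP' : ∀ s, 0 ≤ s → P' s ≤ G s * (P s - σ))
    (hPG : ∀ s, 0 ≤ s → P s ≤ P 0 + G s) (hσ : P 0 < σ) (ht : 0 ≤ t) : P t ≤ P 0 := by
  have hbarrier : ∀ K ∈ Set.Ioo (P 0) σ, P t ≤ K := fun K hK => by
    refine image_le_of_deriv_right_lt_deriv_boundary (B' := fun _ => 0)
      (fun s _ => (hP s).continuousAt.continuousWithinAt) (fun s _ => (hP s).hasDerivWithinAt)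
      hK.1.le (fun s => hasDerivAt_const s K) (fun s hs hPs => ?_) (Set.right_mem_Icc.2 ht)
    have hG : 0 < G s := by linarith [hPG s hs.1, hK.1]
    exact (hP' s hs.1).trans_lt (mul_neg_of_pos_of_neg hG (by linarith [hK.2]))
  exact ge_of_tendsto (tendsto_id.mono_left nhdsWithin_le_nhds)
    (eventually_of_mem (Ioo_mem_nhdsGT hσ) hbarrier)

theorem sum_exp_mul_burgers_le {a : ℕ → ℝ → ℝ} (hnonneg : ∀ n t, 0 ≤ t → 0 ≤ a n t)
    (ha : ∀ n t, HasDerivAt (a n)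
      (n / 2 * ∑ p ∈ antidiagonal n, a p.1 t * a p.2 t) t)
    {ρ σ : ℝ} {N : ℕ} (hσ : ∑ n ∈ Finset.range N, Real.exp (ρ * n) * a n 0 < σ)
    {t : ℝ} (ht : 0 ≤ t) :
    ∑ n ∈ Finset.range N, Real.exp ((ρ - σ * t) * n) * a n t ≤
      ∑ n ∈ Finset.range N, Real.exp (ρ * n) * a n 0 := by
  let b : ℕ → ℝ → ℝ := fun n s => Real.exp ((ρ - σ * s) * n) * a n s
  let P : ℝ → ℝ := fun s => ∑ n ∈ Finset.range N, b n s
  let G : ℝ → ℝ := fun s => ∑ n ∈ Finset.range N, n * b n s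
  let P' : ℝ → ℝ := fun s => ∑ n ∈ Finset.range N,
    (n / 2 * (∑ p ∈ antidiagonal n, b p.1 s * b p.2 s) - σ * (n * b n s))
  have hb (n : ℕ) {s : ℝ} (hs : 0 ≤ s) : 0 ≤ b n s :=
    mul_nonneg (Real.exp_pos _).le (hnonneg n s hs)
  have hP (s : ℝ) : HasDerivAt P (P' s) s :=
    HasDerivAt.fun_sum fun n _ => hasDerivAt_exp_mul_burgers ρ σ (ha n s)
  have hP0 : P 0 = ∑ n ∈ Finset.range N, Real.exp (ρ * n) * a n 0 := by simp [P, b]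
  have hP'_le (s : ℝ) (hs : 0 ≤ s) : P' s ≤ G s * (P s - σ) :=
    sum_range_damped_burgers_le (fun n => hb n hs) σ N
  have hmean (s : ℝ) : a 0 s = a 0 0 :=
    is_const_of_deriv_eq_zero (fun s => (ha 0 s).differentiableAt)
      (fun s => by simp [(ha 0 s).deriv]) s 0
  have hP_le (s : ℝ) (hs : 0 ≤ s) : P s ≤ P 0 + G s := by
    rw [← Finset.sum_add_distrib]
    refine Finset.sum_le_sum fun n _ => ?_
    rcases n.eq_zero_or_pos with rfl | hn
    · simp [b, hmean s]
    · have hn1 : (1 : ℝ) ≤ n := Nat.one_le_cast.2 hn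
      nlinarith [hb n hs, hb n le_rfl]
  rw [← hP0] at hσ ⊢
  exact le_initial_of_hasDerivAt_of_le_mul_sub hP hP'_le hP_le hσ ht

theorem sum_exp_mul_norm_burgersMode_le {c x : ℕ → ℂ} (hc : ∀ n, (c n).re ≤ 0) {ρ σ : ℝ} {N : ℕ}
    (hσ : ∑ n ∈ Finset.range N, Real.exp (ρ * n) * ‖x n‖ < σ) {t : ℝ} (ht : 0 ≤ t) :
    ∑ n ∈ Finset.range N, Real.exp ((ρ - σ * t) * n) * ‖burgersMode c x n t‖ ≤
      ∑ n ∈ Finset.range N, Real.exp (ρ * n) * ‖x n‖ := by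
  let a : ℕ → C(ℝ, ℝ) := burgersMode 0 fun n => ‖x n‖
  have hmajorant (n : ℕ) {s : ℝ} (hs : 0 ≤ s) : ‖burgersMode c x n s‖ ≤ a n s :=
    norm_burgersMode_le hc (fun _ => le_rfl) n hs
  have ha0 (n : ℕ) : a n 0 = ‖x n‖ := burgersMode_apply_zero _ _ n
  simp only [← ha0] at hσ ⊢
  calc
    _ ≤ ∑ n ∈ Finset.range N, Real.exp ((ρ - σ * t) * n) * a n t := by
      gcongr with n
      exact hmajorant n ht
    _ ≤ _ := sum_exp_mul_burgers_le (fun n s hs => (norm_nonneg _).trans (hmajorant n hs))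
      (fun n s => by simpa using hasDerivAt_burgersMode 0 (fun n => ‖x n‖) n s) hσ ht

theorem summable_and_tsum_exp_mul_norm_burgersMode_le {c x : ℕ → ℂ} (hc : ∀ n, (c n).re ≤ 0)
    {ρ σ : ℝ} (hx : Summable fun n : ℕ => Real.exp (ρ * n) * ‖x n‖)
    (hσ : ∑' n : ℕ, Real.exp (ρ * n) * ‖x n‖ < σ) {t : ℝ} (ht : 0 ≤ t) :
    Summable (fun n : ℕ => Real.exp ((ρ - σ * t) * n) * ‖burgersMode c x n t‖) ∧
      ∑' n : ℕ, Real.exp ((ρ - σ * t) * n) * ‖burgersMode c x n t‖ ≤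
        ∑' n : ℕ, Real.exp (ρ * n) * ‖x n‖ := by
  have hpartial (N : ℕ) : ∑ n ∈ Finset.range N, Real.exp (ρ * n) * ‖x n‖ ≤
      ∑' n : ℕ, Real.exp (ρ * n) * ‖x n‖ := hx.sum_le_tsum _ fun n _ => by positivity
  have hbound (N : ℕ) :=
    (sum_exp_mul_norm_burgersMode_le hc ((hpartial N).trans_lt hσ) ht).trans (hpartial N)
  exact ⟨summable_of_sum_range_le (fun n => by positivity) hbound,
    Real.tsum_le_of_sum_range_le (fun n => by positivity) hbound⟩

section HardyPart

/-- The weight `1/2` at the mean, `1` elsewhere, with which both half-lines share the frequency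
`0`. -/
def halfWeight (k : ℕ) : ℝ := if k = 0 then 1 / 2 else 1

/-- The Fourier coefficients, at the frequencies `ε k`, of the half `(f + ε i H f) / 2` of the
function `f` with coefficients `g`; `ε = 1` and `ε = -1` give the two Hardy parts of `f`, each
holding half of the mean. -/
def hardyPart (ε : ℤˣ) (g : ℤ → ℂ) (k : ℕ) : ℂ := halfWeight k • g (ε * k)

/-- The sequence on `ℤ` with Hardy parts `u 1` and `u (-1)`, the mean being read off from `u 1`. -/
def ofHardyParts (u : ℤˣ → ℕ → ℂ) (n : ℤ) : ℂ :=
  (halfWeight n.natAbs)⁻¹ • u (if n < 0 then -1 else 1) n.natAbs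

theorem halfWeight_pos (k : ℕ) : 0 < halfWeight k := by
  unfold halfWeight
  split_ifs <;> norm_num

theorem ofHardyParts_unit_mul {u : ℤˣ → ℕ → ℂ} (hu : u 1 0 = u (-1) 0) (ε : ℤˣ) (k : ℕ) :
    ofHardyParts u (ε * k) = (halfWeight k)⁻¹ • u ε k := by
  have hk : ¬ (k : ℤ) < 0 := (Int.natCast_nonneg k).not_gt
  obtain rfl | rfl := Int.units_eq_one_or ε
  · simp [ofHardyParts, hk]
  rcases k.eq_zero_or_pos with rfl | hpos
  · simp [ofHardyParts, hu]
  · simp [ofHardyParts, hpos]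

theorem hardyPart_ofHardyParts {u : ℤˣ → ℕ → ℂ} (hu : u 1 0 = u (-1) 0) (ε : ℤˣ) :
    hardyPart ε (ofHardyParts u) = u ε := by
  funext k
  rw [hardyPart, ofHardyParts_unit_mul hu, smul_inv_smul₀ (halfWeight_pos k).ne']

theorem exists_eq_unit_mul_natCast (n : ℤ) : ∃ (ε : ℤˣ) (k : ℕ), n = ε * k := by
  obtain ⟨k, rfl | rfl⟩ := n.eq_nat_or_neg
  · exact ⟨1, k, by simp⟩
  · exact ⟨-1, k, by simp⟩

theorem eq_of_hardyPart_eq {g h : ℤ → ℂ} (hgh : ∀ ε, hardyPart ε g = hardyPart ε h) : g = h := by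
  funext n
  obtain ⟨ε, k, rfl⟩ := exists_eq_unit_mul_natCast n
  exact smul_right_injective ℂ (halfWeight_pos k).ne' (congrFun (hgh ε) k)

theorem norm_hardyPart (ε : ℤˣ) (g : ℤ → ℂ) (k : ℕ) :
    ‖hardyPart ε g k‖ = halfWeight k * ‖g (ε * k)‖ := by
  rw [hardyPart, norm_smul, Real.norm_of_nonneg (halfWeight_pos k).le]

theorem hasSum_int_of_hasSum_halfWeight_mul {φ : ℤ → ℝ} {A B : ℝ}
    (hA : HasSum (fun k : ℕ => halfWeight k * φ k) A)
    (hB : HasSum (fun k : ℕ => halfWeight k * φ (-k)) B) : HasSum φ (A + B) := by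
  have hrestore {ψ : ℕ → ℝ} {S : ℝ} (h : HasSum (fun k => halfWeight k * ψ k) S) :
      HasSum ψ (S + ψ 0 / 2) := by
    refine (h.add (hasSum_ite_eq 0 (ψ 0 / 2))).congr_fun fun k => ?_
    rcases eq_or_ne k 0 with rfl | hk
    · rw [halfWeight, if_pos rfl, if_pos rfl]
      ring
    · rw [halfWeight, if_neg hk, if_neg hk, one_mul, add_zero]
  have hsum : A + B = (A + φ 0 / 2) + (B + φ (-0) / 2) - φ 0 := by
    rw [neg_zero]
    ring
  rw [hsum]
  exact (hrestore (ψ := fun k => φ k) hA).of_nat_of_neg (hrestore (ψ := fun k => φ (-k)) hB)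

variable {ν : ℝ} {g : ℤ → ℂ}

theorem summable_exp_mul_norm_hardyPart
    (hg : Summable fun n : ℤ => Real.exp (ν * |(n : ℝ)|) * ‖g n‖) (ε : ℤˣ) :
    Summable fun k : ℕ => Real.exp (ν * k) * ‖hardyPart ε g k‖ := by
  have hinj : Function.Injective fun k : ℕ => (ε : ℤ) * k :=
    (Units.mulLeft ε).injective.comp Nat.cast_injective
  refine Summable.of_nonneg_of_le (fun k => by positivity) (fun k => ?_) (hg.comp_injective hinj)
  have habs : |(((ε : ℤ) * k : ℤ) : ℝ)| = k := by
    obtain rfl | rfl := Int.units_eq_one_or ε <;> simp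
  have hweight : halfWeight k ≤ 1 := by
    unfold halfWeight
    split_ifs <;> norm_num
  rw [norm_hardyPart, Function.comp_apply, habs]
  gcongr
  exact mul_le_of_le_one_left (norm_nonneg _) hweight

theorem hasSum_exp_mul_norm_of_hardyPart {A B : ℝ}
    (hA : HasSum (fun k : ℕ => Real.exp (ν * k) * ‖hardyPart 1 g k‖) A)
    (hB : HasSum (fun k : ℕ => Real.exp (ν * k) * ‖hardyPart (-1) g k‖) B) :
    HasSum (fun n : ℤ => Real.exp (ν * |(n : ℝ)|) * ‖g n‖) (A + B) := by
  refine hasSum_int_of_hasSum_halfWeight_mul (hA.congr_fun fun k => ?_) (hB.congr_fun fun k => ?_)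
  · simp only [Int.cast_natCast, Nat.abs_cast, norm_hardyPart, Units.val_one, one_mul]
    ring
  · simp only [Int.cast_neg, Int.cast_natCast, abs_neg, Nat.abs_cast, norm_hardyPart,
      Units.val_neg, Units.val_one, neg_mul, one_mul]
    ring

end HardyPart

theorem summable_norm_sign_mul_mul {g : ℤ → ℂ} (hg : Summable fun m => ‖g m‖) (n : ℤ) :
    Summable fun m : ℤ => ‖(m.sign : ℂ) * g m * g (n - m)‖ := by
  refine Summable.of_nonneg_of_le (fun m => norm_nonneg _) (fun m => ?_)
    (hg.mul_right (∑' m, ‖g m‖))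
  have hsign : ‖(m.sign : ℂ)‖ ≤ 1 := by
    obtain h | h | h := m.sign_trichotomy <;> simp [h]
  have hg_le : ‖g (n - m)‖ ≤ ∑' m, ‖g m‖ := hg.le_tsum (n - m) fun _ _ => norm_nonneg _
  rw [norm_mul, norm_mul]
  gcongr
  exact mul_le_of_le_one_left (norm_nonneg _) hsign

theorem sign_add_sign_sub_eq_zero {n m : ℤ} (hn : 0 < n) (hm : m < 0 ∨ n < m) :
    m.sign + (n - m).sign = 0 := by
  rcases hm with hm | hm
  · rw [Int.sign_eq_neg_one_of_neg hm, Int.sign_eq_one_of_pos (by omega), neg_add_cancel]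
  · rw [Int.sign_eq_one_of_pos (by omega), Int.sign_eq_neg_one_of_neg (by omega), add_neg_cancel]

theorem sign_add_sign_sub_eq_halfWeight {n i : ℕ} (hn : n ≠ 0) (hi : i ≤ n) :
    (((i : ℤ).sign + ((n : ℤ) - i).sign : ℤ) : ℝ) = 2 * (halfWeight i * halfWeight (n - i)) := by
  rw [← Nat.cast_sub hi]
  rcases eq_or_ne i 0 with rfl | hi0
  · simp [halfWeight, hn, Int.sign_natCast_of_ne_zero hn]
  rcases eq_or_ne (n - i) 0 with hin | hin
  · simp [halfWeight, hi0, hin, Int.sign_natCast_of_ne_zero hi0]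
  · simp [halfWeight, hi0, hin, Int.sign_natCast_of_ne_zero hi0, Int.sign_natCast_of_ne_zero hin]

theorem two_mul_tsum_eq_tsum_add_reflect {G R : Type*} [AddCommGroup G] [NonAssocSemiring R]
    [TopologicalSpace R] [ContinuousAdd R] [T2Space R] {F : G → R} (hF : Summable F) (n : G) :
    2 * ∑' m, F m = ∑' m, (F m + F (n - m)) := by
  have hreflect : ∑' m, F (n - m) = ∑' m, F m := (Equiv.subLeft n).tsum_eq F
  have hF_reflect : Summable fun m => F (n - m) := (Equiv.subLeft n).summable_iff.2 hF
  rw [hF.tsum_add hF_reflect, hreflect, two_mul]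

/-- Averaging over the reflection `m ↦ n - m`, the signs cancel outside `[0, n]`. -/
theorem tsum_sign_mul_mul_natCast {g : ℤ → ℂ} (hg : Summable fun m => ‖g m‖) {n : ℕ}
    (hn : n ≠ 0) :
    ∑' m : ℤ, (m.sign : ℂ) * g m * g (n - m) =
      ∑ p ∈ antidiagonal n, hardyPart 1 g p.1 * hardyPart 1 g p.2 := by
  let F : ℤ → ℂ := fun m => (m.sign : ℂ) * g m * g (n - m)
  have hF : Summable F := (summable_norm_sign_mul_mul hg n).of_norm
  have hsymm (m : ℤ) : F m + F (n - m) =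
      ((m.sign + ((n : ℤ) - m).sign : ℤ) : ℂ) * (g m * g (n - m)) := by
    simp only [F, sub_sub_cancel]
    push_cast
    ring
  have houtside (m : ℤ) (hm : m ∉ (Finset.range (n + 1)).map Nat.castEmbedding) :
      F m + F (n - m) = 0 := by
    have hm' : m < 0 ∨ n < m := by
      by_contra! h
      lift m to ℕ using h.1
      exact hm (Finset.mem_map_of_mem _ (Finset.mem_range_succ_iff.2 (Int.ofNat_le.1 h.2)))
    rw [hsymm, sign_add_sign_sub_eq_zero (by omega) hm', Int.cast_zero, zero_mul]
  have hinside (i : ℕ) (hi : i ∈ Finset.range (n + 1)) :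
      F i + F (n - i) = 2 * (hardyPart 1 g i * hardyPart 1 g (n - i)) := by
    have hi := Finset.mem_range_succ_iff.1 hi
    rw [hsymm, ← Complex.ofReal_intCast, sign_add_sign_sub_eq_halfWeight hn hi]
    simp only [hardyPart, Complex.real_smul, Units.val_one, one_mul, Nat.cast_sub hi]
    push_cast
    ring
  refine mul_left_cancel₀ (two_ne_zero' ℂ) ?_
  calc
    2 * ∑' m, F m = ∑' m, (F m + F (n - m)) := two_mul_tsum_eq_tsum_add_reflect hF n
    _ = ∑ i ∈ Finset.range (n + 1), (F i + F (n - i)) := by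
      rw [tsum_eq_sum houtside, Finset.sum_map]
      simp only [Nat.castEmbedding_apply]
    _ = _ := by
      rw [Finset.sum_congr rfl hinside, ← Finset.mul_sum,
        Finset.Nat.sum_antidiagonal_eq_sum_range_succ fun i j => hardyPart 1 g i * hardyPart 1 g j]

theorem tsum_sign_mul_mul {g : ℤ → ℂ} (hg : Summable fun m => ‖g m‖) (ε : ℤˣ) {n : ℕ}
    (hn : n ≠ 0) :
    ∑' m : ℤ, (m.sign : ℂ) * g m * g (ε * n - m) =
      (ε : ℤ) * ∑ p ∈ antidiagonal n, hardyPart ε g p.1 * hardyPart ε g p.2 := by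
  have hreflect : hardyPart ε g = hardyPart 1 fun m => g (ε * m) := by
    funext k
    simp [hardyPart]
  have hplus := tsum_sign_mul_mul_natCast (g := fun m => g (ε * m))
    ((Units.mulLeft ε).summable_iff.2 hg) hn
  rw [hreflect, ← hplus, ← tsum_mul_left, ← (Units.mulLeft ε).tsum_eq]
  refine tsum_congr fun m => ?_
  have hsign : ((ε : ℤ) * m).sign = ε * m.sign := by
    obtain rfl | rfl := Int.units_eq_one_or ε <;> simp
  rw [Units.mulLeft_apply, hsign, ← mul_sub]
  push_cast
  ring

/-- The Fourier coefficients of the nonlinearity `∂₁((Ha) a)`. -/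
def transport (a : ℤ → ℂ) (n : ℤ) : ℂ :=
  I * n * ∑' m : ℤ, (-I * ((m.sign : ℤ) : ℂ)) * a m * a (n - m)

theorem transport_unit_mul {g : ℤ → ℂ} (hg : Summable fun m => ‖g m‖) (ε : ℤˣ) (k : ℕ) :
    transport g (ε * k) = k * ∑ p ∈ antidiagonal k, hardyPart ε g p.1 * hardyPart ε g p.2 := by
  rcases eq_or_ne k 0 with rfl | hk
  · simp [transport]
  have hfactor : ∑' m : ℤ, (-I * ((m.sign : ℤ) : ℂ)) * g m * g (ε * k - m) =
      -I * ∑' m : ℤ, (m.sign : ℂ) * g m * g (ε * k - m) := by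
    rw [← tsum_mul_left]
    exact tsum_congr fun m => by ring
  have hε : ((ε : ℤ) : ℂ) * (ε : ℤ) = 1 := by
    obtain rfl | rfl := Int.units_eq_one_or ε <;> simp
  rw [transport, hfactor, tsum_sign_mul_mul hg ε hk]
  push_cast
  linear_combination (k * ∑ p ∈ antidiagonal k, hardyPart ε g p.1 * hardyPart ε g p.2) *
    (hε - ((ε : ℤ) : ℂ) * (ε : ℤ) * Complex.I_mul_I)

/-- The solution of `2 f' = L f + ∂₁((Hf) f)`, `f(0) = f₀`, where `L` is a Fourier multiplier: its
two Hardy parts solve complex Burgers systems. -/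
def waveSolution (L f₀ : ℤ → ℂ) (t : ℝ) : ℤ → ℂ :=
  ofHardyParts fun ε k => burgersMode (fun k => L (ε * k) / 2) (hardyPart ε f₀) k t

theorem burgersMode_mean_eq (L f₀ : ℤ → ℂ) (t : ℝ) :
    burgersMode (fun k => L ((1 : ℤˣ) * k) / 2) (hardyPart 1 f₀) 0 t =
      burgersMode (fun k => L ((-1 : ℤˣ) * k) / 2) (hardyPart (-1) f₀) 0 t := by
  simp [coe_burgersMode_zero, hardyPart]

theorem waveSolution_unit_mul (L f₀ : ℤ → ℂ) (t : ℝ) (ε : ℤˣ) (k : ℕ) :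
    waveSolution L f₀ t (ε * k) =
      (halfWeight k)⁻¹ • burgersMode (fun k => L (ε * k) / 2) (hardyPart ε f₀) k t :=
  ofHardyParts_unit_mul (burgersMode_mean_eq L f₀ t) ε k

theorem hardyPart_waveSolution (L f₀ : ℤ → ℂ) (t : ℝ) (ε : ℤˣ) (k : ℕ) :
    hardyPart ε (waveSolution L f₀ t) k =
      burgersMode (fun k => L (ε * k) / 2) (hardyPart ε f₀) k t :=
  congrFun (hardyPart_ofHardyParts (burgersMode_mean_eq L f₀ t) ε) k

theorem waveSolution_zero (L f₀ : ℤ → ℂ) : waveSolution L f₀ 0 = f₀ :=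
  eq_of_hardyPart_eq fun ε => funext fun k => by
    rw [hardyPart_waveSolution, burgersMode_apply_zero]

theorem hasDerivAt_waveSolution (L f₀ : ℤ → ℂ) {t : ℝ}
    (hf : Summable fun n => ‖waveSolution L f₀ t n‖) (n : ℤ) :
    HasDerivAt (fun s => waveSolution L f₀ s n)
      ((L n * waveSolution L f₀ t n + transport (waveSolution L f₀ t) n) / 2) t := by
  obtain ⟨ε, k, rfl⟩ := exists_eq_unit_mul_natCast n
  have hmode := hasDerivAt_burgersMode (fun k => L (ε * k) / 2) (hardyPart ε f₀) k t
  rw [transport_unit_mul hf]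
  simp only [waveSolution_unit_mul, hardyPart_waveSolution]
  refine (hmode.const_smul (halfWeight k)⁻¹).congr_deriv ?_
  rcases eq_or_ne k 0 with rfl | hk
  · simp only [Nat.cast_zero, mul_zero, zero_div, zero_mul, add_zero, Complex.real_smul]
    ring
  · rw [halfWeight, if_neg hk, inv_one, one_smul, one_smul]
    ring

theorem summable_and_tsum_exp_mul_norm_waveSolution_le {L f₀ : ℤ → ℂ}
    (hL : ∀ n, (L n).re ≤ 0) {ρ σ : ℝ}
    (hf₀ : Summable fun n : ℤ => Real.exp (ρ * |(n : ℝ)|) * ‖f₀ n‖)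
    (hσ : ∑' n : ℤ, Real.exp (ρ * |(n : ℝ)|) * ‖f₀ n‖ < σ) {t : ℝ} (ht : 0 ≤ t) :
    Summable (fun n : ℤ => Real.exp ((ρ - σ * t) * |(n : ℝ)|) * ‖waveSolution L f₀ t n‖) ∧
      ∑' n : ℤ, Real.exp ((ρ - σ * t) * |(n : ℝ)|) * ‖waveSolution L f₀ t n‖ ≤
        ∑' n : ℤ, Real.exp (ρ * |(n : ℝ)|) * ‖f₀ n‖ := by
  let A (ε : ℤˣ) : ℝ := ∑' k : ℕ, Real.exp (ρ * k) * ‖hardyPart ε f₀ k‖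
  have hA (ε : ℤˣ) := summable_exp_mul_norm_hardyPart hf₀ ε
  have hA_nonneg (ε : ℤˣ) : 0 ≤ A ε := tsum_nonneg fun k => by positivity
  have hA_add : ∑' n : ℤ, Real.exp (ρ * |(n : ℝ)|) * ‖f₀ n‖ = A 1 + A (-1) :=
    (hasSum_exp_mul_norm_of_hardyPart (hA 1).hasSum (hA (-1)).hasSum).tsum_eq
  have hA_lt (ε : ℤˣ) : A ε < σ := by
    obtain rfl | rfl := Int.units_eq_one_or ε
    · linarith [hA_nonneg (-1)]
    · linarith [hA_nonneg 1]
  have hre (ε : ℤˣ) (k : ℕ) : (L (ε * k) / 2).re ≤ 0 := by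
    rw [Complex.div_ofNat_re]
    exact div_nonpos_of_nonpos_of_nonneg (hL _) zero_le_two
  have hhalf (ε : ℤˣ) :=
    summable_and_tsum_exp_mul_norm_burgersMode_le (hre ε) (hA ε) (hA_lt ε) ht
  simp only [← hardyPart_waveSolution] at hhalf
  have hsum := hasSum_exp_mul_norm_of_hardyPart (hhalf 1).1.hasSum (hhalf (-1)).1.hasSum
  refine ⟨hsum.summable, ?_⟩
  rw [hsum.tsum_eq, hA_add]
  exact add_le_add (hhalf 1).2 (hhalf (-1)).2

theorem summable_norm_of_summable_exp_mul_norm {E : Type*} [SeminormedAddCommGroup E] {ν : ℝ}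
    (hν : 0 ≤ ν) {g : ℤ → E}
    (hg : Summable fun n : ℤ => Real.exp (ν * |(n : ℝ)|) * ‖g n‖) : Summable fun n => ‖g n‖ :=
  hg.of_nonneg_of_le (fun n => norm_nonneg _) fun n =>
    le_mul_of_one_le_left (norm_nonneg _) (Real.one_le_exp (by positivity))

theorem local_existence_analytic_unidirectional_general (L f₀ : ℤ → ℂ) (hL : ∀ n, (L n).re ≤ 0)
    {ρ σ : ℝ} (hsum : Summable fun n : ℤ => Real.exp (ρ * |(n : ℝ)|) * ‖f₀ n‖)
    (hσ : ∑' n : ℤ, Real.exp (ρ * |(n : ℝ)|) * ‖f₀ n‖ < σ) :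
    ∃ f : ℝ → ℤ → ℂ,
      f 0 = f₀
      ∧ (∀ t, 0 ≤ t → σ * t ≤ ρ → ∀ n : ℤ,
          Summable (fun m : ℤ => ‖(-I * ((m.sign : ℤ) : ℂ)) * f t m * f t (n - m)‖)
          ∧ HasDerivAt (fun s => f s n) ((L n * f t n + transport (f t) n) / 2) t)
      ∧ ∀ t, 0 ≤ t →
          Summable (fun n : ℤ => Real.exp ((ρ - σ * t) * |(n : ℝ)|) * ‖f t n‖)
          ∧ ∑' n : ℤ, Real.exp ((ρ - σ * t) * |(n : ℝ)|) * ‖f t n‖ ≤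
              ∑' n : ℤ, Real.exp (ρ * |(n : ℝ)|) * ‖f₀ n‖ := by
  have hbound (t : ℝ) (ht : 0 ≤ t) := summable_and_tsum_exp_mul_norm_waveSolution_le hL hsum hσ ht
  refine ⟨waveSolution L f₀, waveSolution_zero L f₀, fun t ht hσt n => ?_, hbound⟩
  have hnorm := summable_norm_of_summable_exp_mul_norm (sub_nonneg.2 hσt) (hbound t ht).1
  refine ⟨(summable_norm_sign_mul_mul hnorm n).congr fun m => ?_,
    hasDerivAt_waveSolution L f₀ hnorm n⟩
  simp [mul_assoc]

theorem local_existence_analytic_unidirectional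
    (β : ℝ) (hβ : 0 ≤ β) (f₀ : ℤ → ℂ) (M : ℝ)
    (hsum : Summable (fun n : ℤ => Real.exp |(n : ℝ)| * ‖f₀ n‖))
    (hM : M = ∑' n : ℤ, Real.exp |(n : ℝ)| * ‖f₀ n‖) (hMpos : 0 < M)
    (T : ℝ) (hT0 : 0 < T) (hT : T < 1 / (4 * M)) :
    ∃ f : ℝ → ℤ → ℂ,
      f 0 = f₀
      ∧ (∀ t ∈ Set.Icc (0 : ℝ) T, ∀ n : ℤ,
          Summable (fun m : ℤ =>
            ‖(-Complex.I * ((m.sign : ℤ) : ℂ)) * f t m * f t (n - m)‖)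
          ∧ ∃ d : ℂ, HasDerivWithinAt (fun s : ℝ => f s n) d (Set.Icc 0 T) t
              ∧ 2 * d
                  = Complex.I * (n : ℂ) * f t n
                    + Complex.I * ((n.sign : ℤ) : ℂ) * f t n
                    - Complex.I * (β : ℂ) * (n : ℂ) * ((|(n : ℝ)| : ℝ) : ℂ) * f t n
                    + Complex.I * (n : ℂ)
                        * ∑' m : ℤ, (-Complex.I * ((m.sign : ℤ) : ℂ)) * f t m * f t (n - m))
      ∧ (∀ t ∈ Set.Icc (0 : ℝ) T,
          Summable (fun n : ℤ => Real.exp ((1 - 4 * M * t) * |(n : ℝ)|) * ‖f t n‖)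
          ∧ (∑' n : ℤ, Real.exp ((1 - 4 * M * t) * |(n : ℝ)|) * ‖f t n‖) ≤ M) := by
  have hL (n : ℤ) : (Complex.I * n + Complex.I * ((n.sign : ℤ) : ℂ)
      - Complex.I * β * n * ((|(n : ℝ)| : ℝ) : ℂ)).re ≤ 0 := by simp
  obtain ⟨f, hinit, hode, hbound⟩ := local_existence_analytic_unidirectional_general
    (ρ := 1) (σ := 4 * M) _ f₀ hL (by simpa only [one_mul] using hsum)
    (by simpa only [one_mul, ← hM] using by linarith)
  have htime {t : ℝ} (ht : t ∈ Set.Icc 0 T) : 4 * M * t ≤ 1 :=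
    ((lt_div_iff₀' (by positivity)).1 (ht.2.trans_lt hT)).le
  refine ⟨f, hinit, fun t ht n => ?_, fun t ht => by simpa only [one_mul, ← hM] using hbound t ht.1⟩
  obtain ⟨hconv, hderiv⟩ := hode t ht.1 (htime ht) n
  exact ⟨hconv, _, hderiv.hasDerivWithinAt, by rw [transport]; ring⟩

end
end

section
/- Let I ⊆ ℝ be an open interval, ν : I → ℝ differentiable, and a : I → (ℤ → ℂ) such that for each n ∈ ℤ the map t ↦ a(n,t) is differentiable. Assume that for each t ∈ I there are a neighborhood J ⊆ I of t and a summable w : ℤ → [0,∞) with e^{ν(s)|n|}(1+|n|)|a(n,s)| + e^{ν(s)|n|}|∂_s a(n,s)| ≤ w(n) for all s ∈ J and n ∈ ℤ. Then E(t) := ∑_{n∈ℤ} e^{ν(t)|n|}|a(n,t)| is finite on I and for every t ∈ I its upper right Dini derivative satisfies limsup_{h→0⁺} (E(t+h) − E(t))/h ≤ ν'(t) ∑_{n∈ℤ} |n| e^{ν(t)|n|} |a(n,t)| + ∑_{n∈ℤ} e^{ν(t)|n|} |∂_t a(n,t)|. -/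
/-!
Write `φ_n(s) = e^{ν(s)|n|} ‖a(s, n)‖`. A norm has one-sided directional derivatives because it is
convex, so each `φ_n` has a right derivative at `t`, at most
`ν'(t) |n| e^{ν(t)|n|} ‖a(t, n)‖ + e^{ν(t)|n|} ‖∂ₜa(t, n)‖`. If `‖φ_n(s) - φ_n(t)‖ ≤ C w(n) (s - t)`
for all `n` and all `s ≥ t` close to `t`, then dominated convergence differentiates the sum term by
term, and the upper Dini derivative is an actual right derivative.

Since `ν'` need not be bounded near `t`, this Lipschitz estimate cannot come from the mean value
theorem for `φ_n`. Let `|ν(s) - ν(t)| ≤ K (s - t)`. For low frequencies, `|n| (s - t) ≤ 1`, the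
weights `e^{ν(x)|n|}`, `x ∈ [t, s]`, agree up to a factor `e^K`, and the mean value theorem is
applied to `a` alone. For high frequencies, `|n| (s - t) ≥ 1`, the bound `|n| φ_n ≤ w(n)` makes
`φ_n(s)` and `φ_n(t)` each at most `w(n) (s - t)`.
-/

open Filter

section

open Set Real
open scoped Topology

lemma eventually_forall_mem_Icc {α : Type*} [TopologicalSpace α] [LinearOrder α] [OrderTopology α]
    {t : α} {p : α → Prop} (h : ∀ᶠ x in 𝓝[≥] t, p x) : ∀ᶠ s in 𝓝[≥] t, ∀ x ∈ Icc t s, p x :=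
  ((tendsto_const_nhdsWithin self_mem_Ici).Icc tendsto_id).eventually h.smallSets

lemma tendsto_div_of_hasDerivWithinAt_Ioi {f : ℝ → ℝ} {f' t : ℝ}
    (hf : HasDerivWithinAt f f' (Ioi t) t) :
    Tendsto (fun h => (f (t + h) - f t) / h) (𝓝[>] 0) (𝓝 f') := by
  have hshift : Tendsto (fun h => t + h) (𝓝[>] 0) (𝓝[>] t) := by
    rw [Tendsto, map_add_left_nhdsGT, add_zero]
  simpa [Function.comp_def, slope_def_field] using
    ((hasDerivWithinAt_iff_tendsto_slope' self_notMem_Ioi).1 hf).comp hshift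

section Slope

variable {𝕜 F : Type*} [NontriviallyNormedField 𝕜] [NormedAddCommGroup F] [NormedSpace 𝕜 F]
  {s : Set 𝕜} {x : 𝕜}

lemma norm_slope_le_of_norm_sub_le {f : 𝕜 → F} {y : 𝕜} {b : ℝ} (hyx : y ≠ x)
    (h : ‖f y - f x‖ ≤ b * ‖y - x‖) : ‖slope f x y‖ ≤ b := by
  rw [slope_def_module, norm_smul, norm_inv, mul_comm, ← div_eq_mul_inv]
  exact (div_le_iff₀ (norm_pos_iff.2 (sub_ne_zero.2 hyx))).2 h

lemma norm_le_of_hasDerivWithinAt_of_norm_sub_le {f : 𝕜 → F} {f' : F} {b : ℝ}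
    (hs : UniqueDiffWithinAt 𝕜 s x) (hf : HasDerivWithinAt f f' s x)
    (hbound : ∀ᶠ y in 𝓝[s] x, ‖f y - f x‖ ≤ b * ‖y - x‖) : ‖f'‖ ≤ b := by
  have : (𝓝[s \ {x}] x).NeBot := accPt_principal_iff_nhdsWithin.1 hs.accPt
  refine le_of_tendsto (hasDerivWithinAt_iff_tendsto_slope.1 hf).norm ?_
  filter_upwards [hbound.filter_mono (nhdsWithin_mono x sdiff_subset), self_mem_nhdsWithin]
    with y hy hyx using norm_slope_le_of_norm_sub_le hyx.2 hy

theorem hasDerivWithinAt_tsum_of_norm_sub_le [CompleteSpace F] {ι : Type*} {f : ι → 𝕜 → F}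
    {f' : ι → F} {b : ι → ℝ} (hb : Summable b)
    (hf : ∀ i, HasDerivWithinAt (f i) (f' i) s x) (hfx : Summable fun i => f i x)
    (hbound : ∀ᶠ y in 𝓝[s] x, ∀ i, ‖f i y - f i x‖ ≤ b i * ‖y - x‖) :
    HasDerivWithinAt (fun y => ∑' i, f i y) (∑' i, f' i) s x := by
  rw [hasDerivWithinAt_iff_tendsto_slope]
  replace hbound := hbound.filter_mono (nhdsWithin_mono x (sdiff_subset (t := {x})))
  have hslope : Tendsto (fun y => ∑' i, slope (f i) x y) (𝓝[s \ {x}] x) (𝓝 (∑' i, f' i)) := by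
    refine tendsto_tsum_of_dominated_convergence hb
      (fun i => hasDerivWithinAt_iff_tendsto_slope.1 (hf i)) ?_
    filter_upwards [hbound, self_mem_nhdsWithin] with y hy hyx i
      using norm_slope_le_of_norm_sub_le hyx.2 (hy i)
  refine hslope.congr' <| hbound.mono fun y hy => ?_
  have hfy : Summable fun i => f i y := by
    simpa using ((hb.mul_right ‖y - x‖).of_norm_bounded hy).add hfx
  simp only [slope_def_module]
  rw [tsum_const_smul'', hfy.tsum_sub hfx]

end Slope

lemma abs_exp_sub_exp_le (x y : ℝ) : |exp x - exp y| ≤ exp |x - y| * (|x - y| * exp x) := by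
  have h (z : ℝ) : |exp z - 1| ≤ |z| * exp |z| := by
    rw [← norm_eq_abs, ← norm_eq_abs, ← Complex.norm_real, ← Complex.norm_real z]
    simpa using Complex.norm_exp_sub_sum_le_norm_mul_exp z 1
  calc |exp x - exp y| = |exp (y - x) - 1| * exp x := by
        rw [abs_sub_comm, ← abs_exp x, ← abs_mul, sub_mul, abs_exp, ← exp_add, one_mul,
          sub_add_cancel]
    _ ≤ |y - x| * exp |y - x| * exp x := by gcongr; exact h _
    _ = exp |x - y| * (|x - y| * exp x) := by rw [abs_sub_comm]; ring

section Norm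

variable {E : Type*} [NormedAddCommGroup E] [NormedSpace ℝ E]

lemma convexOn_norm_add_sub_smul (x v : E) (t : ℝ) :
    ConvexOn ℝ univ fun s : ℝ => ‖x + (s - t) • v‖ := by
  refine (convexOn_univ_norm.comp_affineMap
    (AffineMap.lineMap (k := ℝ) (x - t • v) (x - t • v + v))).congr fun s _ => ?_
  rw [Function.comp_apply, AffineMap.lineMap_apply_module']
  congr 1
  module

lemma exists_hasDerivWithinAt_norm {u : ℝ → E} {u' : E} {t : ℝ}
    (hu : HasDerivWithinAt u u' (Ioi t) t) :
    ∃ d ≤ ‖u'‖, HasDerivWithinAt (fun s => ‖u s‖) d (Ioi t) t := by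
  obtain ⟨d, hd⟩ : ∃ d, HasDerivWithinAt (fun s => ‖u t + (s - t) • u'‖) d (Ioi t) t :=
    ⟨_, (convexOn_norm_add_sub_smul (u t) u' t).hasDerivWithinAt_rightDeriv_of_mem_interior
      (by simp)⟩
  have htangent : HasDerivWithinAt (fun s => ‖u s‖ - ‖u t + (s - t) • u'‖) 0 (Ioi t) t := by
    rw [hasDerivWithinAt_iff_isLittleO] at hu ⊢
    refine (Asymptotics.IsBigO.of_norm_le fun s => ?_).trans_isLittleO hu.norm_left
    simpa [sub_sub] using abs_norm_sub_norm_le (u s) (u t + (s - t) • u')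
  have hnorm : HasDerivWithinAt (fun s => ‖u s‖) d (Ioi t) t :=
    (htangent.add hd).congr_deriv (zero_add d) |>.congr_of_eventuallyEq
      (.of_forall fun s => (sub_add_cancel _ _).symm) (sub_add_cancel _ _).symm
  refine ⟨d, le_of_tendsto_of_tendsto
    ((hasDerivWithinAt_iff_tendsto_slope' self_notMem_Ioi).1 hnorm)
    ((hasDerivWithinAt_iff_tendsto_slope' self_notMem_Ioi).1 hu).norm ?_, hnorm⟩
  filter_upwards [self_mem_nhdsWithin] with s hs
  rw [slope_def_module, slope_def_module, norm_smul, norm_inv,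
    norm_of_nonneg (sub_pos.2 hs).le, smul_eq_mul]
  gcongr
  · exact inv_nonneg.2 (sub_pos.2 hs).le
  · exact norm_sub_norm_le _ _

lemma abs_exp_mul_norm_sub_le {φ : ℝ → ℝ} {u u' : ℝ → E} {κ W t s : ℝ} (hts : t ≤ s)
    (hφ : ∀ x ∈ Icc t s, |φ x - φ t| ≤ κ)
    (hu : ∀ x ∈ Icc t s, HasDerivWithinAt u (u' x) (Icc t s) x)
    (hW : ∀ x ∈ Icc t s, exp (φ x) * ‖u' x‖ ≤ W) :
    |exp (φ s) * ‖u s‖ - exp (φ t) * ‖u t‖|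
      ≤ exp κ * (|φ s - φ t| * (exp (φ s) * ‖u s‖) + W * (s - t)) := by
  have hs : s ∈ Icc t s := right_mem_Icc.2 hts
  have hweight : |exp (φ s) - exp (φ t)| ≤ exp κ * (|φ s - φ t| * exp (φ s)) :=
    (abs_exp_sub_exp_le _ _).trans (by gcongr; exact hφ s hs)
  have hscaled : exp (φ t) * ‖u s - u t‖ ≤ exp κ * W * (s - t) := by
    have hderiv : ∀ x ∈ Icc t s, ‖exp (φ t) • u' x‖ ≤ exp κ * W := fun x hx => by
      rw [norm_smul, norm_of_nonneg (exp_pos _).le]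
      calc exp (φ t) * ‖u' x‖ ≤ exp (κ + φ x) * ‖u' x‖ := by
            gcongr; linarith [neg_le_of_abs_le (hφ x hx)]
        _ ≤ exp κ * W := by rw [exp_add, mul_assoc]; gcongr; exact hW x hx
    simpa only [Pi.smul_apply, ← smul_sub, norm_smul, norm_of_nonneg (exp_pos _).le,
      norm_of_nonneg (sub_nonneg.2 hts)] using
      (convex_Icc t s).norm_image_sub_le_of_norm_hasDerivWithin_le
        (fun x hx => (hu x hx).const_smul (exp (φ t))) hderiv (left_mem_Icc.2 hts) hs
  calc |exp (φ s) * ‖u s‖ - exp (φ t) * ‖u t‖|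
      = |(exp (φ s) - exp (φ t)) * ‖u s‖ + exp (φ t) * (‖u s‖ - ‖u t‖)| := by ring_nf
    _ ≤ |exp (φ s) - exp (φ t)| * ‖u s‖ + exp (φ t) * |‖u s‖ - ‖u t‖| := by
        simpa only [abs_mul, abs_norm, abs_exp] using
          abs_add_le ((exp (φ s) - exp (φ t)) * ‖u s‖) (exp (φ t) * (‖u s‖ - ‖u t‖))
    _ ≤ exp κ * (|φ s - φ t| * exp (φ s)) * ‖u s‖ + exp (φ t) * ‖u s - u t‖ := by
        gcongr; exact abs_norm_sub_norm_le _ _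
    _ ≤ exp κ * (|φ s - φ t| * exp (φ s)) * ‖u s‖ + exp κ * W * (s - t) := by gcongr
    _ = exp κ * (|φ s - φ t| * (exp (φ s) * ‖u s‖) + W * (s - t)) := by ring

lemma abs_sub_le_mul_of_one_le_mul {N r A B W : ℝ} (hN : 1 ≤ N * r) (hr : 0 ≤ r) (hA0 : 0 ≤ A)
    (hB0 : 0 ≤ B) (hA : A * N ≤ W) (hB : B * N ≤ W) : |A - B| ≤ W * r := by
  have hle {x : ℝ} (hx0 : 0 ≤ x) (hx : x * N ≤ W) : x ≤ W * r :=
    calc x ≤ x * (N * r) := le_mul_of_one_le_right hx0 hN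
      _ = x * N * r := by ring
      _ ≤ W * r := by gcongr
  exact abs_sub_le_of_nonneg_of_le hA0 (hle hA0 hA) hB0 (hle hB0 hB)

lemma abs_exp_mul_mul_norm_sub_le {ν : ℝ → ℝ} {u u' : ℝ → E} {N K W t s : ℝ} (hts : t ≤ s)
    (hK : 0 ≤ K) (hν : ∀ x ∈ Icc t s, |ν x - ν t| ≤ K * (s - t))
    (hu : ∀ x ∈ Icc t s, HasDerivWithinAt u (u' x) (Icc t s) x)
    (hW : ∀ x ∈ Icc t s, exp (ν x * N) * |N| * ‖u x‖ ≤ W)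
    (hW' : ∀ x ∈ Icc t s, exp (ν x * N) * ‖u' x‖ ≤ W) :
    |exp (ν s * N) * ‖u s‖ - exp (ν t * N) * ‖u t‖| ≤ exp K * (K + 1) * W * (s - t) := by
  have ht := left_mem_Icc.2 hts
  have hs := right_mem_Icc.2 hts
  have hr : 0 ≤ s - t := sub_nonneg.2 hts
  have hW0 : 0 ≤ W := le_trans (by positivity) (hW t ht)
  have hφ : ∀ x ∈ Icc t s, |ν x * N - ν t * N| ≤ K * (|N| * (s - t)) := fun x hx =>
    calc |ν x * N - ν t * N| = |ν x - ν t| * |N| := by rw [← sub_mul, abs_mul]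
      _ ≤ K * (s - t) * |N| := by gcongr; exact hν x hx
      _ = K * (|N| * (s - t)) := by ring
  rcases le_total (|N| * (s - t)) 1 with hlow | hhigh
  · calc |exp (ν s * N) * ‖u s‖ - exp (ν t * N) * ‖u t‖|
        ≤ exp K * (|ν s * N - ν t * N| * (exp (ν s * N) * ‖u s‖) + W * (s - t)) :=
          abs_exp_mul_norm_sub_le (φ := fun x => ν x * N) hts
            (fun x hx => (hφ x hx).trans (mul_le_of_le_one_right hK hlow)) hu hW'
      _ ≤ exp K * (K * (|N| * (s - t)) * (exp (ν s * N) * ‖u s‖) + W * (s - t)) := by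
          gcongr; exact hφ s hs
      _ = exp K * (K * (exp (ν s * N) * |N| * ‖u s‖) + W) * (s - t) := by ring
      _ ≤ exp K * (K * W + W) * (s - t) := by gcongr; exact hW s hs
      _ = exp K * (K + 1) * W * (s - t) := by ring
  · calc |exp (ν s * N) * ‖u s‖ - exp (ν t * N) * ‖u t‖|
        ≤ W * (s - t) := abs_sub_le_mul_of_one_le_mul hhigh hr (by positivity) (by positivity)
          (by rw [mul_right_comm]; exact hW s hs) (by rw [mul_right_comm]; exact hW t ht)
      _ ≤ exp K * (K + 1) * W * (s - t) := by
          gcongr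
          exact le_mul_of_one_le_left hW0
            (one_le_mul_of_one_le_of_one_le (one_le_exp hK) (by linarith))

lemma exists_hasDerivWithinAt_exp_mul_norm {ν : ℝ → ℝ} {u : ℝ → E} {ν' t : ℝ} {u' : E} (N : ℝ)
    (hν : HasDerivWithinAt ν ν' (Ioi t) t) (hu : HasDerivWithinAt u u' (Ioi t) t) :
    ∃ d ≤ ν' * (N * exp (ν t * N) * ‖u t‖) + exp (ν t * N) * ‖u'‖,
      HasDerivWithinAt (fun s => exp (ν s * N) * ‖u s‖) d (Ioi t) t := by
  obtain ⟨d, hd, hder⟩ := exists_hasDerivWithinAt_norm hu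
  refine ⟨_, ?_, (hν.mul_const N).exp.mul hder⟩
  calc exp (ν t * N) * (ν' * N) * ‖u t‖ + exp (ν t * N) * d
      = ν' * (N * exp (ν t * N) * ‖u t‖) + exp (ν t * N) * d := by ring
    _ ≤ ν' * (N * exp (ν t * N) * ‖u t‖) + exp (ν t * N) * ‖u'‖ := by gcongr

section Family

variable {ι : Type*} {ω : ι → ℝ} {ν : ℝ → ℝ} {ν' t : ℝ} {a a' : ℝ → ι → E} {w : ι → ℝ}

lemma exists_eventually_abs_exp_mul_norm_sub_le (hν : HasDerivWithinAt ν ν' (Ici t) t)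
    (ha : ∀ᶠ s in 𝓝[≥] t, ∀ i, HasDerivWithinAt (fun x => a x i) (a' s i) (Ici t) s)
    (hw : ∀ᶠ s in 𝓝[≥] t, ∀ i, exp (ν s * ω i) * |ω i| * ‖a s i‖ ≤ w i)
    (hw' : ∀ᶠ s in 𝓝[≥] t, ∀ i, exp (ν s * ω i) * ‖a' s i‖ ≤ w i) :
    ∃ C : ℝ, ∀ᶠ s in 𝓝[≥] t, ∀ i,
      |exp (ν s * ω i) * ‖a s i‖ - exp (ν t * ω i) * ‖a t i‖| ≤ C * w i * |s - t| := by
  obtain ⟨K, hK, hνK⟩ := hν.differentiableWithinAt.isBigO_sub.exists_pos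
  refine ⟨exp K * (K + 1), ?_⟩
  filter_upwards [self_mem_nhdsWithin, eventually_forall_mem_Icc hνK.bound,
    eventually_forall_mem_Icc ha, eventually_forall_mem_Icc hw, eventually_forall_mem_Icc hw']
    with s hts hνs has hws hws' i
  have hνs' : ∀ x ∈ Icc t s, |ν x - ν t| ≤ K * (s - t) := fun x hx =>
    calc |ν x - ν t| ≤ K * |x - t| := hνs x hx
      _ ≤ K * (s - t) := by
          rw [abs_of_nonneg (sub_nonneg.2 hx.1)]
          gcongr
          exact hx.2
  rw [abs_of_nonneg (sub_nonneg.2 (mem_Ici.1 hts))]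
  exact abs_exp_mul_mul_norm_sub_le hts hK.le hνs'
    (fun x hx => (has x hx i).mono Icc_subset_Ici_self) (fun x hx => hws x hx i)
    fun x hx => hws' x hx i

theorem exists_hasDerivWithinAt_tsum_exp_mul_norm (hν : HasDerivWithinAt ν ν' (Ici t) t)
    (ha : ∀ᶠ s in 𝓝[≥] t, ∀ i, HasDerivWithinAt (fun x => a x i) (a' s i) (Ici t) s)
    (hsum : Summable fun i => exp (ν t * ω i) * ‖a t i‖) (hw_summable : Summable w)
    (hw : ∀ᶠ s in 𝓝[≥] t, ∀ i, exp (ν s * ω i) * |ω i| * ‖a s i‖ ≤ w i)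
    (hw' : ∀ᶠ s in 𝓝[≥] t, ∀ i, exp (ν s * ω i) * ‖a' s i‖ ≤ w i) :
    ∃ D ≤ ν' * (∑' i, ω i * exp (ν t * ω i) * ‖a t i‖) + ∑' i, exp (ν t * ω i) * ‖a' t i‖,
      HasDerivWithinAt (fun s => ∑' i, exp (ν s * ω i) * ‖a s i‖) D (Ioi t) t := by
  have hwt := hw.self_of_nhdsWithin self_mem_Ici
  have hwt' := hw'.self_of_nhdsWithin self_mem_Ici
  have hsum_freq : Summable fun i => ω i * exp (ν t * ω i) * ‖a t i‖ :=
    hw_summable.of_norm_bounded fun i => by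
      simpa only [norm_mul, norm_norm, norm_eq_abs, abs_exp, abs_norm, mul_comm |ω i|]
        using hwt i
  have hsum_deriv : Summable fun i => exp (ν t * ω i) * ‖a' t i‖ :=
    hw_summable.of_nonneg_of_le (fun _ => by positivity) hwt'
  obtain ⟨C, hlip⟩ := exists_eventually_abs_exp_mul_norm_sub_le hν ha hw hw'
  replace hlip := hlip.filter_mono (nhdsWithin_mono t Ioi_subset_Ici_self)
  have hCw : Summable fun i => C * w i := hw_summable.mul_left C
  choose d hd hderiv using fun i => exists_hasDerivWithinAt_exp_mul_norm (ω i)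
    (hν.mono Ioi_subset_Ici_self)
    ((ha.self_of_nhdsWithin self_mem_Ici i).mono Ioi_subset_Ici_self)
  have hsum_d : Summable d := hCw.of_norm_bounded fun i =>
    norm_le_of_hasDerivWithinAt_of_norm_sub_le (uniqueDiffWithinAt_Ioi t) (hderiv i)
      (hlip.mono fun s hs => hs i)
  refine ⟨∑' i, d i, ?_, hasDerivWithinAt_tsum_of_norm_sub_le hCw hderiv hsum hlip⟩
  rw [← tsum_mul_left, ← (hsum_freq.mul_left ν').tsum_add hsum_deriv]
  exact hsum_d.tsum_le_tsum hd ((hsum_freq.mul_left ν').add hsum_deriv)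

theorem dini_derivative_analytic_norm_general (hν : HasDerivWithinAt ν ν' (Ici t) t)
    (ha : ∀ᶠ s in 𝓝[≥] t, ∀ i, HasDerivWithinAt (fun x => a x i) (a' s i) (Ici t) s)
    (hw : Summable w)
    (hbound : ∀ᶠ s in 𝓝[≥] t, ∀ i,
      exp (ν s * ω i) * (1 + |ω i|) * ‖a s i‖ + exp (ν s * ω i) * ‖a' s i‖ ≤ w i) :
    Summable (fun i => exp (ν t * ω i) * ‖a t i‖) ∧
      ∃ D ≤ ν' * (∑' i, ω i * exp (ν t * ω i) * ‖a t i‖) + ∑' i, exp (ν t * ω i) * ‖a' t i‖,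
        HasDerivWithinAt (fun s => ∑' i, exp (ν s * ω i) * ‖a s i‖) D (Ioi t) t := by
  have hterms : ∀ᶠ s in 𝓝[≥] t, ∀ i, exp (ν s * ω i) * ‖a s i‖ ≤ w i ∧
      exp (ν s * ω i) * |ω i| * ‖a s i‖ ≤ w i ∧ exp (ν s * ω i) * ‖a' s i‖ ≤ w i := by
    filter_upwards [hbound] with s hs i
    have ha_nonneg : 0 ≤ exp (ν s * ω i) * ‖a s i‖ := by positivity
    have hfreq_nonneg : 0 ≤ exp (ν s * ω i) * |ω i| * ‖a s i‖ := by positivity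
    have ha'_nonneg : 0 ≤ exp (ν s * ω i) * ‖a' s i‖ := by positivity
    refine ⟨?_, ?_, ?_⟩ <;> linarith [hs i]
  have hsum : Summable fun i => exp (ν t * ω i) * ‖a t i‖ :=
    hw.of_nonneg_of_le (fun _ => by positivity) fun i =>
      (hterms.self_of_nhdsWithin self_mem_Ici i).1
  exact ⟨hsum, exists_hasDerivWithinAt_tsum_exp_mul_norm hν ha hsum hw
    (hterms.mono fun s hs i => (hs i).2.1) (hterms.mono fun s hs i => (hs i).2.2)⟩

end Family

end Norm

end

theorem dini_derivative_analytic_norm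
    (I : Set ℝ) (hIopen : IsOpen I) (hIconn : I.OrdConnected)
    (ν : ℝ → ℝ) (hν : ∀ t ∈ I, DifferentiableAt ℝ ν t)
    (a : ℝ → ℤ → ℂ)
    (hdiff : ∀ n : ℤ, ∀ t ∈ I, DifferentiableAt ℝ (fun s : ℝ => a s n) t)
    (hdom : ∀ t ∈ I, ∃ J ∈ nhds t, J ⊆ I ∧ ∃ w : ℤ → ℝ, (∀ n : ℤ, 0 ≤ w n) ∧ Summable w ∧
      ∀ s ∈ J, ∀ n : ℤ,
        Real.exp (ν s * |(n : ℝ)|) * (1 + |(n : ℝ)|) * ‖a s n‖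
          + Real.exp (ν s * |(n : ℝ)|) * ‖deriv (fun u : ℝ => a u n) s‖ ≤ w n) :
    ∀ t ∈ I,
      Summable (fun n : ℤ => Real.exp (ν t * |(n : ℝ)|) * ‖a t n‖)
      ∧ Filter.limsup
          (fun h : ℝ =>
            ((∑' n : ℤ, Real.exp (ν (t + h) * |(n : ℝ)|) * ‖a (t + h) n‖)
                - ∑' n : ℤ, Real.exp (ν t * |(n : ℝ)|) * ‖a t n‖) / h)
          (nhdsWithin 0 (Set.Ioi 0))
        ≤ deriv ν t * (∑' n : ℤ, |(n : ℝ)| * Real.exp (ν t * |(n : ℝ)|) * ‖a t n‖)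
          + ∑' n : ℤ, Real.exp (ν t * |(n : ℝ)|) * ‖deriv (fun s : ℝ => a s n) t‖ := by
  intro t ht
  obtain ⟨J, hJ, hJI, w, -, hw, hb⟩ := hdom t ht
  have hJ' : ∀ᶠ s in nhdsWithin t (Set.Ici t), s ∈ J := mem_nhdsWithin_of_mem_nhds hJ
  obtain ⟨hsum, D, hD, hderiv⟩ := dini_derivative_analytic_norm_general
    (ω := fun n : ℤ => |(n : ℝ)|) (hν t ht).hasDerivAt.hasDerivWithinAt
    (hJ'.mono fun s hs n => (hdiff n s (hJI hs)).hasDerivAt.hasDerivWithinAt) hw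
    (hJ'.mono fun s hs n => by simpa only [abs_abs] using hb s hs n)
  exact ⟨hsum, (tendsto_div_of_hasDerivWithinAt_Ioi hderiv).limsup_eq.trans_le hD⟩
end

section
/- Let y : [0,∞) → ℝ be differentiable with y(t) ≥ 0 for all t, let D : [0,∞) → ℝ satisfy D(t) ≥ 0 for all t, and let C > 0. Assume that y'(t) ≤ (C·√(y(t)) − 1)·D(t) for every t ≥ 0, and that C·√(y(0)) < 1. Then y(t) ≤ y(0) for all t ≥ 0, and y is non-increasing on [0,∞). -/
/-!
The coefficient `C * √s - 1` is negative exactly for `s < (1 / C) ^ 2`, so `y` has nonpositive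
derivative whenever it lies below this threshold, where it starts. A function with this property
cannot climb above its initial value: otherwise it would have to cross a line of small positive
slope which stays below the threshold, although its slope at the crossing point would be
nonpositive. Restarting this argument from an arbitrary time gives monotonicity.
-/

section DerivRight

open Set

variable {f f' : ℝ → ℝ} {a b r : ℝ}

theorem image_le_of_deriv_right_nonpos_of_lt (hab : a ≤ b) (hf : ContinuousOn f (Icc a b))
    (hf' : ∀ x ∈ Ico a b, HasDerivWithinAt f (f' x) (Ici x) x)
    (hnonpos : ∀ x ∈ Ico a b, f x < r → f' x ≤ 0) (ha : f a < r) : f b ≤ f a := by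
  by_contra! hlt
  obtain ⟨m, ham, hm⟩ := exists_between (lt_min ha hlt)
  obtain ⟨hmr, hmb⟩ := lt_min_iff.1 hm
  have hba : 0 < b - a := sub_pos.2 (hab.lt_of_ne fun h => hlt.ne (congrArg f h))
  -- The barrier is the line through `(a, f a)` and `(b, m)`.
  let ε := (m - f a) / (b - a)
  have hε : 0 < ε := div_pos (sub_pos.2 ham) hba
  have hεb : ε * (b - a) = m - f a := div_mul_cancel₀ _ hba.ne'
  have hline (x : ℝ) : HasDerivAt (fun t => f a + ε * (t - a)) ε x := by
    simpa using (((hasDerivAt_id x).sub_const a).const_mul ε).const_add (f a)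
  have hslope : ∀ x ∈ Ico a b, f x = f a + ε * (x - a) → f' x < ε := by
    intro x hx hfx
    have hxb : ε * (x - a) ≤ ε * (b - a) := by gcongr; exact hx.2.le
    exact (hnonpos x hx (by linarith)).trans_lt hε
  have hfb : f b ≤ f a + ε * (b - a) :=
    image_le_of_deriv_right_lt_deriv_boundary hf hf' (by simp) hline hslope (right_mem_Icc.2 hab)
  linarith

theorem antitoneOn_Ici_of_deriv_right_nonpos_of_lt (hf : ContinuousOn f (Ici a))
    (hf' : ∀ x ∈ Ici a, HasDerivWithinAt f (f' x) (Ici x) x)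
    (hnonpos : ∀ x ∈ Ici a, f x < r → f' x ≤ 0) (ha : f a < r) : AntitoneOn f (Ici a) := by
  have himage_le : ∀ x ∈ Ici a, f x < r → ∀ z, x ≤ z → f z ≤ f x := by
    intro x hx hfx z hxz
    have hsub : Icc x z ⊆ Ici a := Icc_subset_Ici_self.trans (Ici_subset_Ici.2 hx)
    exact image_le_of_deriv_right_nonpos_of_lt hxz (hf.mono hsub)
      (fun t ht => hf' t (hsub (Ico_subset_Icc_self ht)))
      (fun t ht => hnonpos t (hsub (Ico_subset_Icc_self ht))) hfx
  intro x hx z _ hxz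
  exact himage_le x hx ((himage_le a self_mem_Ici ha x hx).trans_lt ha) z hxz

end DerivRight

theorem mul_sqrt_lt_iff {c d x : ℝ} (hc : 0 < c) (hd : 0 < d) :
    c * Real.sqrt x < d ↔ x < (d / c) ^ 2 := by
  rw [← lt_div_iff₀' hc, Real.sqrt_lt' (div_pos hd hc)]

/- STATEMENT 7: nonlinear Grönwall-type continuation lemma: if y ≥ 0 is
differentiable on [0,∞) with y' ≤ (C√y − 1)·D, D ≥ 0, and C√(y(0)) < 1,
then y(t) ≤ y(0) for all t ≥ 0 and y is non-increasing on [0,∞). -/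

theorem gronwall_continuation_viscous
    (y D y' : ℝ → ℝ) (C : ℝ) (hC : 0 < C)
    (hy : ∀ t : ℝ, 0 ≤ t → 0 ≤ y t)
    (hD : ∀ t : ℝ, 0 ≤ t → 0 ≤ D t)
    (hderiv : ∀ t ∈ Set.Ici (0 : ℝ), HasDerivWithinAt y (y' t) (Set.Ici 0) t)
    (hineq : ∀ t : ℝ, 0 ≤ t → y' t ≤ (C * Real.sqrt (y t) - 1) * D t)
    (hsmall : C * Real.sqrt (y 0) < 1) :
    (∀ t : ℝ, 0 ≤ t → y t ≤ y 0) ∧ AntitoneOn y (Set.Ici 0) := by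
  have hanti : AntitoneOn y (Set.Ici 0) := by
    refine antitoneOn_Ici_of_deriv_right_nonpos_of_lt
      (fun t ht => (hderiv t ht).continuousWithinAt)
      (fun t ht => (hderiv t ht).mono (Set.Ici_subset_Ici.2 ht)) (fun t ht hyt => ?_)
      ((mul_sqrt_lt_iff hC one_pos).1 hsmall)
    have hcoeff : C * Real.sqrt (y t) < 1 := (mul_sqrt_lt_iff hC one_pos).2 hyt
    exact (hineq t ht).trans
      (mul_nonpos_of_nonpos_of_nonneg (sub_nonpos.2 hcoeff.le) (hD t ht))
  exact ⟨fun t ht => hanti Set.self_mem_Ici ht ht, hanti⟩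
end

section
/- Let T > 0, let y : [0,T] → ℝ be differentiable with M := y(0) ≥ 0, and let G : [0,T] → ℝ be continuous with G(t) ≥ 0 for all t. Assume y'(t) ≤ 2·G(t)·(y(t) − 2M) for every t ∈ [0,T]. Then y(t) ≤ M for all t ∈ [0,T]. -/
/-!
Where `y` exceeds `M`, the differential inequality gives
`y' ≤ 2 * G * (y - 2 * M) ≤ 2 * G * (y - M) ≤ K * (y - M)`, with `K` an upper bound of `2 * G`.
So the excess `y - M` satisfies a linear Grönwall inequality wherever it is positive. This is enough
to keep it from becoming positive: the barriers `M + ε * exp ((K + 1) * t)` lie strictly above `M`,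
and `y` cannot cross them.
-/

open Set

theorem image_le_const_of_deriv_right_le_mul_sub {f f' : ℝ → ℝ} {a b c K : ℝ}
    (hf : ContinuousOn f (Icc a b))
    (hf' : ∀ x ∈ Ico a b, HasDerivWithinAt f (f' x) (Ici x) x) (ha : f a ≤ c)
    (bound : ∀ x ∈ Ico a b, c < f x → f' x ≤ K * (f x - c)) :
    ∀ x ∈ Icc a b, f x ≤ c := by
  have le_barrier : ∀ ε > 0, ∀ x ∈ Icc a b, f x ≤ c + gronwallBound ε (K + 1) 0 (x - a) := by
    intro ε hε x hx
    refine image_le_of_deriv_right_lt_deriv_boundary hf hf' ?_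
      (fun x => (hasDerivAt_gronwallBound_shift ε (K + 1) 0 x a).const_add c) ?_ hx
    · rw [sub_self, gronwallBound_x0]
      linarith
    · intro x hx hfx
      have barrier_pos : 0 < gronwallBound ε (K + 1) 0 (x - a) := by
        rw [gronwallBound_ε0]
        positivity
      have hf'x := bound x hx (by linarith)
      rw [hfx, add_sub_cancel_left] at hf'x
      linarith
  intro x hx
  refine le_of_forall_pos_le_add fun δ hδ => ?_
  -- This `ε` makes the barrier equal to `c + δ` at `x`.
  have h := le_barrier (δ / Real.exp ((K + 1) * (x - a))) (by positivity) x hx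
  rwa [gronwallBound_ε0, div_mul_cancel₀ _ (Real.exp_ne_zero _)] at h

theorem gronwall_continuation_analytic_general {y y' G : ℝ → ℝ} {a b M L : ℝ}
    (hya : y a ≤ M) (hML : M ≤ L)
    (hG : BddAbove (G '' Ico a b)) (hG_nonneg : ∀ t ∈ Ico a b, 0 ≤ G t)
    (hy : ContinuousOn y (Icc a b))
    (hderiv : ∀ t ∈ Ico a b, HasDerivWithinAt y (y' t) (Ici t) t)
    (hineq : ∀ t ∈ Ico a b, M < y t → y' t ≤ G t * (y t - L)) :
    ∀ t ∈ Icc a b, y t ≤ M := by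
  obtain ⟨K, hK⟩ := hG
  refine image_le_const_of_deriv_right_le_mul_sub (K := K) hy hderiv hya fun t ht hMy => ?_
  calc
    y' t ≤ G t * (y t - L) := hineq t ht hMy
    _ ≤ G t * (y t - M) := mul_le_mul_of_nonneg_left (sub_le_sub_left hML _) (hG_nonneg t ht)
    _ ≤ K * (y t - M) :=
      mul_le_mul_of_nonneg_right (hK (mem_image_of_mem G ht)) (sub_nonneg.2 hMy.le)

theorem gronwall_continuation_analytic
    (T : ℝ) (hT : 0 < T) (y y' G : ℝ → ℝ) (M : ℝ)
    (hM : M = y 0) (hM0 : 0 ≤ M)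
    (hG : ContinuousOn G (Set.Icc 0 T))
    (hGpos : ∀ t ∈ Set.Icc (0 : ℝ) T, 0 ≤ G t)
    (hderiv : ∀ t ∈ Set.Icc (0 : ℝ) T, HasDerivWithinAt y (y' t) (Set.Icc 0 T) t)
    (hineq : ∀ t ∈ Set.Icc (0 : ℝ) T, y' t ≤ 2 * G t * (y t - 2 * M)) :
    ∀ t ∈ Set.Icc (0 : ℝ) T, y t ≤ M := by
  have h2G_bdd : BddAbove ((fun t => 2 * G t) '' Ico 0 T) :=
    (isCompact_Icc.bddAbove_image (hG.const_mul 2)).mono (image_mono Ico_subset_Icc_self)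
  have hderiv_right : ∀ t ∈ Ico 0 T, HasDerivWithinAt y (y' t) (Ici t) t := fun t ht =>
    (hderiv t (Ico_subset_Icc_self ht)).mono_of_mem_nhdsWithin (Icc_mem_nhdsGE_of_mem ht)
  exact gronwall_continuation_analytic_general hM.ge (le_mul_of_one_le_left hM0 one_le_two) h2G_bdd
    (fun t ht => mul_nonneg zero_le_two (hGpos t (Ico_subset_Icc_self ht)))
    (HasDerivWithinAt.continuousOn hderiv) hderiv_right
    (fun t ht _ => hineq t (Ico_subset_Icc_self ht))
end
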